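/- For every integer k ≥ 2 and every real p > q_k, the integral ∫_{ℝ^N} |E_k1(x)|^p dx is finite. -/

import Mathlib

open MeasureTheory Real Set
open scoped ENNReal

noncomputable section

/-- Index set for multi-indices `β = (β₁, β₂) ∈ ℕ²` with `1 ≤ β₁ + β₂ ≤ k`;
its cardinality is `N = (k+1)(k+2)/2 − 1`. -/
def Idx (k : ℕ) : Type :=
  {β : Fin (k + 1) × Fin (k + 1) // 1 ≤ (β.1 : ℕ) + (β.2 : ℕ) ∧ (β.1 : ℕ) + (β.2 : ℕ) ≤ k}

instance (k : ℕ) : Fintype (Idx k) := by unfold Idx; infer_instance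

/-- The phase polynomial `P(ξ; x) = ∑_{1 ≤ |β| ≤ k} x_β ξ₁^{β₁} ξ₂^{β₂}`. -/
def Pphase (k : ℕ) (x : Idx k → ℝ) (ξ : Fin 2 → ℝ) : ℝ :=
  ∑ β : Idx k, x β * ξ 0 ^ (β.1.1 : ℕ) * ξ 1 ^ (β.1.2 : ℕ)

/-- `E_k1(x) = ∫_{[0,1]²} e(P(ξ; x)) dξ` with `e(t) = exp(2πit)`. -/
def Eone (k : ℕ) (x : Idx k → ℝ) : ℂ :=
  ∫ ξ in Icc (0 : Fin 2 → ℝ) 1, Complex.exp (2 * Real.pi * Complex.I * (Pphase k x ξ))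

/-- The phase `e(f(t)) = exp(2πi f(t))`. -/
def expTwoPi (t : ℝ) : ℂ := Complex.exp (2 * Real.pi * Complex.I * t)

theorem norm_expTwoPi (t : ℝ) : ‖expTwoPi t‖ = 1 := by
  unfold expTwoPi
  rw [show (2 * Real.pi * Complex.I * t : ℂ) = ((2 * Real.pi * t : ℝ) : ℂ) * Complex.I by
    push_cast; ring]
  exact Complex.norm_exp_ofReal_mul_I _

theorem expTwoPi_add (s t : ℝ) : expTwoPi (s + t) = expTwoPi s * expTwoPi t := by
  unfold expTwoPi
  rw [← Complex.exp_add]; push_cast; ring_nf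

@[fun_prop]
theorem continuous_expTwoPi : Continuous expTwoPi := by
  unfold expTwoPi; fun_prop

theorem expTwoPi_sum {ι : Type*} (s : Finset ι) (f : ι → ℝ) :
    expTwoPi (∑ i ∈ s, f i) = ∏ i ∈ s, expTwoPi (f i) := by
  unfold expTwoPi
  rw [← Complex.exp_sum]; push_cast; rw [Finset.mul_sum]

theorem conj_expTwoPi (t : ℝ) : (starRingEnd ℂ) (expTwoPi t) = expTwoPi (-t) := by
  unfold expTwoPi
  rw [← Complex.exp_conj]; simp [Complex.conj_ofNat]

theorem hasDerivAt_expTwoPi_comp {f : ℝ → ℝ} {f' t : ℝ} (hf : HasDerivAt f f' t) :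
    HasDerivAt (fun t => expTwoPi (f t)) (expTwoPi (f t) * (2 * Real.pi * Complex.I * f')) t := by
  unfold expTwoPi
  exact (hf.ofReal_comp.const_mul (2 * Real.pi * Complex.I : ℂ)).cexp

/-- Van der Corput's first derivative test, in a form with an explicit derivative. -/
theorem norm_integral_expTwoPi_le_of_pos {f f' f'' : ℝ → ℝ} {u v l : ℝ} (huv : u ≤ v) (hl : 0 < l)
    (hf : ∀ t, HasDerivAt f (f' t) t) (hf' : ∀ t, HasDerivAt f' (f'' t) t)
    (hc : Continuous f'') (hlow : ∀ t ∈ Icc u v, l ≤ f' t)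
    (hmono : (∀ t ∈ Icc u v, 0 ≤ f'' t) ∨ (∀ t ∈ Icc u v, f'' t ≤ 0)) :
    ‖∫ t in u..v, expTwoPi (f t)‖ ≤ 1 / l := by
  have hcf' : Continuous f' := continuous_iff_continuousAt.2 fun t => (hf' t).continuousAt
  have hcf : Continuous f := continuous_iff_continuousAt.2 fun t => (hf t).continuousAt
  have hpos : ∀ t ∈ Icc u v, 0 < f' t := fun t ht => hl.trans_le (hlow t ht)
  have huI : uIcc u v = Icc u v := uIcc_of_le huv
  set c : ℂ := (2 * Real.pi * Complex.I)⁻¹ with hcdef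
  have hpi : (2 * Real.pi * Complex.I : ℂ) ≠ 0 := by simp [Real.pi_ne_zero]
  have hcn : ‖c‖ ≤ 1 / 3 := by
    rw [hcdef]
    simp only [norm_inv, norm_mul, Complex.norm_ofNat, Complex.norm_real, Complex.norm_I, mul_one,
      Real.norm_eq_abs, abs_of_pos Real.pi_pos]
    rw [one_div]
    apply inv_anti₀ (by norm_num)
    nlinarith [Real.pi_gt_three]
  have hinv : ∀ t ∈ Icc u v, HasDerivAt (fun t => (f' t)⁻¹) (-f'' t / (f' t) ^ 2) t :=
    fun t ht => (hf' t).inv (hpos t ht).ne'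
  have hderiv : ∀ t ∈ uIcc u v, HasDerivAt (fun t => c * (expTwoPi (f t) * ((f' t)⁻¹ : ℝ)))
      (expTwoPi (f t) + c * (expTwoPi (f t) * ((-f'' t / (f' t) ^ 2 : ℝ) : ℂ))) t := by
    intro t ht
    rw [huI] at ht
    have h1 := ((hasDerivAt_expTwoPi_comp (hf t)).mul (hinv t ht).ofReal_comp).const_mul c
    refine h1.congr_deriv ?_
    have h0 : (f' t : ℂ) ≠ 0 := by exact_mod_cast (hpos t ht).ne'
    have : c * (expTwoPi (f t) * (2 * Real.pi * Complex.I * f' t) * ((f' t)⁻¹ : ℝ))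
        = expTwoPi (f t) := by
      rw [hcdef]; push_cast; field_simp
    rw [mul_add, this]
  have hcont2 : ContinuousOn (fun t => -f'' t / (f' t) ^ 2) (uIcc u v) := by
    rw [huI]
    exact (hc.neg.continuousOn).div (hcf'.pow 2).continuousOn
      fun t ht => pow_ne_zero _ (hpos t ht).ne'
  have hi1 : IntervalIntegrable (fun t => expTwoPi (f t)) volume u v :=
    (continuous_expTwoPi.comp hcf).intervalIntegrable _ _
  have hi2 : IntervalIntegrable (fun t => c * (expTwoPi (f t) * ((-f'' t / (f' t) ^ 2 : ℝ) : ℂ)))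
      volume u v := by
    apply ContinuousOn.intervalIntegrable
    apply continuousOn_const.mul
    exact (continuous_expTwoPi.comp hcf).continuousOn.mul
      (Complex.continuous_ofReal.comp_continuousOn hcont2)
  have hF := intervalIntegral.integral_eq_sub_of_hasDerivAt hderiv (hi1.add hi2)
  rw [intervalIntegral.integral_add hi1 hi2] at hF
  have hR := intervalIntegral.integral_eq_sub_of_hasDerivAt
    (fun t ht => hinv t (huI ▸ ht)) hcont2.intervalIntegrable
  have hb : ∀ t ∈ Icc u v, ‖c * (expTwoPi (f t) * ((f' t)⁻¹ : ℝ))‖ ≤ 1 / 3 * (1 / l) := by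
    intro t ht
    rw [norm_mul, norm_mul, norm_expTwoPi, one_mul, Complex.norm_real, Real.norm_eq_abs,
      abs_of_pos (inv_pos.2 (hpos t ht))]
    apply mul_le_mul hcn _ (inv_pos.2 (hpos t ht)).le (by norm_num)
    rw [one_div]; exact inv_anti₀ hl (hlow t ht)
  have hinvle : ∀ t ∈ Icc u v, 0 ≤ (f' t)⁻¹ ∧ (f' t)⁻¹ ≤ 1 / l := fun t ht =>
    ⟨(inv_pos.2 (hpos t ht)).le, by rw [one_div]; exact inv_anti₀ hl (hlow t ht)⟩
  have hu : u ∈ Icc u v := left_mem_Icc.2 huv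
  have hv : v ∈ Icc u v := right_mem_Icc.2 huv
  have habs : ∫ t in u..v, |(-f'' t / (f' t) ^ 2)| ≤ 1 / l := by
    rcases hmono with h | h
    · have : ∫ t in u..v, |(-f'' t / (f' t) ^ 2)| = ∫ t in u..v, -(-f'' t / (f' t) ^ 2) := by
        apply intervalIntegral.integral_congr
        intro t ht
        rw [huI] at ht
        exact abs_of_nonpos (div_nonpos_of_nonpos_of_nonneg (by linarith [h t ht]) (sq_nonneg _))
      rw [this, intervalIntegral.integral_neg, hR]
      linarith [(hinvle u hu).2, (hinvle v hv).1]
    · have : ∫ t in u..v, |(-f'' t / (f' t) ^ 2)| = ∫ t in u..v, (-f'' t / (f' t) ^ 2) := by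
        apply intervalIntegral.integral_congr
        intro t ht
        rw [huI] at ht
        exact abs_of_nonneg (div_nonneg (by linarith [h t ht]) (sq_nonneg _))
      rw [this, hR]
      linarith [(hinvle v hv).2, (hinvle u hu).1]
  have hI2 : ‖∫ t in u..v, c * (expTwoPi (f t) * ((-f'' t / (f' t) ^ 2 : ℝ) : ℂ))‖
      ≤ 1 / 3 * (1 / l) := by
    rw [intervalIntegral.integral_const_mul, norm_mul]
    apply mul_le_mul hcn _ (norm_nonneg _) (by norm_num)
    refine (intervalIntegral.norm_integral_le_integral_norm huv).trans (le_of_eq_of_le ?_ habs)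
    apply intervalIntegral.integral_congr
    intro t _
    simp only [norm_mul, norm_expTwoPi, one_mul, Complex.norm_real, Real.norm_eq_abs]
  have e1 : ∫ t in u..v, expTwoPi (f t) = c * (expTwoPi (f v) * ((f' v)⁻¹ : ℝ))
      - c * (expTwoPi (f u) * ((f' u)⁻¹ : ℝ))
      - ∫ t in u..v, c * (expTwoPi (f t) * ((-f'' t / (f' t) ^ 2 : ℝ) : ℂ)) := by
    rw [← hF]; ring
  rw [e1]
  refine (norm_sub_le _ _).trans ?_
  refine (add_le_add ((norm_sub_le _ _).trans (add_le_add (hb v hv) (hb u hu))) hI2).trans ?_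
  apply le_of_eq; ring

theorem norm_integral_expTwoPi_neg (f : ℝ → ℝ) (u v : ℝ) :
    ‖∫ t in u..v, expTwoPi (-f t)‖ = ‖∫ t in u..v, expTwoPi (f t)‖ := by
  have : ∫ t in u..v, expTwoPi (-f t) = (starRingEnd ℂ) (∫ t in u..v, expTwoPi (f t)) := by
    rw [intervalIntegral, intervalIntegral, map_sub, ← integral_conj, ← integral_conj]
    simp_rw [conj_expTwoPi]
  rw [this, RCLike.norm_conj]

theorem norm_integral_expTwoPi_le {f f' f'' : ℝ → ℝ} {u v l : ℝ} (huv : u ≤ v) (hl : 0 < l)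
    (hf : ∀ t, HasDerivAt f (f' t) t) (hf' : ∀ t, HasDerivAt f' (f'' t) t)
    (hc : Continuous f'')
    (hlow : (∀ t ∈ Icc u v, l ≤ f' t) ∨ (∀ t ∈ Icc u v, f' t ≤ -l))
    (hmono : (∀ t ∈ Icc u v, 0 ≤ f'' t) ∨ (∀ t ∈ Icc u v, f'' t ≤ 0)) :
    ‖∫ t in u..v, expTwoPi (f t)‖ ≤ 1 / l := by
  rcases hlow with h | h
  · exact norm_integral_expTwoPi_le_of_pos huv hl hf hf' hc h hmono
  · rw [← norm_integral_expTwoPi_neg]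
    refine norm_integral_expTwoPi_le_of_pos huv hl (fun t => (hf t).neg) (fun t => (hf' t).neg)
      hc.neg (fun t ht => by linarith [h t ht]) ?_
    rcases hmono with h | h
    · exact Or.inr fun t ht => by simpa using h t ht
    · exact Or.inl fun t ht => by simpa using h t ht

/-- An interval integral is controlled by its pieces avoiding a finite set. -/
theorem norm_integral_le_of_avoid {g : ℝ → ℂ} (hg : Continuous g) {B : ℝ} (hB : 0 ≤ B) :
    ∀ (n : ℕ) (Z : Finset ℝ) (u v : ℝ), Z.card ≤ n → u ≤ v →
    (∀ u' v', u ≤ u' → u' ≤ v' → v' ≤ v → (∀ z ∈ Z, z ∉ Ioo u' v') → ‖∫ t in u'..v', g t‖ ≤ B) →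
    ‖∫ t in u..v, g t‖ ≤ 2 ^ n * B := by
  intro n
  induction n with
  | zero =>
    intro Z u v hZ huv h
    have : Z = ∅ := Finset.card_eq_zero.1 (by omega)
    simpa [this] using h u v le_rfl huv le_rfl (by simp [this])
  | succ n ih =>
    intro Z u v hZ huv h
    by_cases hz : ∃ z ∈ Z, z ∈ Ioo u v
    · obtain ⟨z, hzZ, hz1, hz2⟩ := hz
      have hcard : (Z.erase z).card ≤ n := by rw [Finset.card_erase_of_mem hzZ]; omega
      have key : ∀ u' v', u ≤ u' → u' ≤ v' → v' ≤ v → z ∉ Ioo u' v' →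
          (∀ w ∈ Z.erase z, w ∉ Ioo u' v') → ‖∫ t in u'..v', g t‖ ≤ B := by
        intro u' v' h1 h2 h3 h4 h5
        refine h u' v' h1 h2 h3 fun w hw => ?_
        by_cases hwz : w = z
        · rwa [hwz]
        · exact h5 w (Finset.mem_erase.2 ⟨hwz, hw⟩)
      have i1 := ih (Z.erase z) u z hcard hz1.le fun u' v' h1 h2 h3 h4 =>
        key u' v' h1 h2 (h3.trans hz2.le) (fun hh => absurd hh.2 (not_lt.2 h3)) h4
      have i2 := ih (Z.erase z) z v hcard hz2.le fun u' v' h1 h2 h3 h4 =>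
        key u' v' (hz1.le.trans h1) h2 h3 (fun hh => absurd hh.1 (not_lt.2 h1)) h4
      rw [← intervalIntegral.integral_add_adjacent_intervals (hg.intervalIntegrable u z)
        (hg.intervalIntegrable z v)]
      refine (norm_add_le _ _).trans ((add_le_add i1 i2).trans (le_of_eq ?_))
      ring
    · push Not at hz
      refine (h u v le_rfl huv le_rfl hz).trans ?_
      exact le_mul_of_one_le_left hB (one_le_pow₀ (by norm_num))

open Polynomial in
theorem Polynomial.exists_coeff_bound_of_bound_Icc (k : ℕ) :
    ∃ C : ℝ, 1 ≤ C ∧ ∀ q : ℝ[X], q.natDegree ≤ k → (∀ t ∈ Icc (0 : ℝ) 1, |q.eval t| ≤ 1) →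
      ∀ j, |q.coeff j| ≤ C := by
  set v : Fin (k + 1) → ℝ := fun i => (i : ℝ) / (k + 1) with hv
  have hinj : Function.Injective v := by
    intro i j hij
    simp only [hv] at hij
    have h0 : ((k : ℝ) + 1) ≠ 0 := by positivity
    field_simp at hij
    exact Fin.ext (by exact_mod_cast hij)
  set b : Fin (k + 1) → ℝ[X] := fun i => Lagrange.basis Finset.univ v i with hb
  refine ⟨1 + ∑ j ∈ Finset.range (k + 1), ∑ i, |(b i).coeff j|, ?_, ?_⟩
  · have : 0 ≤ ∑ j ∈ Finset.range (k + 1), ∑ i, |(b i).coeff j| := by positivity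
    linarith
  intro q hq hbd j
  have hnn : ∀ j, 0 ≤ ∑ i, |(b i).coeff j| := fun j => by positivity
  by_cases hj : j < k + 1
  · have hqe : q = ∑ i, C (q.eval (v i)) * b i := by
      have := Lagrange.eq_interpolate (s := Finset.univ) (v := v) (f := q) hinj.injOn
        (by
          simp only [Finset.card_univ, Fintype.card_fin]
          refine lt_of_le_of_lt Polynomial.degree_le_natDegree ?_
          exact_mod_cast Nat.lt_succ_of_le hq)
      rw [Lagrange.interpolate_apply] at this
      exact this
    have h1 : |q.coeff j| ≤ ∑ i, |(b i).coeff j| := by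
      conv_lhs => rw [hqe]
      rw [finsetSum_coeff]
      refine (Finset.abs_sum_le_sum_abs _ _).trans (Finset.sum_le_sum fun i _ => ?_)
      rw [coeff_C_mul, abs_mul]
      refine mul_le_of_le_one_left (abs_nonneg _) (hbd _ ⟨by simp only [hv]; positivity, ?_⟩)
      simp only [hv]
      rw [div_le_one (by positivity)]
      have : (i : ℕ) ≤ k + 1 := i.2.le
      exact_mod_cast this
    have h2 := Finset.single_le_sum (f := fun j => ∑ i, |(b i).coeff j|) (fun j _ => hnn j)
      (Finset.mem_range.2 hj)
    linarith
  · rw [coeff_eq_zero_of_natDegree_lt (by omega)]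
    simp only [abs_zero]
    have : 0 ≤ ∑ j ∈ Finset.range (k + 1), ∑ i, |(b i).coeff j| := by positivity
    linarith

open Polynomial in
theorem Polynomial.sign_of_avoid_roots (q : ℝ[X]) {u v : ℝ} (h : ∀ z ∈ q.roots, z ∉ Ioo u v) :
    (∀ t ∈ Icc u v, 0 ≤ q.eval t) ∨ (∀ t ∈ Icc u v, q.eval t ≤ 0) := by
  by_contra hcon
  push Not at hcon
  obtain ⟨⟨t₁, ht₁, h₁⟩, ⟨t₂, ht₂, h₂⟩⟩ := hcon
  have hq : q ≠ 0 := by rintro rfl; simp at h₁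
  have := intermediate_value_uIcc (a := t₁) (b := t₂) (f := fun t => q.eval t)
    q.continuous.continuousOn
  obtain ⟨z, hz, hz0⟩ := this (mem_uIcc.2 (Or.inl ⟨h₁.le, h₂.le⟩))
  simp only at hz0
  refine h z ((mem_roots hq).2 hz0) ?_
  have hz1 : z ≠ t₁ := by rintro rfl; linarith
  have hz2 : z ≠ t₂ := by rintro rfl; linarith
  rcases mem_uIcc.1 hz with ⟨ha, hb⟩ | ⟨ha, hb⟩
  · exact ⟨ht₁.1.trans_lt (lt_of_le_of_ne ha hz1.symm), (lt_of_le_of_ne hb hz2).trans_le ht₂.2⟩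
  · exact ⟨ht₂.1.trans_lt (lt_of_le_of_ne ha hz2.symm), (lt_of_le_of_ne hb hz1).trans_le ht₁.2⟩

open Polynomial in
/-- If the oscillatory integral of a polynomial phase is at least `a / 2`, then the derivative is
small on an interval of length comparable to `a`. -/
theorem exists_interval_derivative_le (k : ℕ) :
    ∃ K : ℝ, 1 ≤ K ∧ ∀ f : ℝ[X], f.natDegree ≤ k → ∀ a : ℝ, 0 < a →
      a / 2 < ‖∫ t in (0 : ℝ)..1, expTwoPi (f.eval t)‖ →
      ∃ u : ℝ, 0 ≤ u ∧ u + a / K ≤ 1 ∧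
        ∀ t ∈ Icc u (u + a / K), |f.derivative.eval t| ≤ K / a := by
  refine ⟨2 ^ (3 * k + 1), one_le_pow₀ (by norm_num), fun f hf a ha hint => ?_⟩
  set K : ℝ := 2 ^ (3 * k + 1) with hK
  have hKpos : 0 < K := by positivity
  by_contra hcon
  push Not at hcon
  set l : ℝ := K / a with hl
  have hlpos : 0 < l := by positivity
  set Z : Finset ℝ := (f.derivative - C l).roots.toFinset ∪ (f.derivative + C l).roots.toFinset
    ∪ f.derivative.derivative.roots.toFinset with hZ
  have hd1 : f.derivative.natDegree ≤ k := (natDegree_derivative_le f).trans (by omega)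
  have hd2 : f.derivative.derivative.natDegree ≤ k :=
    (natDegree_derivative_le _).trans (by omega)
  have hroots : ∀ q : ℝ[X], q.natDegree ≤ k → q.roots.toFinset.card ≤ k := fun q hq =>
    (Multiset.toFinset_card_le _).trans ((card_roots' q).trans hq)
  have hcard : Z.card ≤ 3 * k := by
    refine (Finset.card_union_le _ _).trans ?_
    have := Finset.card_union_le (f.derivative - C l).roots.toFinset
      (f.derivative + C l).roots.toFinset
    have h1 := hroots (f.derivative - C l) (by rw [natDegree_sub_C]; exact hd1)
    have h2 := hroots (f.derivative + C l) (by rw [natDegree_add_C]; exact hd1)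
    have h3 := hroots _ hd2
    omega
  have hmain := norm_integral_le_of_avoid (g := fun t => expTwoPi (f.eval t))
    (continuous_expTwoPi.comp f.continuous) (B := a / K) (by positivity) (3 * k) Z 0 1 hcard
    zero_le_one ?_
  · have : (2 : ℝ) ^ (3 * k) * (a / K) = a / 2 := by
      rw [hK, pow_succ]; field_simp
    linarith
  intro u v hu huv hv hav
  have hav1 : ∀ z ∈ (f.derivative - C l).roots, z ∉ Ioo u v := fun z hz =>
    hav z (by simp only [hZ, Finset.mem_union, Multiset.mem_toFinset]; tauto)
  have hav2 : ∀ z ∈ (f.derivative + C l).roots, z ∉ Ioo u v := fun z hz =>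
    hav z (by simp only [hZ, Finset.mem_union, Multiset.mem_toFinset]; tauto)
  have hav3 : ∀ z ∈ f.derivative.derivative.roots, z ∉ Ioo u v := fun z hz =>
    hav z (by simp only [hZ, Finset.mem_union, Multiset.mem_toFinset]; tauto)
  have s1 := sign_of_avoid_roots _ hav1
  have s2 := sign_of_avoid_roots _ hav2
  have s3 := sign_of_avoid_roots _ hav3
  simp only [eval_sub, eval_add, eval_C] at s1 s2
  have hbig : ((∀ t ∈ Icc u v, l ≤ f.derivative.eval t) ∨
      (∀ t ∈ Icc u v, f.derivative.eval t ≤ -l)) → ‖∫ t in u..v, expTwoPi (f.eval t)‖ ≤ a / K := by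
    intro h
    have := norm_integral_expTwoPi_le huv hlpos (fun t => f.hasDerivAt t)
      (fun t => f.derivative.hasDerivAt t) f.derivative.derivative.continuous h s3
    rwa [hl, one_div_div] at this
  rcases s1 with s1 | s1
  · exact hbig (Or.inl fun t ht => by linarith [s1 t ht])
  rcases s2 with s2 | s2
  · have hlen : v - u < a / K := by
      by_contra hlen
      push Not at hlen
      obtain ⟨t, ht, ht'⟩ := hcon u hu (by linarith)
      have ht2 : t ∈ Icc u v := ⟨ht.1, ht.2.trans (by linarith)⟩
      exact absurd ht' (not_lt.2 (abs_le.2 ⟨by linarith [s2 t ht2], by linarith [s1 t ht2]⟩))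
    refine (intervalIntegral.norm_integral_le_of_norm_le_const (C := 1) fun t _ =>
      (norm_expTwoPi _).le).trans ?_
    rw [one_mul, abs_of_nonneg (by linarith)]
    exact hlen.le
  · exact hbig (Or.inr fun t ht => by linarith [s2 t ht])

open Polynomial in
/-- If the oscillatory integral of a polynomial phase is at least `a / 2`, then all its Taylor
coefficients are controlled at the scale `a` on an interval of length comparable to `a`. -/
theorem exists_interval_taylor_le (k : ℕ) :
    ∃ K : ℝ, 1 ≤ K ∧ ∀ f : ℝ[X], f.natDegree ≤ k → ∀ a : ℝ, 0 < a →
      a / 2 < ‖∫ t in (0 : ℝ)..1, expTwoPi (f.eval t)‖ →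
      ∃ u : ℝ, 0 ≤ u ∧ u + a / K ≤ 1 ∧
        ∀ t ∈ Icc u (u + a / K), ∀ j, 1 ≤ j → j ≤ k → |(taylor t f).coeff j| ≤ K / a ^ j := by
  obtain ⟨K, hK1, hK⟩ := exists_interval_derivative_le k
  obtain ⟨C', hC1, hC⟩ := exists_coeff_bound_of_bound_Icc k
  have hKpos : 0 < K := by linarith
  have h2K : 2 * K ≤ C' * (2 * K) ^ (k + 1) := by
    have h1 : (1 : ℝ) ≤ (2 * K) ^ k := one_le_pow₀ (by linarith)
    have h3 : 1 ≤ C' * (2 * K) ^ k := one_le_mul_of_one_le_of_one_le hC1 h1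
    rw [pow_succ, ← mul_assoc]
    nlinarith
  refine ⟨C' * (2 * K) ^ (k + 1), by linarith, fun f hf a ha hint => ?_⟩
  obtain ⟨u, hu, hu1, hder⟩ := hK f hf a ha hint
  set L := C' * (2 * K) ^ (k + 1) with hL
  have haL : a / L ≤ a / (2 * K) := by gcongr
  have hhalf : a / (2 * K) + a / (2 * K) = a / K := by field_simp; norm_num
  have hap : 0 < a / (2 * K) := by positivity
  refine ⟨u, hu, by linarith, fun t ht j hj hjk => ?_⟩
  set b := a / (2 * K) with hb
  set h : ℝ[X] := (taylor t f).comp (C b * X) with hh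
  have hheval : ∀ τ, h.eval τ = f.eval (b * τ + t) := by
    intro τ; rw [hh, eval_comp, taylor_eval]; simp
  have hhc : ∀ n, h.coeff n = (taylor t f).coeff n * b ^ n := fun n => by
    rw [hh, comp_C_mul_X_coeff]
  have hhdeg : h.natDegree ≤ k := by
    rw [natDegree_le_iff_coeff_eq_zero]
    intro n hn
    rw [hhc, coeff_eq_zero_of_natDegree_lt (by rw [natDegree_taylor]; omega), zero_mul]
  have hhd : ∀ τ, h.derivative.eval τ = f.derivative.eval (b * τ + t) * b := by
    intro τ
    have h1 := h.hasDerivAt τ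
    have h2 : HasDerivAt (fun τ => f.eval (b * τ + t)) (f.derivative.eval (b * τ + t) * b) τ := by
      have h3 : HasDerivAt (fun τ : ℝ => b * τ + t) b τ := by
        simpa using ((hasDerivAt_id τ).const_mul b).add_const t
      exact (f.hasDerivAt (b * τ + t)).comp τ h3
    have h4 : (fun τ => h.eval τ) = fun τ => f.eval (b * τ + t) := funext hheval
    rw [h4] at h1
    exact h1.unique h2
  have hbound := hC h.derivative ((natDegree_derivative_le h).trans (by omega)) (by
    intro τ hτ
    rw [hhd, abs_mul, abs_of_pos hap]
    have : b * τ + t ∈ Icc u (u + a / K) := by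
      refine ⟨?_, ?_⟩
      · nlinarith [ht.1, hτ.1]
      · nlinarith [ht.2, hτ.2]
    refine (mul_le_mul_of_nonneg_right (hder _ this) hap.le).trans ?_
    rw [hb]; field_simp; norm_num) (j - 1)
  rw [coeff_derivative, Nat.sub_add_cancel hj, hhc, abs_mul, abs_mul, abs_of_pos (pow_pos hap j)]
    at hbound
  have hj1 : (1 : ℝ) ≤ |((j - 1 : ℕ) : ℝ) + 1| := by
    rw [abs_of_nonneg (by positivity)]
    have : (0 : ℝ) ≤ ((j - 1 : ℕ) : ℝ) := by positivity
    linarith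
  have h5 : |(taylor t f).coeff j| * b ^ j ≤ C' := by
    refine le_trans ?_ hbound
    exact le_mul_of_one_le_right (by positivity) hj1
  rw [le_div_iff₀ (by positivity)]
  have h6 : a ^ j = b ^ j * (2 * K) ^ j := by rw [hb, ← mul_pow]; congr 1; field_simp
  rw [h6, ← mul_assoc, hL]
  gcongr
  · linarith
  · omega

/-- Tonelli's theorem for products of functions of separate variables. -/
theorem lintegral_fin_prod_eq_prod {n : ℕ} (μ : Fin n → Measure ℝ) [∀ i, SigmaFinite (μ i)]
    (f : Fin n → ℝ → ℝ≥0∞) (hf : ∀ i, Measurable (f i)) :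
    ∫⁻ x : Fin n → ℝ, ∏ i, f i (x i) ∂(Measure.pi μ) = ∏ i, ∫⁻ x, f i x ∂(μ i) := by
  induction n with
  | zero => simp
  | succ n ih =>
    have hm : Measurable fun x : Fin n → ℝ => ∏ i : Fin n, f (Fin.succ i) (x i) :=
      Finset.measurable_prod _ fun i _ => (hf _).comp (measurable_pi_apply i)
    calc
      _ = ∫⁻ x : ℝ × (Fin n → ℝ), f 0 x.1 * ∏ i : Fin n, f (Fin.succ i) (x.2 i)
            ∂((μ 0).prod (Measure.pi (fun i ↦ μ i.succ))) := by
        rw [← ((measurePreserving_piFinSuccAbove μ 0).symm).lintegral_comp_emb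
          (MeasurableEquiv.measurableEmbedding _)]
        simp_rw [MeasurableEquiv.piFinSuccAbove_symm_apply, Fin.insertNthEquiv,
            Fin.prod_univ_succ, Fin.insertNth_zero, Equiv.coe_fn_mk, Fin.cons_succ,
            Fin.zero_succAbove, cast_eq, Fin.cons_zero]
      _ = (∫⁻ x, f 0 x ∂μ 0) * ∏ i : Fin n, ∫⁻ x, f (Fin.succ i) x ∂(μ i.succ) := by
        rw [← ih _ _ (fun i => hf _), ← lintegral_prod_mul (hf 0).aemeasurable hm.aemeasurable]
      _ = _ := by rw [Fin.prod_univ_succ]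

theorem integral_gaussian_mul_expTwoPi {ε : ℝ} (hε : 0 < ε) (v : ℝ) :
    ∫ r : ℝ, ((rexp (-π * ε * r ^ 2) : ℝ) : ℂ) * expTwoPi (r * v)
      = (((√ε)⁻¹ * rexp (-π / ε * v ^ 2) : ℝ) : ℂ) := by
  have h := congrFun (fourier_gaussian_pi (b := (ε : ℂ)) (by simpa using hε)) (-v)
  rw [Real.fourier_eq'] at h
  have e1 : ∀ r : ℝ, ((rexp (-π * ε * r ^ 2) : ℝ) : ℂ) * expTwoPi (r * v)
      = Complex.exp (((-2 * π * inner ℝ r (-v) : ℝ) : ℂ) * Complex.I) •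
        Complex.exp (-π * ε * r ^ 2) := by
    intro r
    unfold expTwoPi
    rw [smul_eq_mul, mul_comm]
    push_cast
    congr 2
    simp only [RCLike.inner_apply, conj_trivial]
    push_cast; ring
  simp_rw [e1]
  rw [h]
  push_cast
  congr 1
  · rw [Real.sqrt_eq_rpow, Complex.ofReal_cpow hε.le, one_div]
    push_cast; rfl
  · congr 1; ring

theorem lintegral_gaussian_scaled {ε c : ℝ} (hε : 0 < ε) (hc : 0 < c) :
    ∫⁻ x : ℝ, ENNReal.ofReal ((√ε)⁻¹ * rexp (-π / ε * (c * x ^ 2))) = ENNReal.ofReal ((√c)⁻¹) := by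
  have e : ∀ x : ℝ, (√ε)⁻¹ * rexp (-π / ε * (c * x ^ 2))
      = (√ε)⁻¹ * rexp (-(π * c / ε) * x ^ 2) := fun x => by ring_nf
  simp_rw [e]
  rw [← ofReal_integral_eq_lintegral_ofReal
    ((integrable_exp_neg_mul_sq (by positivity)).const_mul _)
    (Filter.Eventually.of_forall fun x => by positivity),
    integral_const_mul, integral_gaussian]
  congr 1
  have : π / (π * c / ε) = ε / c := by field_simp
  rw [this, Real.sqrt_div hε.le]
  have := Real.sqrt_pos.2 hε
  field_simp

theorem lintegral_prod_schur_le {α : Type*} [MeasurableSpace α] {μ : Measure α} [SFinite μ]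
    {f : α → ℝ≥0∞} (hf : Measurable f) {K : α → α → ℝ≥0∞}
    (hK : Measurable fun z : α × α => K z.1 z.2) {C : ℝ≥0∞} (hC : ∀ s, ∫⁻ t, K s t ∂μ ≤ C) :
    ∫⁻ z : α × α, 2⁻¹ * (f z.1 * K z.1 z.2 + f z.2 * K z.2 z.1) ∂(μ.prod μ)
      ≤ C * ∫⁻ s, f s ∂μ := by
  have hm1 : Measurable fun z : α × α => f z.1 * K z.1 z.2 := (hf.comp measurable_fst).mul hK
  have hone : ∫⁻ z, f z.1 * K z.1 z.2 ∂(μ.prod μ) ≤ C * ∫⁻ s, f s ∂μ := by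
    rw [lintegral_prod _ hm1.aemeasurable, ← lintegral_const_mul _ hf]
    refine lintegral_mono fun s => ?_
    have hKs : Measurable (K s) := hK.comp measurable_prodMk_left
    simp only
    rw [lintegral_const_mul _ hKs, mul_comm]
    gcongr
    exact hC s
  have hswap : ∫⁻ z, f z.2 * K z.2 z.1 ∂(μ.prod μ) = ∫⁻ z, f z.1 * K z.1 z.2 ∂(μ.prod μ) :=
    lintegral_prod_swap (μ := μ) (ν := μ) (f := fun z => f z.1 * K z.1 z.2)
  rw [lintegral_const_mul' _ _ (by simp), lintegral_add_left hm1, hswap, ← two_mul, ← mul_assoc,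
    ENNReal.inv_mul_cancel (by simp) (by simp), one_mul]
  exact hone

section LargeSieve

variable {k : ℕ}

theorem integral_gaussian_weight {ε : ℝ} (hε : 0 < ε) (v : Fin k → ℝ) :
    ∫ r : Fin k → ℝ, ((∏ m, rexp (-π * ε * r m ^ 2) : ℝ) : ℂ) * expTwoPi (∑ m, r m * v m)
      = ((∏ m, ((√ε)⁻¹ * rexp (-π / ε * v m ^ 2)) : ℝ) : ℂ) := by
  simp_rw [expTwoPi_sum, Complex.ofReal_prod, ← Finset.prod_mul_distrib]
  rw [integral_fintype_prod_volume_eq_prod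
    (fun m (r : ℝ) => ((rexp (-π * ε * r ^ 2) : ℝ) : ℂ) * expTwoPi (r * v m))]
  simp_rw [integral_gaussian_mul_expTwoPi hε]

theorem integrable_gaussian_weight {ε : ℝ} (hε : 0 < ε) :
    Integrable fun r : Fin k → ℝ => ∏ m, rexp (-π * ε * r m ^ 2) := by
  have := Integrable.fintype_prod (𝕜 := ℝ) (ι := Fin k) (μ := fun _ => (volume : Measure ℝ))
    (f := fun _ (r : ℝ) => rexp (-π * ε * r ^ 2)) fun _ => by
      have := integrable_exp_neg_mul_sq (b := π * ε) (by positivity)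
      simpa using this
  exact this

theorem prod_gaussian_le {ε c : ℝ} (hε : 0 < ε) {v w : Fin k → ℝ}
    (h : c * ∑ m, w m ^ 2 ≤ ∑ m, v m ^ 2) :
    ∏ m, ((√ε)⁻¹ * rexp (-π / ε * v m ^ 2)) ≤ ∏ m, ((√ε)⁻¹ * rexp (-π / ε * (c * w m ^ 2))) := by
  rw [Finset.prod_mul_distrib, Finset.prod_mul_distrib, ← Real.exp_sum, ← Real.exp_sum,
    ← Finset.mul_sum, ← Finset.mul_sum, ← Finset.mul_sum]
  apply mul_le_mul_of_nonneg_left _ (by positivity)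
  apply Real.exp_le_exp.2
  apply mul_le_mul_of_nonpos_left h
  rw [neg_div]
  have : 0 ≤ π / ε := by positivity
  linarith

theorem lintegral_prod_gaussian {ε c : ℝ} (hε : 0 < ε) (hc : 0 < c) (s : Fin k → ℝ) :
    ∫⁻ s' : Fin k → ℝ, ENNReal.ofReal (∏ m, ((√ε)⁻¹ * rexp (-π / ε * (c * (s m - s' m) ^ 2))))
      = ENNReal.ofReal ((√c)⁻¹) ^ k := by
  have e : ∀ s' : Fin k → ℝ,
      ENNReal.ofReal (∏ m, ((√ε)⁻¹ * rexp (-π / ε * (c * (s m - s' m) ^ 2))))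
      = ∏ m, ENNReal.ofReal ((√ε)⁻¹ * rexp (-π / ε * (c * (s m - s' m) ^ 2))) := fun s' =>
    ENNReal.ofReal_prod_of_nonneg fun m _ => by positivity
  simp_rw [e]
  rw [volume_pi, lintegral_fin_prod_eq_prod (fun _ => volume)
    (fun m (x : ℝ) => ENNReal.ofReal ((√ε)⁻¹ * rexp (-π / ε * (c * (s m - x) ^ 2))))
    (fun m => by fun_prop)]
  have : ∀ m, ∫⁻ x : ℝ, ENNReal.ofReal ((√ε)⁻¹ * rexp (-π / ε * (c * (s m - x) ^ 2)))
      = ENNReal.ofReal ((√c)⁻¹) := by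
    intro m
    rw [← lintegral_gaussian_scaled hε hc]
    exact lintegral_sub_left_eq_self
      (fun x => ENNReal.ofReal ((√ε)⁻¹ * rexp (-π / ε * (c * x ^ 2)))) (s m)
  simp only [this, Finset.prod_const, Finset.card_univ, Fintype.card_fin]

set_option maxHeartbeats 400000 in
theorem lintegral_weighted_sq_oscillatory_le {Q : Set (Fin k → ℝ)}
    (hQf : volume Q ≠ ⊤) {Φ : (Fin k → ℝ) → (Fin k → ℝ)} (hΦ : Continuous Φ) {c : ℝ} (hc : 0 < c)
    (hQ : MeasurableSet Q)
    (hsep : ∀ s ∈ Q, ∀ s' ∈ Q, c * ∑ m, (s m - s' m) ^ 2 ≤ ∑ m, (Φ s m - Φ s' m) ^ 2)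
    {H : (Fin k → ℝ) → ℂ} (hH : Measurable H) (hHb : ∀ s, ‖H s‖ ≤ 1) {ε : ℝ} (hε : 0 < ε) :
    ∫⁻ r : Fin k → ℝ, ENNReal.ofReal (∏ m, rexp (-π * ε * r m ^ 2)) *
        ‖∫ s in Q, H s * expTwoPi (∑ m, r m * Φ s m)‖ₑ ^ 2
      ≤ ENNReal.ofReal ((√c)⁻¹) ^ k * ∫⁻ s in Q, ‖H s‖ₑ ^ 2 := by
  set μ : Measure (Fin k → ℝ) := volume.restrict Q with hμ
  have : IsFiniteMeasure μ := ⟨by simpa [hμ] using lt_top_iff_ne_top.2 hQf⟩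
  set w : (Fin k → ℝ) → ℝ := fun r => ∏ m, rexp (-π * ε * r m ^ 2) with hw
  have hw0 : ∀ r, 0 ≤ w r := fun r => by simp only [hw]; positivity
  have hwi : Integrable w := integrable_gaussian_weight hε
  set I : (Fin k → ℝ) → ℂ := fun r => ∫ s, H s * expTwoPi (∑ m, r m * Φ s m) ∂μ with hI
  have hΦm : ∀ m, Continuous fun s => Φ s m := fun m => (continuous_apply m).comp hΦ
  have hjm : Measurable fun z : (Fin k → ℝ) × (Fin k → ℝ) =>
      H z.2 * expTwoPi (∑ m, z.1 m * Φ z.2 m) := by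
    refine (hH.comp measurable_snd).mul ?_
    apply Continuous.measurable
    fun_prop
  have hIm : StronglyMeasurable I :=
    hjm.stronglyMeasurable.integral_prod_right'
  set G : ((Fin k → ℝ) × (Fin k → ℝ)) → (Fin k → ℝ) → ℂ := fun z r =>
    H z.1 * (starRingEnd ℂ) (H z.2) * expTwoPi (∑ m, r m * (Φ z.1 m - Φ z.2 m)) with hG
  have hII : ∀ r, I r * (starRingEnd ℂ) (I r) = ∫ z, G z r ∂(μ.prod μ) := by
    intro r
    have h1 : (starRingEnd ℂ) (I r)
        = ∫ s, (starRingEnd ℂ) (H s) * expTwoPi (-∑ m, r m * Φ s m) ∂μ := by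
      rw [hI, ← integral_conj]
      simp_rw [map_mul, conj_expTwoPi]
    rw [h1, hI, ← integral_prod_mul]
    congr 1
    ext z
    simp only [hG]
    have : ∑ m, r m * (Φ z.1 m - Φ z.2 m) = (∑ m, r m * Φ z.1 m) + (-∑ m, r m * Φ z.2 m) := by
      simp_rw [mul_sub, Finset.sum_sub_distrib]; ring
    rw [this, expTwoPi_add]; ring
  have hGb : ∀ z r, ‖G z r‖ ≤ 1 := by
    intro z r
    simp only [hG, norm_mul, norm_expTwoPi, RCLike.norm_conj, mul_one]
    exact mul_le_one₀ (hHb _) (norm_nonneg _) (hHb _)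
  have hGm : Measurable fun q : (Fin k → ℝ) × ((Fin k → ℝ) × (Fin k → ℝ)) => G q.2 q.1 := by
    simp only [hG]
    refine Measurable.mul ?_ ?_
    · exact (hH.comp (measurable_fst.comp measurable_snd)).mul
        (Complex.continuous_conj.measurable.comp (hH.comp (measurable_snd.comp measurable_snd)))
    · apply Continuous.measurable
      fun_prop
  have hint : Integrable (Function.uncurry fun r z => (w r : ℂ) * G z r)
      ((volume : Measure (Fin k → ℝ)).prod (μ.prod μ)) := by
    have h1 : Integrable (fun q : (Fin k → ℝ) × ((Fin k → ℝ) × (Fin k → ℝ)) => w q.1)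
        ((volume : Measure (Fin k → ℝ)).prod (μ.prod μ)) := by
      simpa using hwi.mul_prod (integrable_const (1 : ℝ) (μ := μ.prod μ))
    refine h1.mono' ?_ (Filter.Eventually.of_forall fun q => ?_)
    · refine Measurable.aestronglyMeasurable ?_
      refine Measurable.mul ?_ hGm
      refine Complex.measurable_ofReal.comp ?_
      have : Continuous w := by simp only [hw]; fun_prop
      exact this.measurable.comp measurable_fst
    · simp only [Function.uncurry, norm_mul, Complex.norm_real, Real.norm_eq_abs,
        abs_of_nonneg (hw0 _)]
      exact mul_le_of_le_one_right (hw0 _) (hGb _ _)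
  have hIb : ∀ r, ‖I r‖ ≤ μ.real univ := by
    intro r
    have := norm_integral_le_of_norm_le_const (μ := μ) (C := 1)
      (f := fun s => H s * expTwoPi (∑ m, r m * Φ s m))
      (Filter.Eventually.of_forall fun s => by
        rw [norm_mul, norm_expTwoPi, mul_one]; exact hHb s)
    simpa using this
  have hswap : ((∫ r, w r * ‖I r‖ ^ 2 : ℝ) : ℂ)
      = ∫ z, H z.1 * (starRingEnd ℂ) (H z.2) *
        ((∏ m, ((√ε)⁻¹ * rexp (-π / ε * (Φ z.1 m - Φ z.2 m) ^ 2)) : ℝ) : ℂ) ∂(μ.prod μ) := by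
    rw [← integral_complex_ofReal]
    have h1 : ∀ r, ((w r * ‖I r‖ ^ 2 : ℝ) : ℂ) = ∫ z, (w r : ℂ) * G z r ∂(μ.prod μ) := by
      intro r
      rw [integral_const_mul, ← hII, Complex.mul_conj, Complex.normSq_eq_norm_sq]
      push_cast; rfl
    simp_rw [h1]
    rw [integral_integral_swap hint]
    congr 1
    ext z
    rw [← integral_gaussian_weight hε (fun m => Φ z.1 m - Φ z.2 m), ← integral_const_mul]
    congr 1
    ext r
    simp only [hG, hw]
    ring
  have hwI : Integrable fun r => w r * ‖I r‖ ^ 2 := by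
    refine (hwi.mul_const ((μ.real univ) ^ 2)).mono' ?_ (Filter.Eventually.of_forall fun r => ?_)
    · exact hwi.aestronglyMeasurable.mul (hIm.norm.pow 2).aestronglyMeasurable
    · rw [Real.norm_eq_abs, abs_of_nonneg (mul_nonneg (hw0 r) (by positivity))]
      exact mul_le_mul_of_nonneg_left (pow_le_pow_left₀ (norm_nonneg _) (hIb r) 2) (hw0 r)
  have hlhs : ∫⁻ r, ENNReal.ofReal (w r) * ‖I r‖ₑ ^ 2 = ‖((∫ r, w r * ‖I r‖ ^ 2 : ℝ) : ℂ)‖ₑ := by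
    have hnn : 0 ≤ ∫ r, w r * ‖I r‖ ^ 2 :=
      integral_nonneg fun r => mul_nonneg (hw0 r) (by positivity)
    rw [← ofReal_norm, Complex.norm_real, Real.norm_eq_abs, abs_of_nonneg hnn,
      ofReal_integral_eq_lintegral_ofReal hwI
      (Filter.Eventually.of_forall fun r => mul_nonneg (hw0 r) (by positivity))]
    congr 1
    ext r
    rw [ENNReal.ofReal_mul (hw0 r), ENNReal.ofReal_pow (norm_nonneg _), ofReal_norm]
  rw [hlhs, hswap]
  refine (enorm_integral_le_lintegral_enorm _).trans ?_
  set K : (Fin k → ℝ) → (Fin k → ℝ) → ℝ≥0∞ := fun s s' =>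
    ENNReal.ofReal (∏ m, ((√ε)⁻¹ * rexp (-π / ε * (c * (s m - s' m) ^ 2)))) with hK
  have hKm : Measurable fun z : (Fin k → ℝ) × (Fin k → ℝ) => K z.1 z.2 := by
    simp only [hK]; fun_prop
  have hKsymm : ∀ s s', K s s' = K s' s := by
    intro s s'; simp only [hK]
    congr 1
    refine Finset.prod_congr rfl fun m _ => ?_
    rw [show (s m - s' m) ^ 2 = (s' m - s m) ^ 2 by ring]
  have hhalf : ∀ x y : ℝ≥0∞, x * y ≤ 2⁻¹ * (x ^ 2 + y ^ 2) := by
    intro x y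
    rcases eq_or_ne x ⊤ with rfl | hx
    · simp [ENNReal.top_pow]
    rcases eq_or_ne y ⊤ with rfl | hy
    · simp [ENNReal.top_pow]
    lift x to NNReal using hx
    lift y to NNReal using hy
    have h2 : (2⁻¹ : ℝ≥0∞) = ((2⁻¹ : NNReal) : ℝ≥0∞) := by simp
    rw [h2]
    norm_cast
    rw [← NNReal.coe_le_coe]
    push_cast
    nlinarith [sq_nonneg ((x : ℝ) - y)]
  have hptw : ∀ z ∈ Q ×ˢ Q, ‖H z.1 * (starRingEnd ℂ) (H z.2) *
        ((∏ m, ((√ε)⁻¹ * rexp (-π / ε * (Φ z.1 m - Φ z.2 m) ^ 2)) : ℝ) : ℂ)‖ₑ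
      ≤ 2⁻¹ * (‖H z.1‖ₑ ^ 2 * K z.1 z.2 + ‖H z.2‖ₑ ^ 2 * K z.2 z.1) := by
    intro z hz
    rw [enorm_mul, enorm_mul, RCLike.enorm_conj, hKsymm z.2 z.1, ← add_mul, ← mul_assoc]
    refine mul_le_mul' (hhalf _ _) ?_
    · rw [← ofReal_norm, Complex.norm_real, Real.norm_eq_abs,
        abs_of_nonneg (by positivity)]
      exact ENNReal.ofReal_le_ofReal (prod_gaussian_le hε (hsep _ hz.1 _ hz.2))
  have hae : ∀ᵐ z ∂(μ.prod μ), z ∈ Q ×ˢ Q := by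
    rw [hμ, Measure.prod_restrict]
    exact ae_restrict_mem (hQ.prod hQ)
  refine (lintegral_mono_ae (hae.mono hptw)).trans ?_
  refine lintegral_prod_schur_le (hH.enorm.pow_const 2) hKm fun s => ?_
  rw [← lintegral_prod_gaussian hε hc s]
  exact lintegral_mono' Measure.restrict_le_self le_rfl

set_option maxHeartbeats 400000 in
/-- An `L²` estimate for oscillatory integrals whose phase map expands distances. -/
theorem lintegral_sq_oscillatory_le {Q : Set (Fin k → ℝ)}
    (hQf : volume Q ≠ ⊤) {Φ : (Fin k → ℝ) → (Fin k → ℝ)} (hΦ : Continuous Φ) {c : ℝ} (hc : 0 < c)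
    (hQ : MeasurableSet Q)
    (hsep : ∀ s ∈ Q, ∀ s' ∈ Q, c * ∑ m, (s m - s' m) ^ 2 ≤ ∑ m, (Φ s m - Φ s' m) ^ 2)
    {H : (Fin k → ℝ) → ℂ} (hH : Measurable H) (hHb : ∀ s, ‖H s‖ ≤ 1) :
    ∫⁻ r : Fin k → ℝ, ‖∫ s in Q, H s * expTwoPi (∑ m, r m * Φ s m)‖ₑ ^ 2
      ≤ ENNReal.ofReal ((√c)⁻¹) ^ k * ∫⁻ s in Q, ‖H s‖ₑ ^ 2 := by
  have : IsFiniteMeasure (volume.restrict Q) := ⟨by simpa using lt_top_iff_ne_top.2 hQf⟩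
  set I : (Fin k → ℝ) → ℂ := fun r => ∫ s in Q, H s * expTwoPi (∑ m, r m * Φ s m) with hI
  have hΦm : ∀ m, Continuous fun s => Φ s m := fun m => (continuous_apply m).comp hΦ
  have hjm : Measurable fun z : (Fin k → ℝ) × (Fin k → ℝ) =>
      H z.2 * expTwoPi (∑ m, z.1 m * Φ z.2 m) := by
    refine (hH.comp measurable_snd).mul ?_
    apply Continuous.measurable
    fun_prop
  have hIm : StronglyMeasurable I :=
    hjm.stronglyMeasurable.integral_prod_right'
  set F : ℕ → (Fin k → ℝ) → ℝ≥0∞ := fun n r =>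
    ENNReal.ofReal (∏ m, rexp (-π * (1 / ((n : ℝ) + 1)) * r m ^ 2)) * ‖I r‖ₑ ^ 2 with hF
  have hlim : ∀ r, Filter.Tendsto (fun n => F n r) Filter.atTop (nhds (‖I r‖ₑ ^ 2)) := by
    intro r
    have h0 := tendsto_one_div_add_atTop_nhds_zero_nat (𝕜 := ℝ)
    have hcont : Continuous fun t : ℝ => ∏ m, rexp (-π * t * r m ^ 2) := by fun_prop
    have h1 := (hcont.tendsto 0).comp h0
    have h2 := ENNReal.tendsto_ofReal h1
    have h3 := ENNReal.Tendsto.mul_const (b := ‖I r‖ₑ ^ 2) h2 (Or.inr (by simp))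
    simpa [hF] using h3
  have hb : ∀ n, ∫⁻ r, F n r ≤ ENNReal.ofReal ((√c)⁻¹) ^ k * ∫⁻ s in Q, ‖H s‖ₑ ^ 2 := fun n =>
    lintegral_weighted_sq_oscillatory_le hQf hΦ hc hQ hsep hH hHb (by positivity)
  calc ∫⁻ r, ‖I r‖ₑ ^ 2 = ∫⁻ r, Filter.liminf (fun n => F n r) Filter.atTop := by
        congr 1; ext r; exact (hlim r).liminf_eq.symm
    _ ≤ Filter.liminf (fun n => ∫⁻ r, F n r) Filter.atTop := by
        refine lintegral_liminf_le fun n => ?_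
        simp only [hF]
        refine Measurable.mul (by fun_prop) (hIm.measurable.enorm.pow_const 2)
    _ ≤ _ := by
        refine Filter.liminf_le_of_le (by isBoundedDefault) fun b hb' => ?_
        obtain ⟨n, hn⟩ := hb'.exists
        exact hn.trans (hb n)

end LargeSieve

section TriangularVolume

theorem Matrix.det_of_blockTriangular_injective {m R : Type*} [Fintype m] [DecidableEq m]
    [CommRing R] (M : Matrix m m R) (b : m → ℕ) (hb : Function.Injective b)
    (h : ∀ i j, b j < b i → M i j = 0) : M.det = ∏ i, M i i := by
  let I : LinearOrder m := LinearOrder.lift' b hb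
  convert Matrix.det_of_isUpperTriangular (m := m) (M := M) (fun i j hij => h i j hij)

theorem volume_abs_mulVec_le {ι : Type*} [Fintype ι] [DecidableEq ι] (A : Matrix ι ι ℝ)
    (hA : A.det ≠ 0) (b : ι → ℝ) :
    volume {x : ι → ℝ | ∀ i, |(A.mulVec x) i| ≤ b i}
      = ENNReal.ofReal |A.det⁻¹| * ∏ i, ENNReal.ofReal (2 * b i) := by
  have h1 : {x : ι → ℝ | ∀ i, |(A.mulVec x) i| ≤ b i}
      = (Matrix.toLin' A) ⁻¹' (Icc (fun i => -b i) b) := by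
    ext x
    simp only [mem_ofPred_eq, mem_preimage, Matrix.toLin'_apply, mem_Icc, Pi.le_def, abs_le]
    exact forall_and
  rw [h1, Measure.addHaar_preimage_linearMap _ (by rwa [LinearMap.det_toLin']),
    LinearMap.det_toLin', Real.volume_Icc_pi]
  congr 1
  refine Finset.prod_congr rfl fun i _ => ?_
  congr 1; ring

end TriangularVolume

instance Idx.instDecidableEq (k : ℕ) : DecidableEq (Idx k) := by unfold Idx; infer_instance

/-- The multi-indices of `Idx k` which involve the second variable. -/
abbrev HighIdx (k : ℕ) : Type := {β : Idx k // 1 ≤ (β.1.2 : ℕ)}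

namespace HighIdx

variable {k : ℕ}

/-- The exponent of the first variable. -/
def e₁ (β : HighIdx k) : ℕ := β.1.1.1

/-- The exponent of the second variable. -/
def e₂ (β : HighIdx k) : ℕ := β.1.1.2

theorem one_le_e₂ (β : HighIdx k) : 1 ≤ β.e₂ := β.2

theorem e₁_add_e₂_le (β : HighIdx k) : β.e₁ + β.e₂ ≤ k := β.1.2.2

theorem ext_e {β γ : HighIdx k} (h₁ : β.e₁ = γ.e₁) (h₂ : β.e₂ = γ.e₂) : β = γ :=
  Subtype.ext (Subtype.ext (Prod.ext (Fin.ext h₁) (Fin.ext h₂)))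

/-- The multi-index with prescribed exponents. -/
def mk' (m l : ℕ) (hl : 1 ≤ l) (h : m + l ≤ k) : HighIdx k :=
  ⟨⟨(⟨m, by omega⟩, ⟨l, by omega⟩), by constructor <;> simp <;> omega⟩, hl⟩

@[simp] theorem e₁_mk' (m l : ℕ) (hl : 1 ≤ l) (h : m + l ≤ k) : (mk' m l hl h).e₁ = m := rfl

@[simp] theorem e₂_mk' (m l : ℕ) (hl : 1 ≤ l) (h : m + l ≤ k) : (mk' m l hl h).e₂ = l := rfl

/-- The node attached to a multi-index. -/
def node (β : HighIdx k) : Fin (k + 1) := ⟨k - β.e₁, by omega⟩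

theorem injective_key₁ : Function.Injective fun β : HighIdx k => β.e₁ * (k + 1) + β.e₂ := by
  intro β γ h
  have h1 := β.e₁_add_e₂_le
  have h2 := γ.e₁_add_e₂_le
  simp only at h
  have : β.e₁ = γ.e₁ := by
    rcases lt_trichotomy β.e₁ γ.e₁ with h' | h' | h'
    · nlinarith
    · exact h'
    · nlinarith
  refine ext_e this ?_
  rw [this] at h; omega

theorem injective_key₂ :
    Function.Injective fun β : HighIdx k => β.e₂ * (k + 1) + (k - β.e₁) := by
  intro β γ h
  have h1 := β.e₁_add_e₂_le
  have h2 := γ.e₁_add_e₂_le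
  simp only at h
  obtain ⟨u, hu⟩ : ∃ u, u = k - β.e₁ := ⟨_, rfl⟩
  obtain ⟨v, hv⟩ : ∃ v, v = k - γ.e₁ := ⟨_, rfl⟩
  rw [← hu, ← hv] at h
  have hu' : u ≤ k := by omega
  have hv' : v ≤ k := by omega
  have h3 : β.e₂ = γ.e₂ := by
    rcases lt_trichotomy β.e₂ γ.e₂ with h' | h' | h'
    · nlinarith
    · exact h'
    · nlinarith
  rw [h3] at h
  exact ext_e (by omega) h3

end HighIdx

/-- The `j`-th normalised `t`-derivative of the part of the phase involving `t`. -/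
def levelDeriv (k : ℕ) (x : HighIdx k → ℝ) (j : ℕ) (s t : ℝ) : ℝ :=
  ∑ β : HighIdx k, x β * (s ^ β.e₁ * (β.e₂.choose j * t ^ (β.e₂ - j)))

section LevelMatrix

open Polynomial HighIdx

variable {k : ℕ}

/-- The Newton polynomial attached to a multi-index. -/
def newtonPoly (s : Fin (k + 1) → ℝ) (β : HighIdx k) : ℝ[X] :=
  ∏ i ∈ Finset.Ioi β.node, (X - C (s i))

theorem monic_newtonPoly (s : Fin (k + 1) → ℝ) (β : HighIdx k) : (newtonPoly s β).Monic :=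
  monic_prod_X_sub_C _ _

theorem natDegree_newtonPoly (s : Fin (k + 1) → ℝ) (β : HighIdx k) :
    (newtonPoly s β).natDegree = β.e₁ := by
  rw [newtonPoly, natDegree_finsetProd_X_sub_C_eq_card, Fin.card_Ioi, node]
  have := β.e₁_add_e₂_le
  simp only; omega

theorem eval_newtonPoly (s : Fin (k + 1) → ℝ) (β : HighIdx k) (u : ℝ) :
    (newtonPoly s β).eval u = ∏ i ∈ Finset.Ioi β.node, (u - s i) := by
  simp [newtonPoly, eval_prod]

theorem eval_newtonPoly_eq_zero (s : Fin (k + 1) → ℝ) (β : HighIdx k) {i : Fin (k + 1)}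
    (hi : β.node < i) : (newtonPoly s β).eval (s i) = 0 := by
  rw [eval_newtonPoly]
  exact Finset.prod_eq_zero (Finset.mem_Ioi.2 hi) (sub_self _)

/-- The change of variables from the Newton basis to the monomial basis. -/
def newtonMatrix (s : Fin (k + 1) → ℝ) : Matrix (HighIdx k) (HighIdx k) ℝ :=
  fun δ γ => if δ.e₂ = γ.e₂ then (newtonPoly s γ).coeff δ.e₁ else 0

theorem det_newtonMatrix (s : Fin (k + 1) → ℝ) : (newtonMatrix s).det = 1 := by
  rw [Matrix.det_of_blockTriangular_injective _ _ injective_key₁]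
  · refine Finset.prod_eq_one fun β _ => ?_
    rw [newtonMatrix, if_pos rfl]
    have := (monic_newtonPoly s β).coeff_natDegree
    rwa [natDegree_newtonPoly] at this
  · intro δ γ h
    rw [newtonMatrix]
    split_ifs with h'
    · apply coeff_eq_zero_of_natDegree_lt
      rw [natDegree_newtonPoly]
      rw [h'] at h
      by_contra hc
      have := Nat.mul_le_mul_right (k + 1) (not_lt.1 hc)
      omega
    · rfl

/-- The row of coefficients of a `t`-derivative of the phase. -/
def levelRow (u v : ℝ) (j : ℕ) (δ : HighIdx k) : ℝ := u ^ δ.e₁ * (δ.e₂.choose j * v ^ (δ.e₂ - j))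

theorem sum_levelRow_mul_newtonMatrix (s : Fin (k + 1) → ℝ) (u v : ℝ) (j : ℕ) (γ : HighIdx k) :
    ∑ δ, levelRow u v j δ * newtonMatrix s δ γ
      = (newtonPoly s γ).eval u * (γ.e₂.choose j * v ^ (γ.e₂ - j)) := by
  have hγ := γ.e₁_add_e₂_le
  have hdeg : (newtonPoly s γ).natDegree < k - γ.e₂ + 1 := by
    rw [natDegree_newtonPoly]; omega
  rw [eval_eq_sum_range' hdeg, Finset.sum_mul]
  have h1 : ∀ δ : HighIdx k, levelRow u v j δ * newtonMatrix s δ γ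
      = if δ.e₂ = γ.e₂ then (newtonPoly s γ).coeff δ.e₁ * u ^ δ.e₁ *
        (γ.e₂.choose j * v ^ (γ.e₂ - j)) else 0 := by
    intro δ
    rw [newtonMatrix, levelRow]
    split_ifs with h
    · rw [h]; ring
    · ring
  simp_rw [h1]
  rw [← Finset.sum_filter]
  refine Finset.sum_bij (fun δ _ => δ.e₁) ?_ ?_ ?_ ?_
  · intro δ hδ
    have := δ.e₁_add_e₂_le
    rw [Finset.mem_filter] at hδ
    rw [Finset.mem_range]; omega
  · intro δ hδ δ' hδ' h
    rw [Finset.mem_filter] at hδ hδ'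
    exact ext_e h (hδ.2.trans hδ'.2.symm)
  · intro m hm
    rw [Finset.mem_range] at hm
    exact ⟨mk' m γ.e₂ γ.one_le_e₂ (by omega), by simp, rfl⟩
  · intro δ _; rfl

end LevelMatrix

section ConstraintVolume

open Polynomial HighIdx

variable {k : ℕ}

/-- The nodes `0`, `1` and all nodes from that of `β` on. -/
def dividedNodes (β : HighIdx k) : Finset (Fin (k + 1)) :=
  insert 0 (insert 1 (insert β.node (Finset.Ioi β.node)))

/-- The divided difference weights. -/
def dividedWeight (s : Fin (k + 1) → ℝ) (I : Finset (Fin (k + 1))) (i : Fin (k + 1)) : ℝ :=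
  (∏ j ∈ I.erase i, (s i - s j))⁻¹

/-- The deviation of `t i` from the affine function interpolating the first two nodes. -/
def affineDefect (s t : Fin (k + 1) → ℝ) (i : Fin (k + 1)) : ℝ :=
  t i - (t 0 + (t 1 - t 0) / (s 1 - s 0) * (s i - s 0))

theorem node_facts (hk : 2 ≤ k) (β : HighIdx k) (h₁ : β.e₁ + β.e₂ = k) (h₂ : 2 ≤ β.e₂) :
    (0 : Fin (k + 1)) < 1 ∧ (1 : Fin (k + 1)) < β.node ∧ (β.node : ℕ) = β.e₂ := by
  obtain ⟨n, rfl⟩ : ∃ n, k = n + 2 := ⟨k - 2, by omega⟩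
  refine ⟨by simp, ?_, ?_⟩
  · simp only [Fin.lt_def, node, Fin.val_one]; omega
  · simp only [node]; omega

theorem sum_dividedWeight_mul_eval_eq_zero {s : Fin (k + 1) → ℝ} (hs : Function.Injective s)
    (I : Finset (Fin (k + 1))) {P : ℝ[X]} (hP : P.natDegree + 1 < I.card) :
    ∑ i ∈ I, dividedWeight s I i * P.eval (s i) = 0 := by
  have h := Lagrange.coeff_eq_sum (s := I) (v := s) hs.injOn (P := P) (by
    refine lt_of_le_of_lt P.degree_le_natDegree ?_
    exact_mod_cast (by omega : P.natDegree < I.card))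
  rw [coeff_eq_zero_of_natDegree_lt (by omega)] at h
  rw [h]
  refine Finset.sum_congr rfl fun i _ => ?_
  rw [dividedWeight, div_eq_inv_mul]

theorem sum_dividedWeight_mul_newtonPoly (hk : 2 ≤ k) {s : Fin (k + 1) → ℝ}
    (hs : Function.Injective s) (t : Fin (k + 1) → ℝ) (β : HighIdx k) (h₁ : β.e₁ + β.e₂ = k)
    (h₂ : 2 ≤ β.e₂) :
    ∑ i ∈ dividedNodes β, dividedWeight s (dividedNodes β) i * ((newtonPoly s β).eval (s i) * t i)
      = affineDefect s t β.node / ((s β.node - s 0) * (s β.node - s 1)) := by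
  obtain ⟨h01, h1n, -⟩ := node_facts hk β h₁ h₂
  obtain ⟨n, hn⟩ : ∃ n, n = β.node := ⟨_, rfl⟩
  have hN : ∀ u, (newtonPoly s β).eval u = ∏ i ∈ Finset.Ioi n, (u - s i) := by
    intro u; rw [eval_newtonPoly, hn]
  have hN0 : ∀ i, i ≤ n → (newtonPoly s β).eval (s i) ≠ 0 := by
    intro i hi
    rw [hN]
    refine Finset.prod_ne_zero_iff.2 fun j hj => sub_ne_zero.2 fun h => ?_
    have := hs h
    rw [Finset.mem_Ioi] at hj
    exact absurd hj (by rw [← this]; exact not_lt.2 hi)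
  rw [← hn] at h1n
  have h0n : (0 : Fin (k + 1)) < n := h01.trans h1n
  have m0 : (0 : Fin (k + 1)) ∉ insert 1 (insert n (Finset.Ioi n)) := by
    simp [h01.ne, h0n.ne']
  have m1 : (1 : Fin (k + 1)) ∉ insert n (Finset.Ioi n) := by simp [h1n]
  have mn : n ∉ Finset.Ioi n := by simp
  have hI : dividedNodes β = insert 0 (insert 1 (insert n (Finset.Ioi n))) := by
    rw [dividedNodes, hn]
  have w0 : dividedWeight s (dividedNodes β) 0 * (newtonPoly s β).eval (s 0)
      = ((s 0 - s 1) * (s 0 - s n))⁻¹ := by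
    rw [dividedWeight, hI, Finset.erase_insert m0, Finset.prod_insert m1, Finset.prod_insert mn,
      ← hN]
    have := hN0 0 h0n.le
    rw [← mul_assoc, mul_inv, mul_assoc, inv_mul_cancel₀ this, mul_one]
  have w1 : dividedWeight s (dividedNodes β) 1 * (newtonPoly s β).eval (s 1)
      = ((s 1 - s 0) * (s 1 - s n))⁻¹ := by
    have e : (insert 0 (insert 1 (insert n (Finset.Ioi n)))).erase (1 : Fin (k + 1))
        = insert 0 (insert n (Finset.Ioi n)) := by
      rw [Finset.erase_insert_of_ne h01.ne, Finset.erase_insert m1]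
    have m0' : (0 : Fin (k + 1)) ∉ insert n (Finset.Ioi n) := by simp [h0n.ne']
    rw [dividedWeight, hI, e, Finset.prod_insert m0', Finset.prod_insert mn, ← hN]
    have := hN0 1 h1n.le
    rw [← mul_assoc, mul_inv, mul_assoc, inv_mul_cancel₀ this, mul_one]
  have wn : dividedWeight s (dividedNodes β) n * (newtonPoly s β).eval (s n)
      = ((s n - s 0) * (s n - s 1))⁻¹ := by
    have e : (insert 0 (insert 1 (insert n (Finset.Ioi n)))).erase n
        = insert 0 (insert 1 (Finset.Ioi n)) := by
      rw [Finset.erase_insert_of_ne h0n.ne, Finset.erase_insert_of_ne h1n.ne,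
        Finset.erase_insert mn]
    have m0' : (0 : Fin (k + 1)) ∉ insert 1 (Finset.Ioi n) := by simp [h01.ne]
    have m1' : (1 : Fin (k + 1)) ∉ Finset.Ioi n := by simp [h1n.le]
    rw [dividedWeight, hI, e, Finset.prod_insert m0', Finset.prod_insert m1', ← hN]
    have := hN0 n le_rfl
    rw [← mul_assoc, mul_inv, mul_assoc, inv_mul_cancel₀ this, mul_one]
  have hrest : ∑ i ∈ Finset.Ioi n, dividedWeight s (dividedNodes β) i *
      ((newtonPoly s β).eval (s i) * t i) = 0 := by
    refine Finset.sum_eq_zero fun i hi => ?_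
    rw [eval_newtonPoly_eq_zero s β (by rw [← hn]; exact Finset.mem_Ioi.1 hi)]; ring
  have hsum : ∀ f : Fin (k + 1) → ℝ, ∑ i ∈ dividedNodes β, f i
      = f 0 + (f 1 + (f n + ∑ i ∈ Finset.Ioi n, f i)) := by
    intro f
    rw [hI, Finset.sum_insert m0, Finset.sum_insert m1, Finset.sum_insert mn]
  rw [hsum, hrest, ← mul_assoc, w0, ← mul_assoc, w1, ← mul_assoc, wn, ← hn, affineDefect]
  have d1 : s 0 - s 1 ≠ 0 := sub_ne_zero.2 (hs.ne h01.ne)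
  have d2 : s 0 - s n ≠ 0 := sub_ne_zero.2 (hs.ne h0n.ne)
  have d3 : s 1 - s n ≠ 0 := sub_ne_zero.2 (hs.ne h1n.ne)
  have d4 : s 1 - s 0 ≠ 0 := sub_ne_zero.2 (hs.ne h01.ne')
  have d5 : s n - s 0 ≠ 0 := sub_ne_zero.2 (hs.ne h0n.ne')
  have d6 : s n - s 1 ≠ 0 := sub_ne_zero.2 (hs.ne h1n.ne')
  have e1 : s 0 - s 1 = -(s 1 - s 0) := by ring
  have e2 : s 0 - s n = -(s n - s 0) := by ring
  have e3 : s 1 - s n = -(s n - s 1) := by ring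
  rw [e1, e2, e3]
  field_simp
  ring

/-- The matrix of the functionals used to bound the constraint set. -/
def constraintMatrix (s t : Fin (k + 1) → ℝ) (b : HighIdx k → Prop) [DecidablePred b] :
    Matrix (HighIdx k) (HighIdx k) ℝ := fun β δ =>
  if b β then ∑ i ∈ dividedNodes β, dividedWeight s (dividedNodes β) i *
    levelRow (s i) (t i) (β.e₂ - 1) δ
  else levelRow (s β.node) (t β.node) β.e₂ δ

theorem constraintMatrix_mul_newtonMatrix (s t : Fin (k + 1) → ℝ) (b : HighIdx k → Prop)
    [DecidablePred b] (β γ : HighIdx k) :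
    (constraintMatrix s t b * newtonMatrix s) β γ =
      if b β then ∑ i ∈ dividedNodes β, dividedWeight s (dividedNodes β) i *
        ((newtonPoly s γ).eval (s i) * (γ.e₂.choose (β.e₂ - 1) * t i ^ (γ.e₂ - (β.e₂ - 1))))
      else (newtonPoly s γ).eval (s β.node) *
        (γ.e₂.choose β.e₂ * t β.node ^ (γ.e₂ - β.e₂)) := by
  rw [Matrix.mul_apply]
  by_cases hb : b β
  · simp_rw [constraintMatrix, if_pos hb, Finset.sum_mul]
    rw [Finset.sum_comm]
    refine Finset.sum_congr rfl fun i _ => ?_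
    rw [← sum_levelRow_mul_newtonMatrix, Finset.mul_sum]
    simp_rw [mul_assoc]
  · simp_rw [constraintMatrix, if_neg hb]
    exact sum_levelRow_mul_newtonMatrix s _ _ _ _

theorem card_dividedNodes (hk : 2 ≤ k) (β : HighIdx k) (h₁ : β.e₁ + β.e₂ = k) (h₂ : 2 ≤ β.e₂) :
    (dividedNodes β).card = k + 3 - β.e₂ := by
  obtain ⟨h01, h1n, hn⟩ := node_facts hk β h₁ h₂
  have h0n := h01.trans h1n
  rw [dividedNodes, Finset.card_insert_of_notMem (by simp [h01.ne, h0n.ne']),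
    Finset.card_insert_of_notMem (by simp [h1n]),
    Finset.card_insert_of_notMem (by simp), Fin.card_Ioi]
  omega

theorem det_constraintMatrix (hk : 2 ≤ k) {s : Fin (k + 1) → ℝ} (hs : Function.Injective s)
    (t : Fin (k + 1) → ℝ) (b : HighIdx k → Prop) [DecidablePred b]
    (hb : ∀ β, b β → β.e₁ + β.e₂ = k ∧ 2 ≤ β.e₂) :
    (constraintMatrix s t b).det = ∏ β : HighIdx k,
      if b β then β.e₂ * (affineDefect s t β.node / ((s β.node - s 0) * (s β.node - s 1)))
      else (newtonPoly s β).eval (s β.node) := by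
  have h1 : (constraintMatrix s t b).det = (constraintMatrix s t b * newtonMatrix s).det := by
    rw [Matrix.det_mul, det_newtonMatrix, mul_one]
  rw [h1, Matrix.det_of_blockTriangular_injective _ _ injective_key₂]
  · refine Finset.prod_congr rfl fun β _ => ?_
    rw [constraintMatrix_mul_newtonMatrix]
    split_ifs with hβ
    · obtain ⟨h₁, h₂⟩ := hb β hβ
      rw [← sum_dividedWeight_mul_newtonPoly hk hs t β h₁ h₂, Finset.mul_sum]
      refine Finset.sum_congr rfl fun i _ => ?_
      have e1 : β.e₂.choose (β.e₂ - 1) = β.e₂ := by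
        conv_lhs => rw [← Nat.sub_add_cancel β.one_le_e₂]
        rw [Nat.add_sub_cancel, Nat.choose_succ_self_right]
        have := β.one_le_e₂
        omega
      have e2 : β.e₂ - (β.e₂ - 1) = 1 := by omega
      rw [e1, e2]; ring
    · simp
  · intro β γ h
    have hβ := β.e₁_add_e₂_le
    have hγ := γ.e₁_add_e₂_le
    have hle : γ.e₂ ≤ β.e₂ := by
      by_contra hc
      have := Nat.mul_le_mul_right (k + 1) (Nat.succ_le_of_lt (not_le.1 hc))
      rw [Nat.succ_mul] at this
      omega
    rw [constraintMatrix_mul_newtonMatrix]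
    split_ifs with hβ'
    · obtain ⟨h₁, h₂⟩ := hb β hβ'
      have hlt : γ.e₂ < β.e₂ := by
        rcases hle.lt_or_eq with h' | h'
        · exact h'
        · rw [h'] at h; omega
      rcases Nat.lt_or_ge γ.e₂ (β.e₂ - 1) with h' | h'
      · refine Finset.sum_eq_zero fun i _ => ?_
        rw [Nat.choose_eq_zero_of_lt h']; simp
      · have e : γ.e₂ = β.e₂ - 1 := by omega
        rw [e]
        simp only [Nat.choose_self, Nat.sub_self, pow_zero, Nat.cast_one, mul_one]
        apply sum_dividedWeight_mul_eval_eq_zero hs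
        rw [natDegree_newtonPoly, card_dividedNodes hk β h₁ h₂]
        omega
    · rcases hle.lt_or_eq with h' | h'
      · rw [Nat.choose_eq_zero_of_lt h']; simp
      · rw [eval_newtonPoly_eq_zero s γ, zero_mul]
        rw [h'] at h
        simp only [Fin.lt_def, node]
        omega

theorem pow_card_le_prod_abs {ι : Type*} {g : ℝ} (hg : 0 < g) (hg1 : g ≤ 1) {I : Finset ι}
    {f : ι → ℝ} {n : ℕ} (hn : I.card ≤ n) (hf : ∀ i ∈ I, g ≤ |f i|) : g ^ n ≤ |∏ i ∈ I, f i| := by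
  rw [Finset.abs_prod]
  calc g ^ n ≤ g ^ I.card := pow_le_pow_of_le_one hg.le hg1 hn
    _ = ∏ i ∈ I, g := by rw [Finset.prod_const]
    _ ≤ _ := Finset.prod_le_prod (fun _ _ => hg.le) hf

theorem abs_constraintMatrix_mulVec_le {s t : Fin (k + 1) → ℝ} {g K a : ℝ} (hg : 0 < g)
    (hg1 : g ≤ 1) (hs : ∀ i j, i ≠ j → g ≤ |s i - s j|) (hK : 0 ≤ K) (ha : 0 < a)
    (b : HighIdx k → Prop) [DecidablePred b] (hb : ∀ β, b β → 2 ≤ β.e₂)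
    {x : HighIdx k → ℝ}
    (hx : ∀ i, ∀ j, 1 ≤ j → j ≤ k → |levelDeriv k x j (s i) (t i)| ≤ K / a ^ j) (β : HighIdx k) :
    |(constraintMatrix s t b).mulVec x β| ≤
      if b β then (k + 1) * (g⁻¹) ^ (k + 1) * (K / a ^ (β.e₂ - 1)) else K / a ^ β.e₂ := by
  have hβ := β.e₁_add_e₂_le
  have hrow : ∀ u v j, ∑ δ, levelRow u v j δ * x δ = levelDeriv k x j u v := by
    intro u v j
    rw [levelDeriv]
    exact Finset.sum_congr rfl fun δ _ => by rw [levelRow]; ring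
  rw [Matrix.mulVec, dotProduct]
  by_cases h : b β
  · simp_rw [constraintMatrix, if_pos h, Finset.sum_mul]
    rw [Finset.sum_comm]
    simp_rw [mul_assoc, ← Finset.mul_sum, hrow]
    have h2 := hb β h
    have hKa : 0 ≤ K / a ^ (β.e₂ - 1) := by positivity
    calc _ ≤ ∑ i ∈ dividedNodes β, |dividedWeight s (dividedNodes β) i *
            levelDeriv k x (β.e₂ - 1) (s i) (t i)| := Finset.abs_sum_le_sum_abs _ _
      _ ≤ ∑ i ∈ dividedNodes β, (g⁻¹) ^ (k + 1) * (K / a ^ (β.e₂ - 1)) := by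
          refine Finset.sum_le_sum fun i _ => ?_
          rw [abs_mul]
          refine mul_le_mul ?_ (hx i _ (by omega) (by omega)) (abs_nonneg _) (by positivity)
          rw [dividedWeight, abs_inv, inv_pow]
          refine inv_anti₀ (by positivity) (pow_card_le_prod_abs hg hg1 ?_ ?_)
          · exact (Finset.card_le_univ _).trans (by simp)
          · exact fun j hj => hs i j (Finset.ne_of_mem_erase hj).symm
      _ = ((dividedNodes β).card : ℝ) * ((g⁻¹) ^ (k + 1) * (K / a ^ (β.e₂ - 1))) := by
          rw [Finset.sum_const, nsmul_eq_mul]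
      _ ≤ ((k : ℝ) + 1) * ((g⁻¹) ^ (k + 1) * (K / a ^ (β.e₂ - 1))) := by
          refine mul_le_mul_of_nonneg_right ?_ (by positivity)
          have : (dividedNodes β).card ≤ k + 1 := (Finset.card_le_univ _).trans (by simp)
          exact_mod_cast this
  · simp_rw [constraintMatrix, if_neg h, hrow]
    exact hx _ _ β.one_le_e₂ (by omega)

theorem two_mul_mul_abs_inv_le_of_defect {C K a τ u v : ℝ} {n : ℕ} (hn : 1 ≤ n) (hC : 0 ≤ C)
    (hK : 0 ≤ K) (ha : 0 < a) (hτ : a < |τ|) (hu : 0 < |u|) (hu1 : |u| ≤ 1) (hv : 0 < |v|)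
    (hv1 : |v| ≤ 1) :
    n * (τ / (u * v)) ≠ 0 ∧ 2 * (C * (K / a ^ (n - 1))) * |(n * (τ / (u * v)))⁻¹|
      ≤ 2 * (C * K) * (a ^ n)⁻¹ * (a / max a |τ|) := by
  have hτ0 : 0 < |τ| := ha.trans hτ
  have h1 : (1 : ℝ) ≤ |(n : ℝ)| := by
    rw [Nat.abs_cast]; exact_mod_cast hn
  have h2 : |τ| ≤ |τ| / (|u| * |v|) := by
    rw [le_div_iff₀ (mul_pos hu hv)]
    exact mul_le_of_le_one_right hτ0.le (mul_le_one₀ hu1 hv.le hv1)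
  have hd : |τ| ≤ |n * (τ / (u * v))| := by
    rw [abs_mul, abs_div, abs_mul]
    exact h2.trans (le_mul_of_one_le_left (hτ0.le.trans h2) h1)
  refine ⟨abs_pos.1 (hτ0.trans_le hd), ?_⟩
  have hpow : a ^ n = a ^ (n - 1) * a := by
    rw [← pow_succ]; congr 1; omega
  rw [max_eq_right hτ.le, abs_inv]
  calc _ ≤ 2 * (C * (K / a ^ (n - 1))) * |τ|⁻¹ :=
        mul_le_mul_of_nonneg_left (inv_anti₀ hτ0 hd) (by positivity)
    _ = _ := by
        rw [hpow]
        field_simp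

theorem two_mul_mul_abs_inv_le_of_pow {g K a d : ℝ} {n m : ℕ} (hg : 0 < g) (hK : 0 ≤ K)
    (ha : 0 < a) (hd : g ^ m ≤ |d|) :
    d ≠ 0 ∧ 2 * (K / a ^ n) * |d⁻¹| ≤ 2 * ((k + 1) * (g⁻¹) ^ m * K) * (a ^ n)⁻¹ := by
  have hgm : 0 < g ^ m := pow_pos hg m
  refine ⟨abs_pos.1 (hgm.trans_le hd), ?_⟩
  rw [abs_inv, inv_pow]
  calc 2 * (K / a ^ n) * |d|⁻¹ ≤ 2 * (K / a ^ n) * (g ^ m)⁻¹ :=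
        mul_le_mul_of_nonneg_left (inv_anti₀ hgm hd) (by positivity)
    _ ≤ (k + 1) * (2 * (K / a ^ n) * (g ^ m)⁻¹) :=
        le_mul_of_one_le_left (by positivity) (by linarith [(Nat.cast_nonneg k : (0 : ℝ) ≤ k)])
    _ = _ := by
        rw [div_eq_mul_inv]; ring

/-- The measure of the set of coefficients satisfying all derivative constraints. -/
theorem volume_levelDeriv_le (hk : 2 ≤ k) {g K : ℝ} (hg : 0 < g) (hg1 : g ≤ 1) (hK : 0 ≤ K) :
    ∃ C : ℝ, 0 ≤ C ∧ ∀ s t : Fin (k + 1) → ℝ, (∀ i, s i ∈ Icc (0 : ℝ) 1) →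
      (∀ i j, i ≠ j → g ≤ |s i - s j|) → ∀ a : ℝ, 0 < a →
      volume {x : HighIdx k → ℝ | ∀ i, ∀ j, 1 ≤ j → j ≤ k →
        |levelDeriv k x j (s i) (t i)| ≤ K / a ^ j}
      ≤ ENNReal.ofReal (C * (∏ β : HighIdx k, (a ^ β.e₂)⁻¹) *
          ∏ i ∈ Finset.univ.filter (fun i : Fin (k + 1) => 2 ≤ (i : ℕ)),
            a / max a |affineDefect s t i|) := by
  obtain ⟨C₀, hC₀⟩ : ∃ C₀ : ℝ, C₀ = 2 * ((k + 1) * (g⁻¹) ^ (k + 1) * K) := ⟨_, rfl⟩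
  have hC₀0 : 0 ≤ C₀ := by rw [hC₀]; positivity
  refine ⟨C₀ ^ Fintype.card (HighIdx k), by positivity, fun s t hs01 hs a ha => ?_⟩
  have hinj : Function.Injective s := by
    intro i j hij
    by_contra hne
    have := hs i j hne
    rw [hij, sub_self, abs_zero] at this
    linarith
  classical
  obtain ⟨b, hb⟩ : ∃ b : HighIdx k → Prop, b = fun β => (β.e₁ + β.e₂ = k ∧ 2 ≤ β.e₂) ∧
    a < |affineDefect s t β.node| := ⟨_, rfl⟩
  have hb1 : ∀ β, b β → β.e₁ + β.e₂ = k ∧ 2 ≤ β.e₂ := fun β h => by rw [hb] at h; exact h.1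
  have hdet := det_constraintMatrix hk hinj t b hb1
  obtain ⟨d, hd⟩ : ∃ d : HighIdx k → ℝ, d = fun β => if b β then
      β.e₂ * (affineDefect s t β.node / ((s β.node - s 0) * (s β.node - s 1)))
      else (newtonPoly s β).eval (s β.node) := ⟨_, rfl⟩
  have hdet' : (constraintMatrix s t b).det = ∏ β, d β := by rw [hdet, hd]
  obtain ⟨c, hc⟩ : ∃ c : HighIdx k → ℝ, c = fun β => if b β then
      (k + 1) * (g⁻¹) ^ (k + 1) * (K / a ^ (β.e₂ - 1)) else K / a ^ β.e₂ := ⟨_, rfl⟩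
  obtain ⟨w, hw⟩ : ∃ w : HighIdx k → ℝ, w = fun β => if β.e₁ + β.e₂ = k ∧ 2 ≤ β.e₂ then
      a / max a |affineDefect s t β.node| else 1 := ⟨_, rfl⟩
  have hd0 : ∀ β, d β ≠ 0 ∧ 2 * c β * |(d β)⁻¹| ≤ C₀ * (a ^ β.e₂)⁻¹ * w β := by
    intro β
    by_cases h : b β
    · have h' := hb1 β h
      obtain ⟨h01, h1n, -⟩ := node_facts hk β h'.1 h'.2
      have hlt : a < |affineDefect s t β.node| := by rw [hb] at h; exact h.2
      have hsub : ∀ i j, |s i - s j| ≤ 1 := fun i j => by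
        rw [abs_le]; constructor <;> linarith [(hs01 i).1, (hs01 i).2, (hs01 j).1, (hs01 j).2]
      rw [hd, hc, hw, hC₀]
      simp only [if_pos h, if_pos h']
      exact two_mul_mul_abs_inv_le_of_defect β.one_le_e₂ (by positivity) hK ha hlt
        (hg.trans_le (hs _ _ (h01.trans h1n).ne')) (hsub _ _)
        (hg.trans_le (hs _ _ h1n.ne')) (hsub _ _)
    · have hw' : w β = 1 := by
        rw [hw]; simp only
        split_ifs with h'
        · have : |affineDefect s t β.node| ≤ a := by
            rw [hb] at h
            exact not_lt.1 fun h'' => h ⟨h', h''⟩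
          rw [max_eq_left this, div_self ha.ne']
        · rfl
      rw [hw', mul_one, hd, hc, hC₀]
      simp only [if_neg h]
      refine two_mul_mul_abs_inv_le_of_pow hg hK ha ?_
      rw [eval_newtonPoly]
      refine pow_card_le_prod_abs hg hg1 ((Finset.card_le_univ _).trans (by simp)) ?_
      intro i hi
      exact hs _ _ (Finset.mem_Ioi.1 hi).ne
  have hdetne : (constraintMatrix s t b).det ≠ 0 := by
    rw [hdet']; exact Finset.prod_ne_zero_iff.2 fun β _ => (hd0 β).1
  have hc0 : ∀ β, 0 ≤ c β := by
    intro β; rw [hc]; simp only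
    have h0 : ∀ n, 0 ≤ K / a ^ n := fun n => div_nonneg hK (pow_nonneg ha.le n)
    split_ifs
    · exact mul_nonneg (mul_nonneg (add_nonneg k.cast_nonneg zero_le_one)
        (pow_nonneg (inv_nonneg.2 hg.le) _)) (h0 _)
    · exact h0 _
  calc _ ≤ volume {x : HighIdx k → ℝ | ∀ β, |(constraintMatrix s t b).mulVec x β| ≤ c β} := by
        refine measure_mono fun x hx β => ?_
        rw [hc]
        exact abs_constraintMatrix_mulVec_le hg hg1 hs hK ha b (fun β h => (hb1 β h).2) hx β
    _ = ENNReal.ofReal (∏ β, (2 * c β * |(d β)⁻¹|)) := by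
        rw [volume_abs_mulVec_le _ hdetne, hdet', ← ENNReal.ofReal_prod_of_nonneg
          (fun β _ => mul_nonneg zero_le_two (hc0 β)), ← ENNReal.ofReal_mul (abs_nonneg _),
          mul_comm, ← Finset.prod_inv_distrib, Finset.abs_prod, ← Finset.prod_mul_distrib]
    _ ≤ ENNReal.ofReal (∏ β, (C₀ * (a ^ β.e₂)⁻¹ * w β)) := by
        refine ENNReal.ofReal_le_ofReal (Finset.prod_le_prod (fun β _ => ?_) fun β _ => (hd0 β).2)
        exact mul_nonneg (mul_nonneg zero_le_two (hc0 β)) (abs_nonneg _)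
    _ = _ := by
        rw [Finset.prod_mul_distrib, Finset.prod_mul_distrib, Finset.prod_const, Finset.card_univ]
        congr 2
        rw [hw, ← Finset.prod_filter]
        refine Finset.prod_bij (fun β _ => β.node) ?_ ?_ ?_ ?_
        · intro β hβ
          rw [Finset.mem_filter] at hβ ⊢
          refine ⟨Finset.mem_univ _, ?_⟩
          simp only [node]; omega
        · intro β hβ β' hβ' h
          rw [Finset.mem_filter] at hβ hβ'
          have h1 := congrArg Fin.val h
          simp only [node] at h1
          have := β.e₁_add_e₂_le
          have := β'.e₁_add_e₂_le
          exact ext_e (by omega) (by omega)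
        · intro i hi
          rw [Finset.mem_filter] at hi
          have := i.2
          refine ⟨mk' (k - i) i (by omega) (by omega), ?_, ?_⟩
          · rw [Finset.mem_filter]
            simp only [Finset.mem_univ, e₁_mk', e₂_mk', true_and]
            omega
          · ext
            simp only [node, e₁_mk']; omega
        · intro β _; rfl

end ConstraintVolume

section PowerSums

open Polynomial

/-- A polynomial with prescribed signs on a sequence of separated intervals. -/
theorem exists_polynomial_sign_pattern (n : ℕ) {lo hi : ℕ → ℝ} {ρ : ℝ} (hρ : 0 < ρ)
    (hle : ∀ i, lo i ≤ hi i) (hsep : ∀ i j, i < j → hi i + ρ ≤ lo j)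
    (ε : ℕ → ℝ) (hε : ∀ i, ε i = 1 ∨ ε i = -1) :
    ∃ h : ℝ[X], h.natDegree ≤ n ∧ ∀ j ≤ n, ∀ u ∈ Icc (lo j) (hi j),
      (min 1 (ρ / 2)) ^ n ≤ ε j * h.eval u := by
  have hε2 : ∀ i, ε i * ε i = 1 := fun i => by rcases hε i with h | h <;> rw [h] <;> norm_num
  obtain ⟨f, hf⟩ : ∃ f : ℕ → ℝ[X], f = fun i => if ε i = ε (i + 1) then 1
    else C (hi i + ρ / 2) - X := ⟨_, rfl⟩
  refine ⟨C (ε 0) * ∏ i ∈ Finset.range n, f i, ?_, ?_⟩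
  · refine (natDegree_C_mul_le _ _).trans ((natDegree_prod_le _ _).trans ?_)
    calc _ ≤ ∑ _i ∈ Finset.range n, 1 := by
          refine Finset.sum_le_sum fun i _ => ?_
          rw [hf]; simp only
          split_ifs
          · simp
          · exact (natDegree_sub_le _ _).trans (by simp)
      _ = n := by simp
  · intro j hj u hu
    have htel : ∀ j, ε j * ε 0 = ∏ i ∈ Finset.range j, (ε i * ε (i + 1)) := by
      intro j
      induction j with
      | zero => simp [hε2]
      | succ j ih =>
        rw [Finset.prod_range_succ, ← ih]
        linear_combination (-ε 0 * ε (j + 1)) * hε2 j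
    have h1 : ε j * (C (ε 0) * ∏ i ∈ Finset.range n, f i).eval u
        = ∏ i ∈ Finset.range n, ((if i < j then ε i * ε (i + 1) else 1) * (f i).eval u) := by
      have h2 : ∏ i ∈ Finset.range j, (ε i * ε (i + 1))
          = ∏ i ∈ Finset.range n, if i < j then ε i * ε (i + 1) else 1 := by
        rw [← Finset.prod_filter]
        congr 1
        ext i; simp only [Finset.mem_range, Finset.mem_filter]; omega
      rw [eval_mul, eval_C, eval_prod, ← mul_assoc, htel, h2, ← Finset.prod_mul_distrib]
    rw [h1]
    calc (min 1 (ρ / 2)) ^ n = ∏ _i ∈ Finset.range n, min 1 (ρ / 2) := by simp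
      _ ≤ _ := by
        refine Finset.prod_le_prod (fun _ _ => by positivity) fun i _ => ?_
        rw [hf]; simp only
        by_cases he : ε i = ε (i + 1)
        · rw [if_pos he, ← he, hε2]; simp
        · have hm : ε i * ε (i + 1) = -1 := by
            rcases hε i with h | h <;> rcases hε (i + 1) with h' | h'
            · exact absurd (h.trans h'.symm) he
            · rw [h, h']; norm_num
            · rw [h, h']; norm_num
            · exact absurd (h.trans h'.symm) he
          rw [if_neg he, hm]
          simp only [eval_sub, eval_C, eval_X]
          refine (min_le_right _ _).trans ?_
          split_ifs with hij
          · have := hsep i j hij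
            linarith [hu.1]
          · have : hi j ≤ hi i := by
              rcases (not_lt.1 hij).eq_or_lt with h | h
              · rw [h]
              · linarith [hsep j i h, hle i]
            linarith [hu.2]

theorem intervalIntegral_polynomial_eval {h : ℝ[X]} {n : ℕ} (hn : h.natDegree < n) (a b : ℝ) :
    ∫ u in a..b, h.eval u
      = ∑ m ∈ Finset.range n, h.coeff m * ((b ^ (m + 1) - a ^ (m + 1)) / (m + 1)) := by
  simp_rw [eval_eq_sum_range' hn]
  rw [intervalIntegral.integral_finsetSum fun i _ =>
    Continuous.intervalIntegrable (by fun_prop) _ _]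
  refine Finset.sum_congr rfl fun m _ => ?_
  rw [intervalIntegral.integral_const_mul, integral_pow]

theorem mul_abs_sub_le_intervalIntegral {h : ℝ[X]} {lo hi a b c : ℝ} {ε : ℝ}
    (ha : a ∈ Icc lo hi) (hb : b ∈ Icc lo hi) (hε : ε = if a ≤ b then 1 else -1)
    (hc : ∀ u ∈ Icc lo hi, c ≤ ε * h.eval u) :
    c * |b - a| ≤ ∫ u in a..b, h.eval u := by
  have key : ∀ a b : ℝ, a ∈ Icc lo hi → b ∈ Icc lo hi → a ≤ b → ∀ q : ℝ[X],
      (∀ u ∈ Icc lo hi, c ≤ q.eval u) → c * (b - a) ≤ ∫ u in a..b, q.eval u := by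
    intro a b ha hb hab q hq
    calc c * (b - a) = ∫ _u in a..b, c := by simp [mul_comm]
      _ ≤ _ := intervalIntegral.integral_mono_on hab (by simp)
        (q.continuous.intervalIntegrable _ _) fun u hu =>
          hq u ⟨ha.1.trans hu.1, hu.2.trans hb.2⟩
  by_cases hab : a ≤ b
  · rw [abs_of_nonneg (by linarith)]
    refine key a b ha hb hab h fun u hu => ?_
    have := hc u hu
    rwa [hε, if_pos hab, one_mul] at this
  · rw [abs_of_neg (by linarith)]
    have h1 := key b a hb ha (not_le.1 hab).le (-h) fun u hu => by
      have := hc u hu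
      rwa [hε, if_neg hab, neg_one_mul, ← eval_neg] at this
    rw [intervalIntegral.integral_symm]
    simp only [eval_neg, intervalIntegral.integral_neg] at h1
    linarith

/-- The power sum map expands distances on products of separated intervals. -/
theorem exists_powerSum_separation (n : ℕ) {lo hi : ℕ → ℝ} {ρ : ℝ} (hρ : 0 < ρ)
    (hle : ∀ i, lo i ≤ hi i) (hsep : ∀ i j, i < j → hi i + ρ ≤ lo j) :
    ∃ c : ℝ, 0 < c ∧ ∀ s s' : Fin n → ℝ, (∀ i : Fin n, s i ∈ Icc (lo i) (hi i)) →
      (∀ i : Fin n, s' i ∈ Icc (lo i) (hi i)) →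
      c * ∑ m, (s m - s' m) ^ 2
        ≤ ∑ m : Fin n, (∑ i, s i ^ ((m : ℕ) + 1) - ∑ i, s' i ^ ((m : ℕ) + 1)) ^ 2 := by
  rcases Nat.eq_zero_or_pos n with rfl | hn
  · exact ⟨1, one_pos, fun s s' _ _ => by simp⟩
  obtain ⟨sg, hsg⟩ : ∃ sg : (Fin n → Bool) → ℕ → ℝ, sg = fun e i =>
    if h : i < n then (if e ⟨i, h⟩ then 1 else -1) else 1 := ⟨_, rfl⟩
  have hsg1 : ∀ e i, sg e i = 1 ∨ sg e i = -1 := by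
    intro e i; rw [hsg]; simp only
    split_ifs <;> simp
  choose P hPd hP using fun e : Fin n → Bool =>
    exists_polynomial_sign_pattern (n - 1) hρ hle hsep (sg e) (hsg1 e)
  obtain ⟨c₀, hc₀⟩ : ∃ c₀ : ℝ, c₀ = (min 1 (ρ / 2)) ^ (n - 1) := ⟨_, rfl⟩
  have hc₀p : 0 < c₀ := by rw [hc₀]; positivity
  obtain ⟨B, hB⟩ : ∃ B : ℝ, B = 1 + ∑ e : Fin n → Bool, ∑ m ∈ Finset.range n, |(P e).coeff m| :=
    ⟨_, rfl⟩
  have hBp : 0 < B := by rw [hB]; positivity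
  have hBc : ∀ e, ∀ m < n, |(P e).coeff m| ≤ B := by
    intro e m hm
    have h1 : |(P e).coeff m| ≤ ∑ m ∈ Finset.range n, |(P e).coeff m| :=
      Finset.single_le_sum (f := fun m => |(P e).coeff m|) (fun _ _ => abs_nonneg _)
        (Finset.mem_range.2 hm)
    have h2 : ∑ m ∈ Finset.range n, |(P e).coeff m|
        ≤ ∑ e : Fin n → Bool, ∑ m ∈ Finset.range n, |(P e).coeff m| :=
      Finset.single_le_sum (f := fun e => ∑ m ∈ Finset.range n, |(P e).coeff m|)
        (fun _ _ => by positivity) (Finset.mem_univ e)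
    rw [hB]; linarith
  refine ⟨(c₀ / B) ^ 2 / n, by positivity, fun s s' hs hs' => ?_⟩
  obtain ⟨D, hD⟩ : ∃ D : ℕ → ℝ, D = fun m => ∑ i, s i ^ (m + 1) - ∑ i, s' i ^ (m + 1) :=
    ⟨_, rfl⟩
  obtain ⟨e, he⟩ : ∃ e : Fin n → Bool, e = fun i => decide (s' i ≤ s i) := ⟨_, rfl⟩
  have hint : ∀ i, c₀ * |s i - s' i| ≤ ∫ u in (s' i)..(s i), (P e).eval u := by
    intro i
    refine mul_abs_sub_le_intervalIntegral (ε := sg e i) (hs' i) (hs i) ?_ ?_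
    · rw [hsg, he]; simp
    · intro u hu
      rw [hc₀]
      exact hP e i (by omega) u hu
  have hlt : (P e).natDegree < n := (hPd e).trans_lt (by omega)
  have hsum : ∑ i, ∫ u in (s' i)..(s i), (P e).eval u
      = ∑ m ∈ Finset.range n, (P e).coeff m * (D m / (m + 1)) := by
    simp_rw [intervalIntegral_polynomial_eval hlt]
    rw [Finset.sum_comm]
    refine Finset.sum_congr rfl fun m _ => ?_
    rw [← Finset.mul_sum, ← Finset.sum_div, Finset.sum_sub_distrib, hD]
  have h1 : c₀ * ∑ i, |s i - s' i| ≤ B * ∑ m ∈ Finset.range n, |D m| := by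
    rw [Finset.mul_sum, Finset.mul_sum]
    calc _ ≤ ∑ i, ∫ u in (s' i)..(s i), (P e).eval u := Finset.sum_le_sum fun i _ => hint i
      _ ≤ |∑ m ∈ Finset.range n, (P e).coeff m * (D m / (m + 1))| := by
          rw [hsum]; exact le_abs_self _
      _ ≤ ∑ m ∈ Finset.range n, |(P e).coeff m * (D m / (m + 1))| :=
          Finset.abs_sum_le_sum_abs _ _
      _ ≤ _ := by
          refine Finset.sum_le_sum fun m hm => ?_
          rw [abs_mul, abs_div]
          refine mul_le_mul (hBc e m (Finset.mem_range.1 hm)) ?_ (by positivity) hBp.le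
          refine div_le_self (abs_nonneg _) ?_
          rw [abs_of_nonneg (by positivity)]
          linarith [(Nat.cast_nonneg m : (0 : ℝ) ≤ m)]
  have h2 : ∑ m : Fin n, (∑ i, s i ^ ((m : ℕ) + 1) - ∑ i, s' i ^ ((m : ℕ) + 1)) ^ 2
      = ∑ m ∈ Finset.range n, |D m| ^ 2 := by
    rw [Finset.sum_range]
    simp_rw [sq_abs, hD]
  have h3 : ∑ m, (s m - s' m) ^ 2 ≤ (∑ i, |s i - s' i|) ^ 2 := by
    simp_rw [← sq_abs (s _ - s' _)]
    exact Finset.sum_sq_le_sq_sum_of_nonneg fun _ _ => abs_nonneg _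
  have h4 : (∑ m ∈ Finset.range n, |D m|) ^ 2 ≤ n * ∑ m ∈ Finset.range n, |D m| ^ 2 := by
    have := sq_sum_le_card_mul_sum_sq (s := Finset.range n) (f := fun m => |D m|)
    simpa using this
  rw [h2]
  have hn' : (0 : ℝ) < n := by exact_mod_cast hn
  have h5 : (c₀ * ∑ i, |s i - s' i|) ^ 2 ≤ (B * ∑ m ∈ Finset.range n, |D m|) ^ 2 :=
    pow_le_pow_left₀ (by positivity) h1 2
  rw [mul_pow, mul_pow] at h5
  have h6 : c₀ ^ 2 * ∑ m, (s m - s' m) ^ 2 ≤ B ^ 2 * (n * ∑ m ∈ Finset.range n, |D m| ^ 2) :=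
    (mul_le_mul_of_nonneg_left h3 (by positivity)).trans
      (h5.trans (mul_le_mul_of_nonneg_left h4 (by positivity)))
  have e1 : (c₀ / B) ^ 2 / n * ∑ m, (s m - s' m) ^ 2
      = (c₀ ^ 2 * ∑ m, (s m - s' m) ^ 2) / (B ^ 2 * n) := by
    field_simp
  rw [e1, div_le_iff₀ (by positivity)]
  linarith

end PowerSums

section Counting

theorem sum_range_mul_sub (K : ℝ) (n : ℕ) :
    ∑ i ∈ Finset.range n, (i : ℝ) * (K - i) = K * (n * (n - 1) / 2) - n * (n - 1) * (2 * n - 1) / 6 := by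
  induction n with
  | zero => simp
  | succ n ih => rw [Finset.sum_range_succ, ih]; push_cast; ring

theorem sum_ite_add_le (k : ℕ) :
    ∑ i ∈ Finset.range (k + 1), ∑ j ∈ Finset.range (k + 1),
      (if 1 ≤ i + j ∧ i + j ≤ k then (i : ℝ) else 0) = (k : ℝ) * (k + 1) * (k + 2) / 6 := by
  have h : ∀ i ∈ Finset.range (k + 1), ∑ j ∈ Finset.range (k + 1),
      (if 1 ≤ i + j ∧ i + j ≤ k then (i : ℝ) else 0) = (i : ℝ) * ((k + 1 : ℝ) - i) := by
    intro i hi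
    rcases Nat.eq_zero_or_pos i with rfl | hi0
    · simp
    have hi' : i ≤ k + 1 := (Finset.mem_range.1 hi).le
    have e : Finset.filter (fun j => 1 ≤ i + j ∧ i + j ≤ k) (Finset.range (k + 1))
        = Finset.range (k + 1 - i) := by
      ext j; simp only [Finset.mem_filter, Finset.mem_range]; omega
    rw [← Finset.sum_filter, e, Finset.sum_const, Finset.card_range, nsmul_eq_mul,
      Nat.cast_sub hi']
    push_cast; ring
  rw [Finset.sum_congr rfl h, sum_range_mul_sub]
  push_cast; ring

theorem Idx.sum_eq (k : ℕ) (f : ℕ → ℕ → ℝ) :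
    ∑ β : Idx k, f β.1.1 β.1.2 = ∑ i ∈ Finset.range (k + 1), ∑ j ∈ Finset.range (k + 1),
      (if 1 ≤ i + j ∧ i + j ≤ k then f i j else 0) := by
  rw [Finset.sum_range]
  simp_rw [Finset.sum_range]
  rw [← Fintype.sum_prod_type' (f := fun (i j : Fin (k + 1)) =>
    if 1 ≤ (i : ℕ) + j ∧ (i : ℕ) + j ≤ k then f i j else 0), ← Finset.sum_filter]
  symm
  refine Finset.sum_subtype (F := (inferInstance : Fintype (Idx k)))
    (p := fun β : Fin (k + 1) × Fin (k + 1) => 1 ≤ (β.1 : ℕ) + β.2 ∧ (β.1 : ℕ) + β.2 ≤ k)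
    _ (fun β => ?_) (fun β : Fin (k + 1) × Fin (k + 1) => f β.1 β.2)
  simp

theorem Idx.sum_fst (k : ℕ) :
    ∑ β : Idx k, ((β.1.1 : ℕ) : ℝ) = (k : ℝ) * (k + 1) * (k + 2) / 6 :=
  (Idx.sum_eq k fun i _ => (i : ℝ)).trans (sum_ite_add_le k)

theorem Idx.sum_snd (k : ℕ) :
    ∑ β : Idx k, ((β.1.2 : ℕ) : ℝ) = (k : ℝ) * (k + 1) * (k + 2) / 6 := by
  rw [Idx.sum_eq k fun _ j => (j : ℝ), Finset.sum_comm, ← sum_ite_add_le k]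
  simp_rw [add_comm]

theorem HighIdx.sum_e₂ (k : ℕ) :
    ∑ β : HighIdx k, (β.e₂ : ℝ) = (k : ℝ) * (k + 1) * (k + 2) / 6 := by
  rw [← Idx.sum_snd, ← Finset.sum_filter_of_ne (s := Finset.univ)
    (p := fun β : Idx k => 1 ≤ (β.1.2 : ℕ))]
  · symm
    exact Finset.sum_subtype (p := fun β : Idx k => 1 ≤ (β.1.2 : ℕ)) _ (fun β => by simp)
      (fun β : Idx k => ((β.1.2 : ℕ) : ℝ))
  · intro β _ h
    by_contra h'
    apply h
    have : (β.1.2 : ℕ) = 0 := by omega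
    rw [this]; simp

end Counting

section DefectIntegral

theorem exists_lintegral_ratio_le {δ : ℝ} (hδ : 0 < δ) (hδ1 : δ ≤ 1) :
    ∃ C : ℝ, 0 ≤ C ∧ ∀ a : ℝ, 0 < a → a ≤ 1 → ∀ c : ℝ,
      ∫⁻ t in Icc (0 : ℝ) 1, ENNReal.ofReal (a / max a |t - c|)
        ≤ ENNReal.ofReal (C * a ^ (1 - δ)) := by
  have hfin : ∫⁻ v in Icc (-1 : ℝ) 1, ENNReal.ofReal (|v| ^ (δ - 1)) < ⊤ := by
    have h0 : IntegrableOn (fun v : ℝ => |v| ^ (δ - 1)) (Icc 0 1) := by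
      have := (intervalIntegral.intervalIntegrable_rpow' (a := 0) (b := 1)
        (r := δ - 1) (by linarith))
      rw [intervalIntegrable_iff_integrableOn_Icc_of_le zero_le_one] at this
      refine this.congr_fun (fun v hv => ?_) measurableSet_Icc
      simp only [abs_of_nonneg hv.1]
    have h1 : IntegrableOn (fun v : ℝ => |v| ^ (δ - 1)) (Icc (-1) 0) := by
      have := h0.comp_neg
      simpa using this
    have h2 := h1.union h0
    rw [Icc_union_Icc_eq_Icc (by norm_num) (by norm_num)] at h2
    have h3 := h2.hasFiniteIntegral
    rw [hasFiniteIntegral_iff_ofReal (Filter.Eventually.of_forall fun v => by positivity)] at h3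
    exact h3
  obtain ⟨A, hA⟩ : ∃ A, A = (∫⁻ v in Icc (-1 : ℝ) 1, ENNReal.ofReal (|v| ^ (δ - 1))).toReal :=
    ⟨_, rfl⟩
  have hA0 : 0 ≤ A := by rw [hA]; exact ENNReal.toReal_nonneg
  refine ⟨A + 1, by linarith, fun a ha ha1 c => ?_⟩
  have hpt : ∀ v : ℝ, v ≠ 0 → a / max a |v| ≤ a ^ (1 - δ) * |v| ^ (δ - 1) := by
    intro v hv
    have hv' : 0 < |v| := abs_pos.2 hv
    have hm : 0 < max a |v| := lt_max_of_lt_left ha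
    have h1 : a / max a |v| ≤ (a / max a |v|) ^ (1 - δ) := by
      conv_lhs => rw [← rpow_one (a / max a |v|)]
      exact rpow_le_rpow_of_exponent_ge (by positivity) ((div_le_one hm).2 (le_max_left _ _))
        (by linarith)
    refine h1.trans ?_
    rw [div_rpow ha.le hm.le, div_eq_mul_inv, ← rpow_neg hm.le, neg_sub]
    refine mul_le_mul_of_nonneg_left ?_ (by positivity)
    exact rpow_le_rpow_of_nonpos hv' (le_max_right _ _) (by linarith)
  have hae : ∀ᵐ t : ℝ, t ≠ c := by simp [ae_iff, measure_singleton]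
  calc ∫⁻ t in Icc (0 : ℝ) 1, ENNReal.ofReal (a / max a |t - c|)
      ≤ ∫⁻ t in Icc (0 : ℝ) 1, (ENNReal.ofReal (a ^ (1 - δ)) *
          (Icc (-1 : ℝ) 1).indicator (fun v => ENNReal.ofReal (|v| ^ (δ - 1))) (t - c)
          + ENNReal.ofReal a) := by
        refine lintegral_mono_ae (ae_restrict_of_ae (hae.mono fun t ht => ?_))
        by_cases h : t - c ∈ Icc (-1 : ℝ) 1
        · rw [indicator_of_mem h, ← ENNReal.ofReal_mul (by positivity)]
          exact (ENNReal.ofReal_le_ofReal (hpt _ (sub_ne_zero.2 ht))).trans le_self_add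
        · rw [indicator_of_notMem h, mul_zero, zero_add]
          refine ENNReal.ofReal_le_ofReal ?_
          rw [mem_Icc, ← abs_le, not_le] at h
          refine div_le_self ha.le (h.le.trans (le_max_right _ _))
    _ ≤ ENNReal.ofReal (a ^ (1 - δ)) * (∫⁻ t,
          (Icc (-1 : ℝ) 1).indicator (fun v => ENNReal.ofReal (|v| ^ (δ - 1))) (t - c))
          + ENNReal.ofReal a := by
        rw [lintegral_add_right _ measurable_const, lintegral_const_mul' _ _ ENNReal.ofReal_ne_top]
        refine add_le_add (mul_le_mul_right (setLIntegral_le_lintegral _ _) _) ?_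
        simp
    _ = ENNReal.ofReal (a ^ (1 - δ) * A) + ENNReal.ofReal a := by
        rw [lintegral_sub_right_eq_self (fun t => (Icc (-1 : ℝ) 1).indicator
          (fun v => ENNReal.ofReal (|v| ^ (δ - 1))) t), lintegral_indicator measurableSet_Icc,
          ENNReal.ofReal_mul (by positivity), hA, ENNReal.ofReal_toReal hfin.ne]
    _ ≤ _ := by
        rw [← ENNReal.ofReal_add (by positivity) ha.le]
        refine ENNReal.ofReal_le_ofReal ?_
        have : a ≤ a ^ (1 - δ) := by
          conv_lhs => rw [← rpow_one a]
          exact rpow_le_rpow_of_exponent_ge ha ha1 (by linarith)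
        linarith

end DefectIntegral

section DefectProduct

theorem lintegral_pi_fin_succ {n : ℕ} (μ : Fin (n + 1) → Measure ℝ) [∀ i, SigmaFinite (μ i)]
    {f : (Fin (n + 1) → ℝ) → ℝ≥0∞} (hf : Measurable f) :
    ∫⁻ x, f x ∂(Measure.pi μ)
      = ∫⁻ y, ∫⁻ z, f (Fin.cons y z) ∂(Measure.pi fun i => μ (Fin.succ i)) ∂(μ 0) := by
  rw [← ((measurePreserving_piFinSuccAbove μ 0).symm).lintegral_comp_emb
    (MeasurableEquiv.measurableEmbedding _)]
  have hm : Measurable fun z => f ((MeasurableEquiv.piFinSuccAbove (fun _ => ℝ) 0).symm z) :=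
    hf.comp (MeasurableEquiv.measurable _)
  rw [lintegral_prod _ hm.aemeasurable]
  simp_rw [MeasurableEquiv.piFinSuccAbove_symm_apply, Fin.insertNthEquiv, Equiv.coe_fn_mk,
    Fin.insertNth_zero', Fin.zero_succAbove]

theorem prod_filter_two_le {n : ℕ} (g : Fin (n + 2) → ℝ) :
    ∏ i ∈ Finset.univ.filter (fun i : Fin (n + 2) => 2 ≤ (i : ℕ)), g i
      = ∏ i : Fin n, g i.succ.succ := by
  rw [Finset.prod_filter, Fin.prod_univ_succ, Fin.prod_univ_succ]
  simp

theorem measurable_defect_prod {k : ℕ} (a : ℝ) (s : Fin (k + 1) → ℝ) :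
    Measurable fun t : Fin (k + 1) → ℝ =>
      ENNReal.ofReal (∏ i ∈ Finset.univ.filter (fun i : Fin (k + 1) => 2 ≤ (i : ℕ)),
        a / max a |affineDefect s t i|) := by
  unfold affineDefect
  refine ENNReal.measurable_ofReal.comp (Finset.measurable_prod _ fun i _ => ?_)
  refine measurable_const.div (measurable_const.max ?_)
  exact Continuous.measurable (by fun_prop)

theorem exists_lintegral_defect_prod_le (k : ℕ) (hk : 1 ≤ k) {δ : ℝ} (hδ : 0 < δ) (hδ1 : δ ≤ 1) :
    ∃ C : ℝ, 0 ≤ C ∧ ∀ a : ℝ, 0 < a → a ≤ 1 → ∀ s : Fin (k + 1) → ℝ,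
      ∫⁻ t : Fin (k + 1) → ℝ,
        ENNReal.ofReal (∏ i ∈ Finset.univ.filter (fun i : Fin (k + 1) => 2 ≤ (i : ℕ)),
          a / max a |affineDefect s t i|)
          ∂(Measure.pi fun _ => volume.restrict (Icc (0 : ℝ) 1))
        ≤ ENNReal.ofReal (C * a ^ ((1 - δ) * (k - 1))) := by
  obtain ⟨C, hC, hCb⟩ := exists_lintegral_ratio_le hδ hδ1
  obtain ⟨n, rfl⟩ : ∃ n, k = n + 1 := ⟨k - 1, by omega⟩
  refine ⟨C ^ n, by positivity, fun a ha ha1 s => ?_⟩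
  rw [lintegral_pi_fin_succ _ (measurable_defect_prod a s)]
  have key : ∀ y z : ℝ, ∫⁻ w : Fin n → ℝ,
      ENNReal.ofReal (∏ i ∈ Finset.univ.filter (fun i : Fin (n + 2) => 2 ≤ (i : ℕ)),
        a / max a |affineDefect s (Fin.cons y (Fin.cons z w : Fin (n + 1) → ℝ)) i|)
        ∂(Measure.pi fun _ => volume.restrict (Icc (0 : ℝ) 1))
      ≤ ENNReal.ofReal (C ^ n * a ^ ((1 - δ) * ((n + 1 : ℕ) - 1))) := by
    intro y z
    have e1 : ∀ w : Fin n → ℝ,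
        ENNReal.ofReal (∏ i ∈ Finset.univ.filter (fun i : Fin (n + 2) => 2 ≤ (i : ℕ)),
          a / max a |affineDefect s (Fin.cons y (Fin.cons z w : Fin (n + 1) → ℝ)) i|)
        = ∏ i : Fin n, ENNReal.ofReal
            (a / max a |w i - (y + (z - y) / (s 1 - s 0) * (s i.succ.succ - s 0))|) := by
      intro w
      rw [prod_filter_two_le, ENNReal.ofReal_prod_of_nonneg]
      · simp only [affineDefect, Fin.cons_succ, Fin.cons_zero, Fin.cons_one]
      · intro i _
        exact div_nonneg ha.le (ha.le.trans (le_max_left _ _))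
    simp_rw [e1]
    rw [lintegral_fin_prod_eq_prod (fun _ => volume.restrict (Icc (0 : ℝ) 1))
      (fun i w => ENNReal.ofReal
        (a / max a |w - (y + (z - y) / (s 1 - s 0) * (s i.succ.succ - s 0))|))]
    · calc _ ≤ ∏ _i : Fin n, ENNReal.ofReal (C * a ^ (1 - δ)) :=
            Finset.prod_le_prod' fun i _ => hCb a ha ha1 _
        _ = _ := by
          rw [Finset.prod_const, Finset.card_univ, Fintype.card_fin,
            ← ENNReal.ofReal_pow (mul_nonneg hC (rpow_nonneg ha.le _)), mul_pow,
            ← rpow_mul_natCast ha.le]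
          congr 3
          push_cast; ring
    · intro i
      exact ENNReal.measurable_ofReal.comp
        (measurable_const.div (measurable_const.max (Continuous.measurable (by fun_prop))))
  have hm : ∀ y : ℝ, Measurable fun w : Fin (n + 1) → ℝ =>
      ENNReal.ofReal (∏ i ∈ Finset.univ.filter (fun i : Fin (n + 2) => 2 ≤ (i : ℕ)),
        a / max a |affineDefect s (Fin.cons y w) i|) := fun y =>
    (measurable_defect_prod a s).comp (Continuous.measurable (by fun_prop))
  calc _ ≤ ∫⁻ _y in Icc (0 : ℝ) 1, ∫⁻ _z in Icc (0 : ℝ) 1,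
        ENNReal.ofReal (C ^ n * a ^ ((1 - δ) * ((n + 1 : ℕ) - 1))) := by
        refine lintegral_mono fun y => ?_
        rw [lintegral_pi_fin_succ _ (hm y)]
        exact lintegral_mono fun z => key y z
    _ = _ := by simp

end DefectProduct

section Band

/-- Restriction of a complex number to a dyadic range of moduli. -/
def band (a : ℝ) (z : ℂ) : ℂ := if a / 2 < ‖z‖ ∧ ‖z‖ ≤ a then z else 0

theorem norm_band_le {a : ℝ} (ha : 0 ≤ a) (z : ℂ) : ‖band a z‖ ≤ a := by
  unfold band
  split_ifs with h
  · exact h.2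
  · simpa using ha

theorem lt_norm_of_band_ne_zero {a : ℝ} {z : ℂ} (h : band a z ≠ 0) : a / 2 < ‖z‖ := by
  unfold band at h
  split_ifs at h with h'
  · exact h'.1
  · exact absurd rfl h

theorem band_mul {a : ℝ} {u z : ℂ} (hu : ‖u‖ = 1) : band a (u * z) = u * band a z := by
  unfold band
  rw [norm_mul, hu, one_mul]
  split_ifs <;> simp

@[fun_prop]
theorem measurable_band (a : ℝ) : Measurable (band a) := by
  unfold band
  refine Measurable.ite ?_ measurable_id measurable_const
  exact (measurableSet_lt measurable_const measurable_norm).inter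
    (measurableSet_le measurable_norm measurable_const)

end Band

section Slices

open Polynomial

variable {k : ℕ}

/-- The integral in the second variable of the part of the phase involving that variable. -/
def highSlice (k : ℕ) (y : HighIdx k → ℝ) (s : ℝ) : ℂ :=
  ∫ t in (0 : ℝ)..1, expTwoPi (∑ β : HighIdx k, y β * (s ^ β.e₁ * t ^ β.e₂))

theorem continuous_highSlice :
    Continuous fun p : (HighIdx k → ℝ) × ℝ => highSlice k p.1 p.2 := by
  unfold highSlice
  refine intervalIntegral.continuous_parametric_intervalIntegral_of_continuous' ?_ _ _
  unfold Function.uncurry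
  fun_prop

theorem norm_highSlice_le (y : HighIdx k → ℝ) (s : ℝ) : ‖highSlice k y s‖ ≤ 1 := by
  have := intervalIntegral.norm_integral_le_of_norm_le_const (a := (0 : ℝ)) (b := 1) (C := 1)
    (f := fun t => expTwoPi (∑ β : HighIdx k, y β * (s ^ β.e₁ * t ^ β.e₂)))
    fun t _ => (norm_expTwoPi _).le
  simpa [highSlice] using this

theorem exists_one_le_volume_levelDeriv (k : ℕ) :
    ∃ K : ℝ, 1 ≤ K ∧ ∀ (y : HighIdx k → ℝ) (s a : ℝ), 0 < a → band a (highSlice k y s) ≠ 0 →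
      1 ≤ ENNReal.ofReal (K / a) * volume.restrict (Icc 0 1)
        {t : ℝ | ∀ j, 1 ≤ j → j ≤ k → |levelDeriv k y j s t| ≤ K / a ^ j} := by
  obtain ⟨K, hK, h⟩ := exists_interval_taylor_le k
  refine ⟨K, hK, fun y s a ha hb => ?_⟩
  obtain ⟨f, hf⟩ : ∃ f : ℝ[X], f = ∑ β : HighIdx k, monomial β.e₂ (y β * s ^ β.e₁) := ⟨_, rfl⟩
  have hdeg : f.natDegree ≤ k := by
    rw [hf]
    refine natDegree_sum_le_of_forall_le _ _ fun β _ => (natDegree_monomial_le _).trans ?_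
    have := β.e₁_add_e₂_le
    omega
  have heval : ∀ t, f.eval t = ∑ β : HighIdx k, y β * (s ^ β.e₁ * t ^ β.e₂) := by
    intro t
    rw [hf, eval_finsetSum]
    exact Finset.sum_congr rfl fun β _ => by rw [eval_monomial]; ring
  have hcoef : ∀ t j, (taylor t f).coeff j = levelDeriv k y j s t := by
    intro t j
    rw [taylor_coeff, hf, map_sum, eval_finsetSum, levelDeriv]
    refine Finset.sum_congr rfl fun β _ => ?_
    rw [hasseDeriv_monomial, eval_monomial]
    ring
  have hlt := lt_norm_of_band_ne_zero hb
  have e0 : highSlice k y s = ∫ t in (0 : ℝ)..1, expTwoPi (f.eval t) := by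
    simp_rw [heval]; rfl
  rw [e0] at hlt
  obtain ⟨u, hu0, hu1, hu⟩ := h f hdeg a ha hlt
  have hKp : 0 < K := by linarith
  have hsub : Icc u (u + a / K) ⊆
      {t : ℝ | ∀ j, 1 ≤ j → j ≤ k → |levelDeriv k y j s t| ≤ K / a ^ j} := by
    intro t ht j hj hjk
    rw [← hcoef]
    exact hu t ht j hj hjk
  calc (1 : ℝ≥0∞) = ENNReal.ofReal (K / a) * volume.restrict (Icc 0 1) (Icc u (u + a / K)) := by
        rw [Measure.restrict_eq_self _ (Icc_subset_Icc hu0 hu1), Real.volume_Icc,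
          ← ENNReal.ofReal_mul (by positivity)]
        rw [show K / a * (u + a / K - u) = 1 by field_simp; ring, ENNReal.ofReal_one]
    _ ≤ _ := by gcongr

end Slices

section BandMeasure

variable {k : ℕ}

theorem continuous_levelDeriv (j : ℕ) :
    Continuous fun p : (HighIdx k → ℝ) × ℝ × ℝ => levelDeriv k p.1 j p.2.1 p.2.2 := by
  unfold levelDeriv
  fun_prop

theorem measurableSet_levelDeriv (K a : ℝ) :
    MeasurableSet {p : (HighIdx k → ℝ) × ℝ × ℝ |
      ∀ j, 1 ≤ j → j ≤ k → |levelDeriv k p.1 j p.2.1 p.2.2| ≤ K / a ^ j} := by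
  have : {p : (HighIdx k → ℝ) × ℝ × ℝ |
      ∀ j, 1 ≤ j → j ≤ k → |levelDeriv k p.1 j p.2.1 p.2.2| ≤ K / a ^ j}
      = ⋂ j, ⋂ (_ : 1 ≤ j), ⋂ (_ : j ≤ k), {p : (HighIdx k → ℝ) × ℝ × ℝ |
        |levelDeriv k p.1 j p.2.1 p.2.2| ≤ K / a ^ j} := by
    ext p; simp
  rw [this]
  refine (isClosed_iInter fun j => isClosed_iInter fun _ => isClosed_iInter fun _ => ?_).measurableSet
  exact isClosed_le (continuous_levelDeriv j).abs continuous_const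

/-- The set where all normalised derivatives are at most of size `K / a ^ j`. -/
def levelSet (k : ℕ) (K a : ℝ) : Set ((HighIdx k → ℝ) × ℝ × ℝ) :=
  {p | ∀ j, 1 ≤ j → j ≤ k → |levelDeriv k p.1 j p.2.1 p.2.2| ≤ K / a ^ j}

/-- The indicator of `levelSet`. -/
def levelInd (k : ℕ) (K a : ℝ) (y : HighIdx k → ℝ) (s t : ℝ) : ℝ≥0∞ :=
  (levelSet k K a).indicator 1 (y, s, t)

theorem measurable_levelInd (K a : ℝ) :
    Measurable fun p : (HighIdx k → ℝ) × ℝ × ℝ => levelInd k K a p.1 p.2.1 p.2.2 :=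
  measurable_one.indicator (measurableSet_levelDeriv K a)

theorem measurable_prod_levelInd {n : ℕ} (K a : ℝ) :
    Measurable fun p : (HighIdx k → ℝ) × (Fin n → ℝ) × (Fin n → ℝ) =>
      ∏ i, levelInd k K a p.1 (p.2.1 i) (p.2.2 i) := by
  refine Finset.measurable_prod _ fun i _ => ?_
  exact (measurable_levelInd K a).comp
    (f := fun p : (HighIdx k → ℝ) × (Fin n → ℝ) × (Fin n → ℝ) => (p.1, p.2.1 i, p.2.2 i))
    (by fun_prop)

theorem prod_volume_band_le {n : ℕ} {K : ℝ}
    (hK : ∀ (y : HighIdx k → ℝ) (s a : ℝ), 0 < a → band a (highSlice k y s) ≠ 0 →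
      1 ≤ ENNReal.ofReal (K / a) * volume.restrict (Icc 0 1)
        {t : ℝ | ∀ j, 1 ≤ j → j ≤ k → |levelDeriv k y j s t| ≤ K / a ^ j})
    {J : Fin n → Set ℝ} {a : ℝ} (ha : 0 < a) (y : HighIdx k → ℝ) :
    ∏ i, volume.restrict (J i) {s | band a (highSlice k y s) ≠ 0}
      ≤ ENNReal.ofReal (K / a) ^ n * ∫⁻ s : Fin n → ℝ, ∫⁻ t : Fin n → ℝ,
        ∏ i, levelInd k K a y (s i) (t i)
          ∂(Measure.pi fun _ => volume.restrict (Icc (0 : ℝ) 1))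
          ∂(Measure.pi fun i => volume.restrict (J i)) := by
  have hm : Measurable fun p : ℝ × ℝ => levelInd k K a y p.1 p.2 :=
    (measurable_levelInd K a).comp (f := fun p : ℝ × ℝ => (y, p)) (by fun_prop)
  have hB : MeasurableSet {s | band a (highSlice k y s) ≠ 0} := by
    have h1 : Measurable fun s => band a (highSlice k y s) :=
      (measurable_band a).comp (continuous_highSlice.comp
        (g := fun p : (HighIdx k → ℝ) × ℝ => highSlice k p.1 p.2) (f := fun s => (y, s))
        (by fun_prop)).measurable
    exact (h1 (measurableSet_singleton 0)).compl
  have h1 : ∀ i, volume.restrict (J i) {s | band a (highSlice k y s) ≠ 0}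
      ≤ ENNReal.ofReal (K / a) * ∫⁻ s in J i, ∫⁻ t in Icc (0 : ℝ) 1, levelInd k K a y s t := by
    intro i
    rw [← lintegral_const_mul' _ _ ENNReal.ofReal_ne_top, ← lintegral_indicator_one hB]
    refine lintegral_mono fun s => ?_
    rw [indicator_apply]
    split_ifs with hs
    · refine (hK y s a ha hs).trans (le_of_eq ?_)
      congr 1
      have hms : MeasurableSet
          {t : ℝ | ∀ j, 1 ≤ j → j ≤ k → |levelDeriv k y j s t| ≤ K / a ^ j} :=
        measurableSet_preimage (f := fun t : ℝ => (y, s, t)) (by fun_prop)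
          (measurableSet_levelDeriv K a)
      rw [← lintegral_indicator_one hms]
      rfl
    · exact zero_le
  have h2 : ∀ s : Fin n → ℝ, ∫⁻ t : Fin n → ℝ, ∏ i, levelInd k K a y (s i) (t i)
      ∂(Measure.pi fun _ => volume.restrict (Icc (0 : ℝ) 1))
      = ∏ i, ∫⁻ t in Icc (0 : ℝ) 1, levelInd k K a y (s i) t := fun s =>
    lintegral_fin_prod_eq_prod _ (fun i t => levelInd k K a y (s i) t) fun i =>
      hm.comp (f := fun t : ℝ => (s i, t)) (by fun_prop)
  simp_rw [h2]
  rw [lintegral_fin_prod_eq_prod _ (fun i s => ∫⁻ t in Icc (0 : ℝ) 1, levelInd k K a y s t)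
    fun i => Measurable.lintegral_prod_right' hm]
  refine (Finset.prod_le_prod' fun i _ => h1 i).trans (le_of_eq ?_)
  rw [Finset.prod_mul_distrib, Finset.prod_const, Finset.card_univ, Fintype.card_fin]

theorem lintegral_prod_levelInd_eq {n : ℕ} (K a : ℝ) (s t : Fin n → ℝ) :
    ∫⁻ y : HighIdx k → ℝ, ∏ i, levelInd k K a y (s i) (t i)
      = volume {y : HighIdx k → ℝ | ∀ i, ∀ j, 1 ≤ j → j ≤ k →
          |levelDeriv k y j (s i) (t i)| ≤ K / a ^ j} := by
  have hms : MeasurableSet {y : HighIdx k → ℝ | ∀ i, ∀ j, 1 ≤ j → j ≤ k →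
      |levelDeriv k y j (s i) (t i)| ≤ K / a ^ j} := by
    have : {y : HighIdx k → ℝ | ∀ i, ∀ j, 1 ≤ j → j ≤ k →
        |levelDeriv k y j (s i) (t i)| ≤ K / a ^ j}
        = ⋂ i, {y : HighIdx k → ℝ | ∀ j, 1 ≤ j → j ≤ k →
          |levelDeriv k y j (s i) (t i)| ≤ K / a ^ j} := by
      ext; simp
    rw [this]
    exact MeasurableSet.iInter fun i =>
      measurableSet_preimage (f := fun y : HighIdx k → ℝ => (y, s i, t i)) (by fun_prop)
          (measurableSet_levelDeriv K a)
  rw [← lintegral_indicator_one hms]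
  refine lintegral_congr fun y => ?_
  simp only [levelInd, levelSet, indicator_apply, mem_ofPred_eq, Pi.one_apply]
  split_ifs with h
  · exact Finset.prod_eq_one fun i _ => if_pos (h i)
  · push Not at h
    obtain ⟨i, hi⟩ := h
    refine Finset.prod_eq_zero (Finset.mem_univ i) (if_neg ?_)
    push Not
    exact hi

theorem prod_inv_pow_e₂ {a : ℝ} (ha : 0 < a) :
    ∏ β : HighIdx k, (a ^ β.e₂)⁻¹ = a ^ (-((k : ℝ) * (k + 1) * (k + 2) / 6)) := by
  rw [← HighIdx.sum_e₂, ← Finset.sum_neg_distrib, rpow_sum_of_pos ha]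
  refine Finset.prod_congr rfl fun β _ => ?_
  rw [rpow_neg ha.le, rpow_natCast]

theorem exists_lintegral_prod_band_le (hk : 2 ≤ k) {g δ : ℝ} (hg : 0 < g) (hg1 : g ≤ 1)
    (hδ : 0 < δ) (hδ1 : δ ≤ 1) {J : Fin (k + 1) → Set ℝ} (hJm : ∀ i, MeasurableSet (J i))
    (hJ : ∀ i, J i ⊆ Icc 0 1)
    (hsep : ∀ i j, i ≠ j → ∀ s ∈ J i, ∀ s' ∈ J j, g ≤ |s - s'|) :
    ∃ C : ℝ, 0 ≤ C ∧ ∀ a : ℝ, 0 < a → a ≤ 1 →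
      ∫⁻ y : HighIdx k → ℝ, ∏ i, volume.restrict (J i) {s | band a (highSlice k y s) ≠ 0}
        ≤ ENNReal.ofReal (C *
          a ^ (-((k : ℝ) * (k + 1) * (k + 2) / 6 + 2) - (k - 1) * δ)) := by
  obtain ⟨K, hK1, hK⟩ := exists_one_le_volume_levelDeriv k
  obtain ⟨C₁, hC₁, h₁⟩ := volume_levelDeriv_le (K := K) hk hg hg1 (by linarith)
  obtain ⟨C₂, hC₂, h₂⟩ := exists_lintegral_defect_prod_le k (by omega) hδ hδ1
  have hK0 : 0 ≤ K := by linarith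
  refine ⟨K ^ (k + 1) * (C₁ * C₂), by positivity, fun a ha ha1 => ?_⟩
  obtain ⟨P, hP⟩ : ∃ P, P = ∏ β : HighIdx k, (a ^ β.e₂)⁻¹ := ⟨_, rfl⟩
  have hP0 : 0 ≤ P := by rw [hP]; positivity
  have hmJ : ∀ᵐ s : Fin (k + 1) → ℝ ∂(Measure.pi fun i => volume.restrict (J i)),
      ∀ i, s i ∈ J i := by
    rw [ae_all_iff]
    intro i
    exact (Measure.quasiMeasurePreserving_eval
      (μ := fun i => volume.restrict (J i)) i).ae (ae_restrict_mem (hJm i))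
  have hone : (Measure.pi fun i => volume.restrict (J i)) univ ≤ 1 := by
    rw [Measure.pi_univ]
    refine Finset.prod_le_one' fun i _ => ?_
    rw [Measure.restrict_apply_univ]
    exact (measure_mono (hJ i)).trans (by simp)
  have hprob : ∀ i, IsFiniteMeasure (volume.restrict (J i)) := fun i =>
    ⟨by rw [Measure.restrict_apply_univ]; exact (measure_mono (hJ i)).trans_lt (by simp)⟩
  have hF := measurable_prod_levelInd (k := k) (n := k + 1) K a
  have swap : ∫⁻ y : HighIdx k → ℝ, ∫⁻ s : Fin (k + 1) → ℝ, ∫⁻ t : Fin (k + 1) → ℝ,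
        ∏ i, levelInd k K a y (s i) (t i)
          ∂(Measure.pi fun _ => volume.restrict (Icc (0 : ℝ) 1))
          ∂(Measure.pi fun i => volume.restrict (J i))
      = ∫⁻ s : Fin (k + 1) → ℝ, ∫⁻ t : Fin (k + 1) → ℝ, (∫⁻ y : HighIdx k → ℝ,
        ∏ i, levelInd k K a y (s i) (t i))
          ∂(Measure.pi fun _ => volume.restrict (Icc (0 : ℝ) 1))
          ∂(Measure.pi fun i => volume.restrict (J i)) := by
    rw [lintegral_lintegral_swap]
    · refine lintegral_congr fun s => ?_
      rw [lintegral_lintegral_swap]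
      exact (hF.comp (f := fun p : (HighIdx k → ℝ) × (Fin (k + 1) → ℝ) => (p.1, s, p.2))
        (by fun_prop)).aemeasurable
    · refine Measurable.aemeasurable ?_
      refine Measurable.lintegral_prod_right' (f := fun p : ((HighIdx k → ℝ) ×
        (Fin (k + 1) → ℝ)) × (Fin (k + 1) → ℝ) => ∏ i, levelInd k K a p.1.1 (p.1.2 i) (p.2 i)) ?_
      exact hF.comp (f := fun p : ((HighIdx k → ℝ) × (Fin (k + 1) → ℝ)) × (Fin (k + 1) → ℝ) =>
        (p.1.1, p.1.2, p.2)) (by fun_prop)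
  have hexp : (K / a) ^ (k + 1) * (C₁ * P * (C₂ * a ^ ((1 - δ) * ((k : ℝ) - 1))))
      = K ^ (k + 1) * (C₁ * C₂) *
          a ^ (-((k : ℝ) * (k + 1) * (k + 2) / 6 + 2) - (k - 1) * δ) := by
    rw [hP, prod_inv_pow_e₂ ha, div_pow, div_eq_mul_inv, ← rpow_natCast a, ← rpow_neg ha.le]
    rw [show (-((k : ℝ) * (k + 1) * (k + 2) / 6 + 2) - (k - 1) * δ)
      = -((k + 1 : ℕ) : ℝ) + -((k : ℝ) * (k + 1) * (k + 2) / 6) + (1 - δ) * ((k : ℝ) - 1) by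
        push_cast; ring, rpow_add ha, rpow_add ha]
    ring
  calc _ ≤ ∫⁻ y : HighIdx k → ℝ, ENNReal.ofReal (K / a) ^ (k + 1) *
        ∫⁻ s : Fin (k + 1) → ℝ, ∫⁻ t : Fin (k + 1) → ℝ,
        ∏ i, levelInd k K a y (s i) (t i)
          ∂(Measure.pi fun _ => volume.restrict (Icc (0 : ℝ) 1))
          ∂(Measure.pi fun i => volume.restrict (J i)) :=
        lintegral_mono fun y => prod_volume_band_le hK ha y
    _ = ENNReal.ofReal (K / a) ^ (k + 1) * ∫⁻ s : Fin (k + 1) → ℝ, ∫⁻ t : Fin (k + 1) → ℝ,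
        (∫⁻ y : HighIdx k → ℝ, ∏ i, levelInd k K a y (s i) (t i))
          ∂(Measure.pi fun _ => volume.restrict (Icc (0 : ℝ) 1))
          ∂(Measure.pi fun i => volume.restrict (J i)) := by
        rw [lintegral_const_mul' _ _ (by finiteness), swap]
    _ ≤ ENNReal.ofReal (K / a) ^ (k + 1) * ∫⁻ _s : Fin (k + 1) → ℝ,
        ENNReal.ofReal (C₁ * P * (C₂ * a ^ ((1 - δ) * ((k : ℝ) - 1))))
          ∂(Measure.pi fun i => volume.restrict (J i)) := by
        refine mul_le_mul_right (lintegral_mono_ae (hmJ.mono fun s hs => ?_)) _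
        rw [ENNReal.ofReal_mul (mul_nonneg hC₁ hP0)]
        refine le_trans ?_ (mul_le_mul_right (h₂ a ha ha1 s) _)
        rw [← lintegral_const_mul' _ _ ENNReal.ofReal_ne_top]
        refine lintegral_mono fun t => ?_
        rw [lintegral_prod_levelInd_eq, ← ENNReal.ofReal_mul (mul_nonneg hC₁ hP0), hP]
        exact h₁ s t (fun i => hJ i (hs i)) (fun i j hij => hsep i j hij _ (hs i) _ (hs j)) a ha
    _ ≤ ENNReal.ofReal (K / a) ^ (k + 1) *
        ENNReal.ofReal (C₁ * P * (C₂ * a ^ ((1 - δ) * ((k : ℝ) - 1)))) := by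
        refine mul_le_mul_right ?_ _
        rw [lintegral_const]
        exact (mul_le_mul_right hone _).trans (by rw [mul_one])
    _ = _ := by
        rw [← hexp, ← ENNReal.ofReal_pow (div_nonneg hK0 ha.le), ← ENNReal.ofReal_mul
          (pow_nonneg (div_nonneg hK0 ha.le) _)]

end BandMeasure

section Splitting

variable {k : ℕ}

/-- The multi-indices involving only the first variable. -/
def lowEquiv (k : ℕ) : Fin k ≃ {β : Idx k // ¬ 1 ≤ (β.1.2 : ℕ)} where
  toFun m := ⟨⟨(m.succ, 0), by simp⟩, by simp⟩
  invFun β := ⟨(β.1.1.1 : ℕ) - 1, by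
    have h1 := β.1.2; have h2 := β.2
    omega⟩
  left_inv m := by simp
  right_inv β := by
    have h1 := β.1.2
    have h2 := β.2
    refine Subtype.ext (Subtype.ext (Prod.ext (Fin.ext ?_) (Fin.ext ?_)))
    · simp only [Fin.val_succ]; omega
    · simp only [Fin.val_zero]; omega

/-- The coordinates involving the second variable. -/
def highPart (x : Idx k → ℝ) : HighIdx k → ℝ := fun β => x β.1

/-- The coordinates involving only the first variable. -/
def lowPart (x : Idx k → ℝ) : Fin k → ℝ := fun m => x (lowEquiv k m).1

theorem Pphase_eq_low_add_high (x : Idx k → ℝ) (s t : ℝ) :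
    Pphase k x ![s, t] = ∑ m : Fin k, lowPart x m * s ^ ((m : ℕ) + 1)
      + ∑ β : HighIdx k, highPart x β * (s ^ β.e₁ * t ^ β.e₂) := by
  unfold Pphase
  rw [← Fintype.sum_subtype_add_sum_subtype (fun β : Idx k => 1 ≤ (β.1.2 : ℕ)), add_comm]
  congr 1
  · rw [← (lowEquiv k).sum_comp]
    refine Finset.sum_congr rfl fun m _ => ?_
    simp [lowEquiv, lowPart]
  · refine Finset.sum_congr rfl fun β _ => ?_
    simp only [Matrix.cons_val_zero, Matrix.cons_val_one, highPart, HighIdx.e₁, HighIdx.e₂]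
    ring

theorem measurePreserving_highPart_lowPart :
    MeasurePreserving fun x : Idx k → ℝ => (highPart x, lowPart x) := by
  have h1 := volume_preserving_piEquivPiSubtypeProd (fun _ : Idx k => ℝ)
    (fun β => 1 ≤ (β.1.2 : ℕ))
  have h2 := volume_preserving_arrowCongr' (lowEquiv k).symm (MeasurableEquiv.refl ℝ) (.id volume)
  exact ((MeasurePreserving.id volume).prod h2).comp h1

theorem lintegral_highPart_lowPart {f : (HighIdx k → ℝ) × (Fin k → ℝ) → ℝ≥0∞}
    (hf : Measurable f) :
    ∫⁻ x : Idx k → ℝ, f (highPart x, lowPart x) = ∫⁻ y, ∫⁻ r, f (y, r) := by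
  rw [measurePreserving_highPart_lowPart.lintegral_comp hf, Measure.volume_eq_prod,
    lintegral_prod _ hf.aemeasurable]

/-- The integral of the phase in the second variable. -/
def slice (k : ℕ) (x : Idx k → ℝ) (s : ℝ) : ℂ :=
  ∫ t in (0 : ℝ)..1, expTwoPi (Pphase k x ![s, t])

theorem slice_eq (x : Idx k → ℝ) (s : ℝ) :
    slice k x s = expTwoPi (∑ m : Fin k, lowPart x m * s ^ ((m : ℕ) + 1))
      * highSlice k (highPart x) s := by
  unfold slice highSlice
  simp_rw [Pphase_eq_low_add_high, expTwoPi_add]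
  rw [intervalIntegral.integral_const_mul]

/-- The contribution of slices of given size with first variable in `J`. -/
def bandPart (k : ℕ) (a : ℝ) (J : Set ℝ) (x : Idx k → ℝ) : ℂ :=
  ∫ s in J, band a (slice k x s)

theorem bandPart_eq (a : ℝ) (J : Set ℝ) (x : Idx k → ℝ) :
    bandPart k a J x = ∫ s in J, band a (highSlice k (highPart x) s)
      * expTwoPi (∑ m : Fin k, lowPart x m * s ^ ((m : ℕ) + 1)) := by
  unfold bandPart
  simp_rw [slice_eq, band_mul (norm_expTwoPi _), mul_comm]

end Splitting

section ConfigurationBound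

variable {k : ℕ}

theorem enorm_finset_prod {ι : Type*} (S : Finset ι) (f : ι → ℂ) :
    ‖∏ i ∈ S, f i‖ₑ = ∏ i ∈ S, ‖f i‖ₑ := by
  simp_rw [← ofReal_norm]
  rw [norm_prod, ENNReal.ofReal_prod_of_nonneg fun i _ => norm_nonneg _]

theorem measurable_band_highSlice (a : ℝ) :
    Measurable fun p : (HighIdx k → ℝ) × ℝ => band a (highSlice k p.1 p.2) :=
  (measurable_band a).comp continuous_highSlice.measurable

theorem enorm_setIntegral_band_le {a : ℝ} (ha : 0 ≤ a) (J : Set ℝ) (y : HighIdx k → ℝ)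
    (r : Fin k → ℝ) :
    ‖∫ s in J, band a (highSlice k y s) * expTwoPi (∑ m : Fin k, r m * s ^ ((m : ℕ) + 1))‖ₑ
      ≤ ENNReal.ofReal a * volume.restrict J {s | band a (highSlice k y s) ≠ 0} := by
  have hB : MeasurableSet {s | band a (highSlice k y s) ≠ 0} :=
    (((measurable_band_highSlice a).comp (f := fun s => (y, s)) (by fun_prop))
      (measurableSet_singleton 0)).compl
  refine (enorm_integral_le_lintegral_enorm _).trans ?_
  rw [← lintegral_indicator_one hB, ← lintegral_const_mul' _ _ ENNReal.ofReal_ne_top]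
  refine lintegral_mono fun s => ?_
  rw [enorm_mul, ← ofReal_norm (expTwoPi _), norm_expTwoPi, ENNReal.ofReal_one, mul_one,
    indicator_apply]
  split_ifs with h
  · rw [← ofReal_norm, Pi.one_apply, mul_one]
    exact ENNReal.ofReal_le_ofReal (norm_band_le ha _)
  · have : band a (highSlice k y s) = 0 := by simpa using h
    simp [this]

theorem prod_setIntegral_band {a : ℝ} (J : Fin k → Set ℝ) (y : HighIdx k → ℝ)
    (r : Fin k → ℝ) :
    ∏ i, ∫ s in J i, band a (highSlice k y s) * expTwoPi (∑ m : Fin k, r m * s ^ ((m : ℕ) + 1))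
      = ∫ s in univ.pi J, (∏ i, band a (highSlice k y (s i)))
          * expTwoPi (∑ m : Fin k, r m * ∑ i, s i ^ ((m : ℕ) + 1)) := by
  rw [volume_pi, Measure.restrict_pi_pi, ← integral_fintype_prod_eq_prod]
  refine integral_congr_ae (Filter.Eventually.of_forall fun s => ?_)
  simp only
  rw [Finset.prod_mul_distrib, ← expTwoPi_sum, Finset.sum_comm]
  simp_rw [Finset.mul_sum]

theorem exists_lintegral_prod_sq_band_le {J : Fin k → Set ℝ} (hJm : ∀ i, MeasurableSet (J i))
    (hJ : ∀ i, J i ⊆ Icc 0 1) {c : ℝ} (hc : 0 < c)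
    (hsep : ∀ s ∈ univ.pi J, ∀ s' ∈ univ.pi J, c * ∑ m, (s m - s' m) ^ 2
      ≤ ∑ m : Fin k, (∑ i, s i ^ ((m : ℕ) + 1) - ∑ i, s' i ^ ((m : ℕ) + 1)) ^ 2)
    {a : ℝ} (ha : 0 ≤ a) (ha1 : a ≤ 1) (y : HighIdx k → ℝ) :
    ∫⁻ r : Fin k → ℝ, ∏ i, ‖∫ s in J i, band a (highSlice k y s)
        * expTwoPi (∑ m : Fin k, r m * s ^ ((m : ℕ) + 1))‖ₑ ^ 2
      ≤ ENNReal.ofReal ((√c)⁻¹) ^ k * ∏ i, (ENNReal.ofReal a ^ 2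
          * volume.restrict (J i) {s | band a (highSlice k y s) ≠ 0}) := by
  have hms : Measurable fun s => band a (highSlice k y s) :=
    (measurable_band_highSlice a).comp (f := fun s => (y, s)) (by fun_prop)
  have hQ : MeasurableSet (univ.pi J) := MeasurableSet.univ_pi hJm
  have hQf : volume (univ.pi J) ≠ ⊤ := by
    rw [volume_pi_pi]
    exact ENNReal.prod_ne_top fun i _ => ((measure_mono (hJ i)).trans_lt (by simp)).ne
  have hH : Measurable fun s : Fin k → ℝ => ∏ i, band a (highSlice k y (s i)) :=
    Finset.measurable_prod _ fun i _ => hms.comp (measurable_pi_apply i)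
  have hHb : ∀ s : Fin k → ℝ, ‖∏ i, band a (highSlice k y (s i))‖ ≤ 1 := by
    intro s
    rw [norm_prod]
    exact Finset.prod_le_one (fun i _ => norm_nonneg _) fun i _ => (norm_band_le ha _).trans ha1
  have h := lintegral_sq_oscillatory_le hQf
    (Φ := fun s m => ∑ i, s i ^ ((m : ℕ) + 1)) (by fun_prop) hc hQ hsep hH hHb
  have hB : MeasurableSet {s | band a (highSlice k y s) ≠ 0} :=
    (hms (measurableSet_singleton 0)).compl
  calc _ = ∫⁻ r : Fin k → ℝ, ‖∫ s in univ.pi J, (∏ i, band a (highSlice k y (s i)))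
          * expTwoPi (∑ m : Fin k, r m * ∑ i, s i ^ ((m : ℕ) + 1))‖ₑ ^ 2 := by
        refine lintegral_congr fun r => ?_
        rw [← prod_setIntegral_band, enorm_finset_prod, Finset.prod_pow]
    _ ≤ _ := h
    _ = ENNReal.ofReal ((√c)⁻¹) ^ k * ∏ i, ∫⁻ s in J i, ‖band a (highSlice k y s)‖ₑ ^ 2 := by
        rw [volume_pi, Measure.restrict_pi_pi, ← lintegral_fin_prod_eq_prod
          (fun i => volume.restrict (J i)) (fun _ s => ‖band a (highSlice k y s)‖ₑ ^ 2)
          fun i => hms.enorm.pow_const 2]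
        simp_rw [enorm_finset_prod, Finset.prod_pow]
    _ ≤ _ := by
        refine mul_le_mul_right (Finset.prod_le_prod' fun i _ => ?_) _
        rw [← lintegral_indicator_one hB, ← lintegral_const_mul' _ _ (by finiteness)]
        refine lintegral_mono fun s => ?_
        rw [indicator_apply]
        split_ifs with h
        · rw [← ofReal_norm, Pi.one_apply, mul_one]
          exact pow_le_pow_left' (ENNReal.ofReal_le_ofReal (norm_band_le ha _)) 2
        · have : band a (highSlice k y s) = 0 := by simpa using h
          simp [this]

end ConfigurationBound

section Configurations

variable {k : ℕ}

theorem measurable_setIntegral_band (a : ℝ) (J : Set ℝ) :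
    Measurable fun p : (HighIdx k → ℝ) × (Fin k → ℝ) =>
      ∫ s in J, band a (highSlice k p.1 s) * expTwoPi (∑ m : Fin k, p.2 m * s ^ ((m : ℕ) + 1)) := by
  have h : Measurable fun q : ((HighIdx k → ℝ) × (Fin k → ℝ)) × ℝ =>
      band a (highSlice k q.1.1 q.2) * expTwoPi (∑ m : Fin k, q.1.2 m * q.2 ^ ((m : ℕ) + 1)) := by
    refine Measurable.mul ?_ (Continuous.measurable (by fun_prop))
    exact (measurable_band_highSlice a).comp
      (f := fun q : ((HighIdx k → ℝ) × (Fin k → ℝ)) × ℝ => (q.1.1, q.2)) (by fun_prop)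
  exact (h.stronglyMeasurable.integral_prod_right').measurable

theorem rpow_le_of_le_mul {A V z : ℝ≥0∞} {u : ℝ} (hu : 2 ≤ u) (hV : V ≤ 1) (hz : z ≤ A * V) :
    z ^ u ≤ A ^ u * V := by
  calc z ^ u ≤ (A * V) ^ u := ENNReal.rpow_le_rpow hz (by linarith)
    _ = A ^ u * V ^ u := ENNReal.mul_rpow_of_nonneg _ _ (by linarith)
    _ ≤ A ^ u * V := by
      refine mul_le_mul_right ?_ _
      conv_rhs => rw [← ENNReal.rpow_one V]
      exact ENNReal.rpow_le_rpow_of_exponent_ge hV (by linarith)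

theorem rpow_le_mul_sq {A z : ℝ≥0∞} {u : ℝ} (hu : 2 ≤ u) (hz : z ≤ A) :
    z ^ u ≤ A ^ (u - 2) * z ^ 2 := by
  have : z ^ u = z ^ (u - 2) * z ^ 2 := by
    rw [← ENNReal.rpow_natCast, ← ENNReal.rpow_add_of_nonneg _ _ (by linarith) (by norm_num)]
    congr 1; push_cast; ring
  rw [this]
  exact mul_le_mul_left (ENNReal.rpow_le_rpow hz (by linarith)) _

theorem rpow_collect {a u : ℝ} (ha : 0 < a) :
    ENNReal.ofReal a ^ u * (ENNReal.ofReal a ^ (u - 2)) ^ k * (ENNReal.ofReal a ^ 2) ^ k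
      = ENNReal.ofReal (a ^ ((k + 1) * u)) := by
  rw [ENNReal.ofReal_rpow_of_pos ha, ENNReal.ofReal_rpow_of_pos ha,
    ← ENNReal.ofReal_pow ha.le, ← ENNReal.ofReal_pow (by positivity),
    ← ENNReal.ofReal_pow (by positivity), ← ENNReal.ofReal_mul (by positivity),
    ← ENNReal.ofReal_mul (by positivity)]
  congr 1
  rw [← rpow_natCast, ← rpow_natCast, ← rpow_natCast, ← rpow_mul ha.le, ← rpow_mul ha.le,
    ← rpow_add ha, ← rpow_add ha]
  congr 1
  push_cast; ring

theorem exists_lintegral_config_le (hk : 2 ≤ k) {u δ ρ : ℝ} (hu : 2 ≤ u) (hδ : 0 < δ)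
    (hδ1 : δ ≤ 1) {lo hi : ℕ → ℝ} (hρ : 0 < ρ) (hle : ∀ i, lo i ≤ hi i)
    (hsep : ∀ i j, i < j → hi i + ρ ≤ lo j)
    (h01 : ∀ i : Fin (k + 1), Icc (lo i) (hi i) ⊆ Icc 0 1) :
    ∃ C : ℝ, 0 ≤ C ∧ ∀ a : ℝ, 0 < a → a ≤ 1 →
      ∫⁻ x : Idx k → ℝ, ∏ i : Fin (k + 1), ‖bandPart k a (Icc (lo i) (hi i)) x‖ₑ ^ u
        ≤ ENNReal.ofReal (C *
          a ^ ((k + 1) * u - ((k : ℝ) * (k + 1) * (k + 2) / 6 + 2) - (k - 1) * δ)) := by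
  obtain ⟨c, hc, hcs⟩ := exists_powerSum_separation k (lo := fun i => lo (i + 1))
    (hi := fun i => hi (i + 1)) hρ (fun i => hle _) (fun i j hij => hsep _ _ (by omega))
  have hg : ∀ i j : Fin (k + 1), i ≠ j → ∀ s ∈ Icc (lo i) (hi i), ∀ s' ∈ Icc (lo j) (hi j),
      min 1 ρ ≤ |s - s'| := by
    intro i j hij s hs s' hs'
    refine (min_le_right _ _).trans ?_
    rcases lt_or_gt_of_ne hij with h | h
    · have := hsep i j h
      rw [abs_sub_comm]
      refine le_trans ?_ (le_abs_self _)
      linarith [hs.2, hs'.1]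
    · have := hsep j i h
      refine le_trans ?_ (le_abs_self _)
      linarith [hs.1, hs'.2]
  obtain ⟨C, hC, hCb⟩ := exists_lintegral_prod_band_le (J := fun i => Icc (lo i) (hi i)) hk
    (lt_min one_pos hρ) (min_le_left 1 ρ) hδ hδ1 (fun _ => measurableSet_Icc) h01 hg
  obtain ⟨D, hD⟩ : ∃ D, D = (√c)⁻¹ := ⟨_, rfl⟩
  have hD0 : 0 ≤ D := by rw [hD]; positivity
  refine ⟨D ^ k * C, by positivity, fun a ha ha1 => ?_⟩
  obtain ⟨J, hJ⟩ : ∃ J : Fin (k + 1) → Set ℝ, J = fun i : Fin (k + 1) => Icc (lo i) (hi i) := ⟨_, rfl⟩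
  obtain ⟨A, hA⟩ : ∃ A, A = ENNReal.ofReal a := ⟨_, rfl⟩
  have hAt : A ≠ ⊤ := by rw [hA]; exact ENNReal.ofReal_ne_top
  obtain ⟨b, hb⟩ : ∃ b : Fin (k + 1) → (HighIdx k → ℝ) × (Fin k → ℝ) → ℂ,
    b = fun i p => ∫ s in J i, band a (highSlice k p.1 s)
      * expTwoPi (∑ m : Fin k, p.2 m * s ^ ((m : ℕ) + 1)) := ⟨_, rfl⟩
  have hbm : ∀ i, Measurable (b i) := fun i => by
    rw [hb]; exact measurable_setIntegral_band a (J i)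
  obtain ⟨V, hV⟩ : ∃ V : Fin (k + 1) → (HighIdx k → ℝ) → ℝ≥0∞,
    V = fun i y => volume.restrict (J i) {s | band a (highSlice k y s) ≠ 0} := ⟨_, rfl⟩
  have hV1 : ∀ i y, V i y ≤ 1 := by
    intro i y
    rw [hV]
    refine (measure_mono (subset_univ _)).trans ?_
    rw [Measure.restrict_apply_univ, hJ]
    exact (measure_mono (h01 i)).trans (by simp)
  have hbV : ∀ i y r, ‖b i (y, r)‖ₑ ≤ A * V i y := by
    intro i y r
    rw [hb, hA, hV]
    exact enorm_setIntegral_band_le ha.le (J i) y r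
  have hbA : ∀ i y r, ‖b i (y, r)‖ₑ ≤ A := fun i y r =>
    (hbV i y r).trans ((mul_le_mul_right (hV1 i y) _).trans (by rw [mul_one]))
  have hsq : ∀ y, ∫⁻ r, ∏ i : Fin k, ‖b i.succ (y, r)‖ₑ ^ 2
      ≤ ENNReal.ofReal D ^ k * ∏ i : Fin k, (A ^ 2 * V i.succ y) := by
    intro y
    rw [hb, hA, hV, hD]
    refine exists_lintegral_prod_sq_band_le (fun i => ?_) (fun i => ?_) hc ?_ ha.le ha1 y
    · rw [hJ]; exact measurableSet_Icc
    · rw [hJ]; exact h01 _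
    · rw [hJ]
      intro s hs s' hs'
      exact hcs s s' (fun i => hs i (mem_univ _)) (fun i => hs' i (mem_univ _))
  have hin : ∀ y, ∫⁻ r, ∏ i, ‖b i (y, r)‖ₑ ^ u
      ≤ (ENNReal.ofReal D ^ k * (A ^ u * (A ^ (u - 2)) ^ k * (A ^ 2) ^ k)) * ∏ i, V i y := by
    intro y
    calc ∫⁻ r, ∏ i, ‖b i (y, r)‖ₑ ^ u
        ≤ ∫⁻ r, (A ^ u * V 0 y * (A ^ (u - 2)) ^ k) * ∏ i : Fin k, ‖b i.succ (y, r)‖ₑ ^ 2 := by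
          refine lintegral_mono fun r => ?_
          rw [Fin.prod_univ_succ, mul_assoc]
          refine mul_le_mul' (rpow_le_of_le_mul hu (hV1 0 y) (hbV 0 y r)) ?_
          calc _ ≤ ∏ i : Fin k, (A ^ (u - 2) * ‖b i.succ (y, r)‖ₑ ^ 2) :=
                Finset.prod_le_prod' fun i _ => rpow_le_mul_sq hu (hbA _ _ _)
            _ = _ := by
              rw [Finset.prod_mul_distrib, Finset.prod_const, Finset.card_univ, Fintype.card_fin]
      _ = (A ^ u * V 0 y * (A ^ (u - 2)) ^ k) * ∫⁻ r, ∏ i : Fin k, ‖b i.succ (y, r)‖ₑ ^ 2 := by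
          refine lintegral_const_mul _ (Finset.measurable_prod _ fun i _ => ?_)
          exact ((hbm _).comp (f := fun r => (y, r)) (by fun_prop)).enorm.pow_const 2
      _ ≤ (A ^ u * V 0 y * (A ^ (u - 2)) ^ k)
          * (ENNReal.ofReal D ^ k * ∏ i : Fin k, (A ^ 2 * V i.succ y)) :=
          mul_le_mul_right (hsq y) _
      _ = _ := by
          rw [Finset.prod_mul_distrib, Finset.prod_const, Finset.card_univ, Fintype.card_fin,
            Fin.prod_univ_succ (fun i => V i y)]
          ring
  calc _ = ∫⁻ x : Idx k → ℝ, ∏ i, ‖b i (highPart x, lowPart x)‖ₑ ^ u := by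
        refine lintegral_congr fun x => Finset.prod_congr rfl fun i _ => ?_
        rw [bandPart_eq, hb, hJ]
    _ = ∫⁻ y, ∫⁻ r, ∏ i, ‖b i (y, r)‖ₑ ^ u :=
        lintegral_highPart_lowPart (f := fun p => ∏ i, ‖b i p‖ₑ ^ u)
          (Finset.measurable_prod _ fun i _ => (hbm i).enorm.pow_const u)
    _ ≤ ∫⁻ y, (ENNReal.ofReal D ^ k * (A ^ u * (A ^ (u - 2)) ^ k * (A ^ 2) ^ k)) * ∏ i, V i y :=
        lintegral_mono hin
    _ = (ENNReal.ofReal D ^ k * (A ^ u * (A ^ (u - 2)) ^ k * (A ^ 2) ^ k))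
        * ∫⁻ y, ∏ i, V i y := by
        refine lintegral_const_mul' _ _ ?_
        rw [hA, rpow_collect ha]
        finiteness
    _ ≤ (ENNReal.ofReal D ^ k * (A ^ u * (A ^ (u - 2)) ^ k * (A ^ 2) ^ k)) * ENNReal.ofReal (C *
          a ^ (-((k : ℝ) * (k + 1) * (k + 2) / 6 + 2) - (k - 1) * δ)) := by
        refine mul_le_mul_right ?_ _
        rw [hV, hJ]
        exact hCb a ha ha1
    _ = _ := by
        rw [hA, rpow_collect ha, ← ENNReal.ofReal_pow hD0, ← ENNReal.ofReal_mul (by positivity),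
          ← ENNReal.ofReal_mul (by positivity)]
        congr 1
        rw [show ((k : ℝ) + 1) * u - ((k : ℝ) * (k + 1) * (k + 2) / 6 + 2) - (k - 1) * δ
          = (k + 1) * u + (-((k : ℝ) * (k + 1) * (k + 2) / 6 + 2) - (k - 1) * δ) by ring,
          rpow_add ha]
        ring

end Configurations

section BroadNarrow

/-- Strictly increasing tuples of pairwise non-adjacent indices. -/
def spacedTuples (n M : ℕ) : Finset (Fin n → Fin M) :=
  Finset.univ.filter fun c => ∀ i j, i < j → (c i : ℕ) + 2 ≤ c j

theorem exists_spacedTuple {k M : ℕ} (T : Finset (Fin M)) (hT : 2 * k + 1 ≤ T.card) :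
    ∃ c ∈ spacedTuples (k + 1) M, ∀ i, c i ∈ T := by
  obtain ⟨e, he⟩ : ∃ e : Fin T.card ↪o Fin M, ∀ i, e i ∈ T :=
    ⟨T.orderEmbOfFin rfl, fun i => T.orderEmbOfFin_mem rfl i⟩
  refine ⟨fun i => e ⟨2 * i, by omega⟩, ?_, fun i => he _⟩
  simp only [spacedTuples, Finset.mem_filter, Finset.mem_univ, true_and]
  intro i j hij
  have hij' : (i : ℕ) < j := hij
  have h1 : e ⟨2 * i, by omega⟩ < e ⟨2 * i + 1, by omega⟩ := by
    rw [e.lt_iff_lt, Fin.mk_lt_mk]; omega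
  have h2 : e ⟨2 * i + 1, by omega⟩ < e ⟨2 * j, by omega⟩ := by
    rw [e.lt_iff_lt, Fin.mk_lt_mk]; omega
  rw [Fin.lt_def] at h1 h2
  omega

theorem broad_or_narrow (k : ℕ) {M : ℕ} (hM : 0 < M) (v : Fin M → ℂ) :
    (∃ j, ‖∑ j, v j‖ ≤ 4 * (k + 1) * ‖v j‖) ∨
      ∃ c ∈ spacedTuples (k + 1) M, ∀ i, ‖∑ j, v j‖ ≤ 2 * M * ‖v (c i)‖ := by
  obtain ⟨S, hS⟩ : ∃ S, S = ‖∑ j, v j‖ := ⟨_, rfl⟩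
  have hM' : (0 : ℝ) < M := by exact_mod_cast hM
  rw [← hS]
  by_contra! hcon
  obtain ⟨h1, h2⟩ := hcon
  have hS0 : 0 < S := lt_of_le_of_lt (by positivity) (h1 ⟨0, hM⟩)
  obtain ⟨T, hT⟩ : ∃ T : Finset (Fin M), T = Finset.univ.filter fun j => S ≤ 2 * M * ‖v j‖ :=
    ⟨_, rfl⟩
  have hcard : T.card ≤ 2 * k := by
    by_contra hc
    obtain ⟨c, hc, hcT⟩ := exists_spacedTuple (k := k) T (by omega)
    obtain ⟨i, hi⟩ := h2 c hc
    have := hcT i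
    rw [hT, Finset.mem_filter] at this
    linarith [this.2]
  have hle : S ≤ ∑ j ∈ T, ‖v j‖ + ∑ j ∈ Tᶜ, ‖v j‖ := by
    rw [Finset.sum_add_sum_compl, hS]
    exact norm_sum_le _ _
  have hk : (0 : ℝ) < 4 * (k + 1) := by positivity
  have hA : ∑ j ∈ T, ‖v j‖ ≤ 2 * k * (S / (4 * (k + 1))) := by
    calc ∑ j ∈ T, ‖v j‖ ≤ ∑ _j ∈ T, S / (4 * (k + 1)) := Finset.sum_le_sum fun j _ => by
          rw [le_div_iff₀ hk, mul_comm]; exact (h1 j).le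
      _ = T.card * (S / (4 * (k + 1))) := by rw [Finset.sum_const, nsmul_eq_mul]
      _ ≤ _ := by
        refine mul_le_mul_of_nonneg_right ?_ (by positivity)
        exact_mod_cast hcard
  have hB : ∑ j ∈ Tᶜ, ‖v j‖ ≤ S / 2 := by
    calc ∑ j ∈ Tᶜ, ‖v j‖ ≤ ∑ _j ∈ Tᶜ, S / (2 * M) := Finset.sum_le_sum fun j hj => by
          rw [hT, Finset.mem_compl, Finset.mem_filter] at hj
          push Not at hj
          rw [le_div_iff₀ (by positivity), mul_comm]
          exact (hj (Finset.mem_univ j)).le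
      _ = (Tᶜ).card * (S / (2 * M)) := by rw [Finset.sum_const, nsmul_eq_mul]
      _ ≤ M * (S / (2 * M)) := by
        refine mul_le_mul_of_nonneg_right ?_ (by positivity)
        have := Finset.card_le_univ (Tᶜ)
        rw [Fintype.card_fin] at this
        exact_mod_cast this
      _ = S / 2 := by field_simp
  have : 2 * k * (S / (4 * (k + 1))) < S / 2 := by
    rw [mul_div_assoc', div_lt_div_iff₀ hk two_pos]
    nlinarith
  linarith

theorem enorm_sum_rpow_le (k : ℕ) {M : ℕ} (hM : 0 < M) {u : ℝ} (hu : 0 < u) (v : Fin M → ℂ) :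
    ‖∑ j, v j‖ₑ ^ ((k + 1) * u)
      ≤ ENNReal.ofReal (4 * (k + 1)) ^ ((k + 1) * u) * ∑ j, ‖v j‖ₑ ^ ((k + 1) * u)
        + ENNReal.ofReal (2 * M) ^ ((k + 1) * u)
          * ∑ c ∈ spacedTuples (k + 1) M, ∏ i, ‖v (c i)‖ₑ ^ u := by
  have hp : 0 ≤ ((k : ℝ) + 1) * u := by positivity
  have conv : ∀ {A : ℝ} {z w : ℂ}, 0 ≤ A → ‖z‖ ≤ A * ‖w‖ → ‖z‖ₑ ≤ ENNReal.ofReal A * ‖w‖ₑ := by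
    intro A z w hA h
    rw [← ofReal_norm, ← ofReal_norm, ← ENNReal.ofReal_mul hA]
    exact ENNReal.ofReal_le_ofReal h
  rcases broad_or_narrow k hM v with ⟨j, hj⟩ | ⟨c, hc, h⟩
  · refine le_trans ?_ le_self_add
    calc _ ≤ (ENNReal.ofReal (4 * (k + 1)) * ‖v j‖ₑ) ^ ((k + 1) * u) :=
          ENNReal.rpow_le_rpow (conv (by positivity) hj) hp
      _ = ENNReal.ofReal (4 * (k + 1)) ^ ((k + 1) * u) * ‖v j‖ₑ ^ ((k + 1) * u) :=
          ENNReal.mul_rpow_of_nonneg _ _ hp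
      _ ≤ _ := mul_le_mul_right (Finset.single_le_sum
          (f := fun j => ‖v j‖ₑ ^ ((k + 1) * u)) (fun _ _ => zero_le) (Finset.mem_univ j)) _
  · refine le_trans ?_ le_add_self
    have e : ∀ z : ℝ≥0∞, z ^ (((k : ℝ) + 1) * u) = ∏ _i : Fin (k + 1), z ^ u := by
      intro z
      rw [show ((k : ℝ) + 1) * u = u * ((k + 1 : ℕ) : ℝ) by push_cast; ring, ENNReal.rpow_mul,
        ENNReal.rpow_natCast, Finset.prod_const, Finset.card_univ, Fintype.card_fin]
    have hsum : ∏ i, ‖v (c i)‖ₑ ^ u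
        ≤ ∑ c ∈ spacedTuples (k + 1) M, ∏ i, ‖v (c i)‖ₑ ^ u :=
      Finset.single_le_sum (f := fun c : Fin (k + 1) → Fin M => ∏ i, ‖v (c i)‖ₑ ^ u)
        (fun _ _ => zero_le) hc
    calc _ ≤ ENNReal.ofReal (2 * M) ^ ((k + 1) * u) * ∏ i, ‖v (c i)‖ₑ ^ u := by
          rw [e, e, ← Finset.prod_mul_distrib]
          refine Finset.prod_le_prod' fun i _ => ?_
          rw [← ENNReal.mul_rpow_of_nonneg _ _ hu.le]
          exact ENNReal.rpow_le_rpow (conv (by positivity) (h i)) hu.le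
      _ ≤ _ := mul_le_mul_right hsum _

end BroadNarrow

section Iteration

variable {X : Type*} [MeasurableSpace X] {μ : Measure X} {ι : Type*} [Fintype ι]

/-- A self-improving inequality can be iterated to an integral bound. -/
theorem lintegral_le_two_mul_of_selfImproving {f B : X → ℝ≥0∞} {L : ι → X → X} {θ D : ℝ≥0∞}
    (hB : Measurable B) (hL : ∀ j, Measurable (L j))
    (hLi : ∀ j, ∀ g : X → ℝ≥0∞, Measurable g → ∫⁻ x, g (L j x) ∂μ = D * ∫⁻ x, g x ∂μ)
    (hf1 : ∀ x, f x ≤ 1) (hf : ∀ x, f x ≤ θ * ∑ j, f (L j x) + B x)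
    (hθ : θ * Fintype.card ι ≤ 2⁻¹) (hθD : θ * (Fintype.card ι * D) ≤ 2⁻¹) :
    ∫⁻ x, f x ∂μ ≤ 2 * ∫⁻ x, B x ∂μ := by
  obtain ⟨T, hT⟩ : ∃ T : (X → ℝ≥0∞) → X → ℝ≥0∞, T = fun g x => θ * ∑ j, g (L j x) := ⟨_, rfl⟩
  have hTm : ∀ n, Measurable (T^[n] B) := by
    intro n
    induction n with
    | zero => exact hB
    | succ n ih =>
      rw [Function.iterate_succ_apply']
      generalize T^[n] B = g at ih
      rw [hT]
      exact (Finset.measurable_sum _ fun j _ => ih.comp (hL j)).const_mul _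
  have hTi : ∀ n, ∫⁻ x, T^[n] B x ∂μ ≤ 2⁻¹ ^ n * ∫⁻ x, B x ∂μ := by
    intro n
    induction n with
    | zero => simp
    | succ n ih =>
      have hm := hTm n
      have hmj : ∀ j, Measurable fun x => (T^[n] B) (L j x) := fun j => hm.comp (hL j)
      rw [Function.iterate_succ_apply']
      generalize T^[n] B = g at ih hm hmj
      rw [hT]
      simp only
      rw [lintegral_const_mul _ (Finset.measurable_sum _ fun j _ => hmj j),
        lintegral_finsetSum _ fun j _ => hmj j]
      simp_rw [hLi _ g hm]
      rw [Finset.sum_const, Finset.card_univ, nsmul_eq_mul, ← mul_assoc, ← mul_assoc,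
        mul_assoc θ, pow_succ']
      rw [mul_assoc 2⁻¹]
      exact mul_le_mul' hθD ih
  have hpt : ∀ n x, f x ≤ ∑ i ∈ Finset.range n, T^[i] B x + 2⁻¹ ^ n := by
    intro n
    induction n with
    | zero => intro x; simpa using hf1 x
    | succ n ih =>
      intro x
      calc f x ≤ θ * ∑ j, f (L j x) + B x := hf x
        _ ≤ θ * ∑ j, (∑ i ∈ Finset.range n, T^[i] B (L j x) + 2⁻¹ ^ n) + B x := by
          gcongr with j _
          exact ih _
        _ = ∑ i ∈ Finset.range n, θ * ∑ j, T^[i] B (L j x) + θ * Fintype.card ι * 2⁻¹ ^ n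
            + B x := by
          rw [Finset.sum_add_distrib, Finset.sum_const, Finset.card_univ, nsmul_eq_mul, mul_add,
            Finset.sum_comm, Finset.mul_sum, mul_assoc]
        _ = ∑ i ∈ Finset.range (n + 1), T^[i] B x + θ * Fintype.card ι * 2⁻¹ ^ n := by
          rw [Finset.sum_range_succ']
          simp_rw [Function.iterate_succ_apply']
          rw [hT]
          simp only [Function.iterate_zero, id]
          ring
        _ ≤ _ := by
          rw [pow_succ']
          gcongr
  have hlim : ∀ x, f x ≤ ∑' i, T^[i] B x := by
    intro x
    refine ge_of_tendsto' (x := Filter.atTop)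
      (f := fun n : ℕ => ∑' i, T^[i] B x + (2⁻¹ : ℝ≥0∞) ^ n) ?_ fun n =>
      (hpt n x).trans (add_le_add_left (ENNReal.sum_le_tsum _) _)
    have := ENNReal.tendsto_pow_atTop_nhds_zero_of_lt_one (r := (2⁻¹ : ℝ≥0∞))
      (ENNReal.inv_lt_one.2 ENNReal.one_lt_two)
    simpa using this.const_add (∑' i, T^[i] B x)
  calc ∫⁻ x, f x ∂μ ≤ ∫⁻ x, ∑' i, T^[i] B x ∂μ := lintegral_mono hlim
    _ = ∑' i, ∫⁻ x, T^[i] B x ∂μ := lintegral_tsum fun i => (hTm i).aemeasurable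
    _ ≤ ∑' i, 2⁻¹ ^ i * ∫⁻ x, B x ∂μ := ENNReal.tsum_le_tsum hTi
    _ = 2 * ∫⁻ x, B x ∂μ := by
      rw [ENNReal.tsum_mul_right, ENNReal.tsum_geometric, ENNReal.one_sub_inv_two, inv_inv]

end Iteration

section Rescaling

variable {k : ℕ}

/-- The linear action on coefficients of the substitution `ξ₁ = h + l ξ₁'`. -/
def rescale (k : ℕ) (h l : ℝ) : Matrix (Idx k) (Idx k) ℝ := fun γ β =>
  if (β.1.2 : ℕ) = γ.1.2 then
    (β.1.1 : ℕ).choose γ.1.1 * h ^ ((β.1.1 : ℕ) - γ.1.1) * l ^ (γ.1.1 : ℕ)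
  else 0

theorem sum_rescale_col (h l s t : ℝ) (β : Idx k) :
    ∑ γ : Idx k, rescale k h l γ β * s ^ (γ.1.1 : ℕ) * t ^ (γ.1.2 : ℕ)
      = (h + l * s) ^ (β.1.1 : ℕ) * t ^ (β.1.2 : ℕ)
        - if (β.1.2 : ℕ) = 0 then h ^ (β.1.1 : ℕ) else 0 := by
  obtain ⟨a, ha⟩ : ∃ a : ℕ, a = β.1.1 := ⟨_, rfl⟩
  obtain ⟨b, hb⟩ : ∃ b : ℕ, b = β.1.2 := ⟨_, rfl⟩
  have hab : a + b ≤ k := by rw [ha, hb]; exact β.2.2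
  unfold rescale
  rw [← ha, ← hb]
  rw [Idx.sum_eq k fun i j =>
    (if b = j then (a.choose i : ℝ) * h ^ (a - i) * l ^ i else 0) * s ^ i * t ^ j]
  have h1 : ∀ i ∈ Finset.range (k + 1), ∑ j ∈ Finset.range (k + 1),
      (if 1 ≤ i + j ∧ i + j ≤ k then
        (if b = j then (a.choose i : ℝ) * h ^ (a - i) * l ^ i else 0) * s ^ i * t ^ j else 0)
      = (l * s) ^ i * h ^ (a - i) * a.choose i * t ^ b
        - if i = 0 then (if b = 0 then h ^ a else 0) else 0 := by
    intro i _
    rw [Finset.sum_eq_single b]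
    · rcases lt_or_ge a i with hi | hi
      · have : i ≠ 0 := by omega
        simp [Nat.choose_eq_zero_of_lt hi, this]
      · rcases Nat.eq_zero_or_pos (i + b) with h0 | h0
        · obtain ⟨rfl, rfl⟩ : i = 0 ∧ b = 0 := by omega
          simp
        · have h2 : i + b ≤ k := by omega
          rw [if_pos ⟨h0, h2⟩, if_pos rfl]
          have : (if i = 0 then (if b = 0 then h ^ a else 0) else 0) = 0 := by
            split_ifs <;> first | rfl | omega
          rw [this, mul_pow]; ring
    · intro j _ hj
      rw [if_neg hj.symm]; simp
    · intro hb'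
      exact absurd (Finset.mem_range.2 (by omega)) hb'
  rw [Finset.sum_congr rfl h1, Finset.sum_sub_distrib, Finset.sum_ite_eq' , if_pos (by simp),
    ← Finset.sum_mul, add_comm h, add_pow]
  congr 2
  refine (Finset.sum_subset (Finset.range_subset_range.2 (by omega)) fun i _ hi => ?_).symm
  rw [Nat.choose_eq_zero_of_lt (by simpa using hi)]; simp

theorem Pphase_rescale (x : Idx k → ℝ) (h l s t : ℝ) :
    Pphase k x ![h + l * s, t]
      = (∑ β : Idx k, x β * if (β.1.2 : ℕ) = 0 then h ^ (β.1.1 : ℕ) else 0)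
        + Pphase k ((rescale k h l).mulVec x) ![s, t] := by
  unfold Pphase
  simp only [Matrix.cons_val_zero, Matrix.cons_val_one, Matrix.mulVec, dotProduct]
  simp_rw [Finset.sum_mul]
  rw [Finset.sum_comm, ← Finset.sum_add_distrib]
  refine Finset.sum_congr rfl fun β _ => ?_
  have := sum_rescale_col h l s t β
  calc _ = x β * ((h + l * s) ^ (β.1.1 : ℕ) * t ^ (β.1.2 : ℕ)) := by ring
    _ = x β * ((if (β.1.2 : ℕ) = 0 then h ^ (β.1.1 : ℕ) else 0) +
        ∑ γ : Idx k, rescale k h l γ β * s ^ (γ.1.1 : ℕ) * t ^ (γ.1.2 : ℕ)) := by rw [this]; ring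
    _ = _ := by
      rw [mul_add, Finset.mul_sum]
      congr 1
      exact Finset.sum_congr rfl fun γ _ => by ring

theorem Idx.injective_key :
    Function.Injective fun β : Idx k => (β.1.1 : ℕ) * (k + 1) + (β.1.2 : ℕ) := by
  intro β γ h
  have hb : (β.1.2 : ℕ) < k + 1 := β.1.2.2
  have hg : (γ.1.2 : ℕ) < k + 1 := γ.1.2.2
  have h2 : (β.1.2 : ℕ) = γ.1.2 := by
    have := congrArg (· % (k + 1)) h
    simpa [Nat.add_mod, Nat.mod_eq_of_lt hb, Nat.mod_eq_of_lt hg] using this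
  have h1 : (β.1.1 : ℕ) = γ.1.1 := by
    simp only [h2, Nat.add_right_cancel_iff] at h
    exact Nat.eq_of_mul_eq_mul_right (Nat.succ_pos k) h
  exact Subtype.ext (Prod.ext (Fin.ext h1) (Fin.ext h2))

theorem det_rescale (h l : ℝ) : (rescale k h l).det = ∏ β : Idx k, l ^ (β.1.1 : ℕ) := by
  rw [Matrix.det_of_blockTriangular_injective (rescale k h l) _ Idx.injective_key]
  · refine Finset.prod_congr rfl fun β _ => ?_
    simp [rescale]
  · intro γ β hlt
    simp only [rescale]
    split_ifs with he
    · rw [he] at hlt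
      have : (β.1.1 : ℕ) < γ.1.1 := by
        by_contra! hc
        have := Nat.mul_le_mul_right (k + 1) hc
        omega
      simp [Nat.choose_eq_zero_of_lt this]
    · rfl

theorem abs_det_rescale (h : ℝ) {l : ℝ} (hl : 0 < l) :
    |(rescale k h l).det| = l ^ ((k : ℝ) * (k + 1) * (k + 2) / 6) := by
  rw [det_rescale, Finset.prod_pow_eq_pow_sum, abs_of_pos (by positivity), ← Idx.sum_fst,
    ← rpow_natCast]
  push_cast; rfl

theorem lintegral_rescale (h : ℝ) {l : ℝ} (hl : 0 < l) {g : (Idx k → ℝ) → ℝ≥0∞}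
    (hg : Measurable g) :
    ∫⁻ x, g ((rescale k h l).mulVec x)
      = ENNReal.ofReal ((l ^ ((k : ℝ) * (k + 1) * (k + 2) / 6))⁻¹) * ∫⁻ x, g x := by
  have hd := abs_det_rescale (k := k) h hl
  have hne : (rescale k h l).det ≠ 0 := by
    rw [← abs_pos, hd]; positivity
  have hm := Real.map_matrix_volume_pi_eq_smul_volume_pi hne
  have hmeas : Measurable (Matrix.toLin' (rescale k h l)) :=
    (LinearMap.continuous_of_finiteDimensional _).measurable
  have := lintegral_map (μ := volume) hg hmeas
  rw [hm, lintegral_smul_measure, abs_inv, hd, smul_eq_mul] at this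
  rw [this]
  simp

theorem measurable_mulVec_rescale (h l : ℝ) :
    Measurable fun x : Idx k → ℝ => (rescale k h l).mulVec x := by
  have : Continuous (Matrix.toLin' (rescale k h l)) :=
    LinearMap.continuous_of_finiteDimensional _
  exact this.measurable

theorem slice_rescale (x : Idx k → ℝ) (h l s : ℝ) :
    slice k x (h + l * s)
      = expTwoPi (∑ β : Idx k, x β * if (β.1.2 : ℕ) = 0 then h ^ (β.1.1 : ℕ) else 0)
        * slice k ((rescale k h l).mulVec x) s := by
  unfold slice
  simp_rw [Pphase_rescale, expTwoPi_add]
  rw [intervalIntegral.integral_const_mul]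

theorem norm_bandPart_rescale (a : ℝ) (x : Idx k → ℝ) (h : ℝ) {l : ℝ} (hl : 0 < l) :
    ‖bandPart k a (Icc h (h + l)) x‖
      = l * ‖bandPart k a (Icc 0 1) ((rescale k h l).mulVec x)‖ := by
  unfold bandPart
  rw [integral_Icc_eq_integral_Ioc, ← intervalIntegral.integral_of_le (by linarith),
    integral_Icc_eq_integral_Ioc, ← intervalIntegral.integral_of_le (by norm_num)]
  have h1 := intervalIntegral.smul_integral_comp_add_mul (a := 0) (b := 1)
    (fun s => band a (slice k x s)) l h
  simp only [mul_zero, add_zero, mul_one] at h1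
  rw [← h1, norm_smul, Real.norm_of_nonneg hl.le]
  congr 1
  simp_rw [slice_rescale, band_mul (norm_expTwoPi _)]
  rw [intervalIntegral.integral_const_mul, norm_mul, norm_expTwoPi, one_mul]

theorem norm_slice_le (x : Idx k → ℝ) (s : ℝ) : ‖slice k x s‖ ≤ 1 := by
  rw [slice_eq, norm_mul, norm_expTwoPi, one_mul]
  exact norm_highSlice_le _ _

theorem measurable_slice (x : Idx k → ℝ) : Measurable (slice k x) := by
  have h1 : Measurable fun s => highSlice k (highPart x) s :=
    continuous_highSlice.measurable.comp (f := fun s => (highPart x, s)) (by fun_prop)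
  have h2 : Measurable fun s : ℝ => expTwoPi (∑ m : Fin k, lowPart x m * s ^ ((m : ℕ) + 1)) := by
    refine Continuous.measurable ?_
    fun_prop
  have : slice k x = fun s => expTwoPi (∑ m : Fin k, lowPart x m * s ^ ((m : ℕ) + 1))
      * highSlice k (highPart x) s := funext (slice_eq x)
  rw [this]
  exact h2.mul h1

theorem measurable_bandPart (a : ℝ) (J : Set ℝ) : Measurable (bandPart k a J) := by
  have := (measurable_setIntegral_band (k := k) a J).comp
    measurePreserving_highPart_lowPart.measurable
  rwa [show bandPart k a J = _ from funext fun x => bandPart_eq a J x]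

theorem intervalIntegrable_band_slice {a : ℝ} (ha : 0 ≤ a) (x : Idx k → ℝ) (p q : ℝ) :
    IntervalIntegrable (fun s => band a (slice k x s)) volume p q := by
  refine (intervalIntegrable_const (c := a)).mono_fun
    ((measurable_band a).comp (measurable_slice x)).aestronglyMeasurable
    (Filter.Eventually.of_forall fun s => ?_)
  rw [Real.norm_of_nonneg ha]
  exact norm_band_le ha _

theorem norm_bandPart_le {a : ℝ} (ha : 0 ≤ a) (x : Idx k → ℝ) :
    ‖bandPart k a (Icc 0 1) x‖ ≤ a := by
  have := norm_setIntegral_le_of_norm_le_const (μ := volume) (s := Icc (0 : ℝ) 1) (C := a)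
    (f := fun s => band a (slice k x s)) (by simp) fun s _ => norm_band_le ha _
  simpa [bandPart] using this

theorem bandPart_eq_sum {a : ℝ} (ha : 0 ≤ a) (x : Idx k → ℝ) {M : ℕ} (hM : 0 < M) :
    bandPart k a (Icc 0 1) x
      = ∑ j : Fin M, bandPart k a (Icc ((j : ℝ) / M) ((j : ℝ) / M + (M : ℝ)⁻¹)) x := by
  have hM' : (0 : ℝ) < M := by exact_mod_cast hM
  have h1 : ∀ p q : ℝ, p ≤ q →
      bandPart k a (Icc p q) x = ∫ s in p..q, band a (slice k x s) := by
    intro p q hpq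
    unfold bandPart
    rw [integral_Icc_eq_integral_Ioc, intervalIntegral.integral_of_le hpq]
  rw [h1 0 1 zero_le_one]
  have h2 := intervalIntegral.sum_integral_adjacent_intervals (μ := volume)
    (f := fun s => band a (slice k x s)) (a := fun j : ℕ => (j : ℝ) / M) (n := M)
    fun j _ => intervalIntegrable_band_slice ha x _ _
  simp only [Nat.cast_zero, zero_div, div_self hM'.ne'] at h2
  rw [← h2, Finset.sum_range]
  refine Finset.sum_congr rfl fun j _ => ?_
  rw [h1 _ _ (by linarith [inv_pos.2 hM'])]
  congr 1
  push_cast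
  field_simp

end Rescaling

section BandEstimate

variable {k : ℕ}

theorem exists_nat_mul_rpow_neg_le (A : ℝ) {b : ℝ} (hb : 0 < b) :
    ∃ M : ℕ, 0 < M ∧ A * (M : ℝ) ^ (-b) ≤ 2⁻¹ := by
  have h : Filter.Tendsto (fun M : ℕ => A * (M : ℝ) ^ (-b)) Filter.atTop (nhds (A * 0)) :=
    ((tendsto_rpow_neg_atTop hb).comp tendsto_natCast_atTop_atTop).const_mul A
  rw [mul_zero] at h
  obtain ⟨M, h1, h2⟩ := ((h.eventually (ge_mem_nhds (by norm_num : (0 : ℝ) < 2⁻¹))).and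
    (Filter.eventually_gt_atTop 0)).exists
  exact ⟨M, h2, h1⟩

theorem exists_lintegral_spacedTuple_le (hk : 2 ≤ k) {u δ : ℝ} (hu : 2 ≤ u) (hδ : 0 < δ)
    (hδ1 : δ ≤ 1) {M : ℕ} (hM : 0 < M) {c : Fin (k + 1) → Fin M}
    (hc : c ∈ spacedTuples (k + 1) M) :
    ∃ C, 0 ≤ C ∧ ∀ a, 0 < a → a ≤ 1 →
      ∫⁻ x : Idx k → ℝ, ∏ i : Fin (k + 1), ‖bandPart k a (Icc ((c i : ℝ) / M)
          ((c i : ℝ) / M + (M : ℝ)⁻¹)) x‖ₑ ^ u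
        ≤ ENNReal.ofReal (C * a ^ ((k + 1) * u - ((k : ℝ) * (k + 1) * (k + 2) / 6 + 2)
          - (k - 1) * δ)) := by
  have hM' : (0 : ℝ) < M := by exact_mod_cast hM
  have hMi : (0 : ℝ) < (M : ℝ)⁻¹ := inv_pos.2 hM'
  have hM1 : (M : ℝ)⁻¹ ≤ 1 := inv_le_one_of_one_le₀ (by exact_mod_cast hM)
  have hcM : ∀ i, (c i : ℝ) / M + (M : ℝ)⁻¹ ≤ 1 := by
    intro i
    rw [div_add' _ _ _ hM'.ne', inv_mul_cancel₀ hM'.ne', div_le_one hM']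
    exact_mod_cast (c i).2
  simp only [spacedTuples, Finset.mem_filter, Finset.mem_univ, true_and] at hc
  obtain ⟨lo, hlo⟩ : ∃ lo : ℕ → ℝ, lo = fun i =>
    if h : i < k + 1 then (c ⟨i, h⟩ : ℝ) / M else 2 * i := ⟨_, rfl⟩
  have hloc : ∀ i : Fin (k + 1), lo i = (c i : ℝ) / M := fun i => by
    rw [hlo]
    simp only [i.2, dif_pos, Fin.eta]
  have hsep : ∀ i j, i < j → lo i + (M : ℝ)⁻¹ + (M : ℝ)⁻¹ ≤ lo j := by
    intro i j hij
    by_cases hj : j < k + 1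
    · have hi : i < k + 1 := hij.trans hj
      have := hc ⟨i, hi⟩ ⟨j, hj⟩ hij
      rw [hlo]
      simp only [hi, hj, dif_pos]
      have h2 : ((c ⟨i, hi⟩ : ℕ) : ℝ) + 2 ≤ (c ⟨j, hj⟩ : ℕ) := by exact_mod_cast this
      rw [div_add' _ _ _ hM'.ne', inv_mul_cancel₀ hM'.ne', div_add' _ _ _ hM'.ne',
        inv_mul_cancel₀ hM'.ne']
      gcongr
      linarith
    · have hj' : (1 : ℝ) ≤ j := by exact_mod_cast (by omega : 1 ≤ j)
      have hij' : (i : ℝ) + 1 ≤ j := by exact_mod_cast hij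
      by_cases hi : i < k + 1
      · rw [hlo]
        simp only [hi, hj, dif_pos, dif_neg, not_false_eq_true]
        have := hcM ⟨i, hi⟩
        linarith
      · rw [hlo]
        simp only [hi, hj, dif_neg, not_false_eq_true]
        linarith
  obtain ⟨C, hC, h⟩ := exists_lintegral_config_le hk hu hδ hδ1 (lo := lo)
    (hi := fun i => lo i + (M : ℝ)⁻¹) hMi (fun i => by linarith) hsep fun i => by
      rw [hloc]
      exact Icc_subset_Icc (by positivity) (hcM i)
  refine ⟨C, hC, fun a ha ha1 => ?_⟩
  have := h a ha ha1
  simp only [hloc] at this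
  exact this

theorem enorm_bandPart_rescale (a : ℝ) (x : Idx k → ℝ) (h : ℝ) {l : ℝ} (hl : 0 < l) :
    ‖bandPart k a (Icc h (h + l)) x‖ₑ
      = ENNReal.ofReal l * ‖bandPart k a (Icc 0 1) ((rescale k h l).mulVec x)‖ₑ := by
  rw [← ofReal_norm, norm_bandPart_rescale a x h hl, ENNReal.ofReal_mul hl.le, ofReal_norm]

theorem exists_lintegral_bandPart_le (hk : 2 ≤ k) {p δ : ℝ}
    (hp : (k : ℝ) * (k + 1) * (k + 2) / 6 + 2 < p) (hδ : 0 < δ) (hδ1 : δ ≤ 1) :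
    ∃ C, 0 ≤ C ∧ ∀ a, 0 < a → a ≤ 1 →
      ∫⁻ x : Idx k → ℝ, ‖bandPart k a (Icc 0 1) x‖ₑ ^ p
        ≤ ENNReal.ofReal (C * a ^ (p - ((k : ℝ) * (k + 1) * (k + 2) / 6 + 2) - (k - 1) * δ)) := by
  have hk' : (2 : ℝ) ≤ k := by exact_mod_cast hk
  obtain ⟨Q, hQ⟩ : ∃ Q : ℝ, Q = (k : ℝ) * (k + 1) * (k + 2) / 6 := ⟨_, rfl⟩
  have hQ0 : 0 ≤ Q := by rw [hQ]; positivity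
  have hp0 : 0 < p := by rw [← hQ] at hp; linarith
  obtain ⟨u, hu⟩ : ∃ u : ℝ, u = p / (k + 1) := ⟨_, rfl⟩
  have hup : ((k : ℝ) + 1) * u = p := by rw [hu]; field_simp
  have hu2 : 2 ≤ u := by
    rw [hu, le_div_iff₀ (by positivity)]
    nlinarith [sq_nonneg ((k : ℝ) - 2), mul_nonneg (sub_nonneg.2 hk') (sq_nonneg ((k : ℝ) - 2)), mul_nonneg (sub_nonneg.2 hk') (sub_nonneg.2 hk')]
  obtain ⟨A, hA⟩ : ∃ A : ℝ, A = 4 * ((k : ℝ) + 1) := ⟨_, rfl⟩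
  have hA0 : 0 ≤ A := by rw [hA]; positivity
  obtain ⟨M, hM, hMA⟩ := exists_nat_mul_rpow_neg_le (A ^ p) (b := p - 1 - Q)
    (by rw [← hQ] at hp; linarith)
  have hM' : (0 : ℝ) < M := by exact_mod_cast hM
  have hM1 : (1 : ℝ) ≤ M := by exact_mod_cast hM
  have hMi : (0 : ℝ) < (M : ℝ)⁻¹ := inv_pos.2 hM'
  choose! C hC0 hC using fun c (hc : c ∈ spacedTuples (k + 1) M) =>
    exists_lintegral_spacedTuple_le hk hu2 hδ hδ1 hM hc
  obtain ⟨θ, hθ⟩ : ∃ θ : ℝ≥0∞, θ = ENNReal.ofReal (A ^ p * ((M : ℝ)⁻¹) ^ p) := ⟨_, rfl⟩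
  have hθD : θ * (Fintype.card (Fin M) * ENNReal.ofReal ((((M : ℝ)⁻¹) ^ Q)⁻¹)) ≤ 2⁻¹ := by
    rw [hθ, Fintype.card_fin, ← ENNReal.ofReal_natCast, ← ENNReal.ofReal_mul (by positivity),
      ← ENNReal.ofReal_mul (by positivity), show (2⁻¹ : ℝ≥0∞) = ENNReal.ofReal 2⁻¹ by
        rw [ENNReal.ofReal_inv_of_pos two_pos]; simp]
    refine ENNReal.ofReal_le_ofReal (le_trans (le_of_eq ?_) hMA)
    rw [inv_rpow hM'.le, inv_rpow hM'.le, inv_inv, mul_assoc, ← rpow_neg hM'.le,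
      show -(p - 1 - Q) = -p + (1 + Q) by ring, rpow_add hM', rpow_add hM', rpow_one]
  have hD1 : 1 ≤ ENNReal.ofReal ((((M : ℝ)⁻¹) ^ Q)⁻¹) := by
    rw [← ENNReal.ofReal_one]
    refine ENNReal.ofReal_le_ofReal ?_
    rw [inv_rpow hM'.le, inv_inv]
    exact one_le_rpow hM1 hQ0
  have hθ1 : θ * Fintype.card (Fin M) ≤ 2⁻¹ :=
    le_trans (mul_le_mul_right (by simpa using mul_le_mul_right hD1 (Fintype.card (Fin M) : ℝ≥0∞)) _) hθD
  refine ⟨2 * ((2 * M) ^ p * ∑ c ∈ spacedTuples (k + 1) M, C c),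
    mul_nonneg zero_le_two (mul_nonneg (by positivity) (Finset.sum_nonneg hC0)),
    fun a ha ha1 => ?_⟩
  obtain ⟨B, hB⟩ : ∃ B : (Idx k → ℝ) → ℝ≥0∞, B = fun x => ENNReal.ofReal (2 * M) ^ p
    * ∑ c ∈ spacedTuples (k + 1) M, ∏ i, ‖bandPart k a (Icc ((c i : ℝ) / M)
          ((c i : ℝ) / M + (M : ℝ)⁻¹)) x‖ₑ ^ u := ⟨_, rfl⟩
  have hprodm : ∀ c : Fin (k + 1) → Fin M, Measurable fun x : Idx k → ℝ =>
      ∏ i, ‖bandPart k a (Icc ((c i : ℝ) / M) ((c i : ℝ) / M + (M : ℝ)⁻¹)) x‖ₑ ^ u := fun c =>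
    Finset.measurable_prod _ fun i _ => (measurable_bandPart _ _).enorm.pow_const u
  have hBm : Measurable B := by
    rw [hB]
    exact (Finset.measurable_sum _ fun c _ => hprodm c).const_mul _
  have hself := lintegral_le_two_mul_of_selfImproving (μ := (volume : Measure (Idx k → ℝ)))
    (f := fun x => ‖bandPart k a (Icc 0 1) x‖ₑ ^ p) (B := B)
    (L := fun (j : Fin M) x => (rescale k ((j : ℝ) / M) (M : ℝ)⁻¹).mulVec x) (θ := θ)
    (D := ENNReal.ofReal ((((M : ℝ)⁻¹) ^ Q)⁻¹)) hBm
    (fun j => measurable_mulVec_rescale _ _)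
    (fun j g hg => by rw [lintegral_rescale _ hMi hg, hQ])
    (fun x => by
      refine ENNReal.rpow_le_one ?_ hp0.le
      rw [← ofReal_norm]
      exact ENNReal.ofReal_le_one.2 ((norm_bandPart_le ha.le x).trans ha1))
    (fun x => by
      have h := enorm_sum_rpow_le k hM (lt_of_lt_of_le two_pos hu2) fun j : Fin M =>
        bandPart k a (Icc ((j : ℝ) / M) ((j : ℝ) / M + (M : ℝ)⁻¹)) x
      rw [← bandPart_eq_sum ha.le x hM, hup, ← hA] at h
      refine h.trans (le_of_eq ?_)
      rw [hB]
      congr 1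
      simp_rw [enorm_bandPart_rescale a x _ hMi, ENNReal.mul_rpow_of_nonneg _ _ hp0.le]
      rw [← Finset.mul_sum, ← mul_assoc, hθ, ENNReal.ofReal_rpow_of_nonneg hA0 hp0.le,
        ENNReal.ofReal_rpow_of_nonneg hMi.le hp0.le, ← ENNReal.ofReal_mul (by positivity)])
    hθ1 hθD
  refine hself.trans ?_
  have hBi : ∫⁻ x, B x = ENNReal.ofReal (2 * M) ^ p * ∑ c ∈ spacedTuples (k + 1) M,
      ∫⁻ x : Idx k → ℝ, ∏ i, ‖bandPart k a (Icc ((c i : ℝ) / M)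
          ((c i : ℝ) / M + (M : ℝ)⁻¹)) x‖ₑ ^ u := by
    rw [hB, lintegral_const_mul _ (Finset.measurable_sum _ fun c _ => hprodm c),
      lintegral_finsetSum _ fun c _ => hprodm c]
  have h2M : (0 : ℝ) ≤ 2 * M := by positivity
  have hsum : ENNReal.ofReal ((∑ c ∈ spacedTuples (k + 1) M, C c)
        * a ^ (p - ((k : ℝ) * (k + 1) * (k + 2) / 6 + 2) - (k - 1) * δ))
      = ∑ c ∈ spacedTuples (k + 1) M, ENNReal.ofReal
        (C c * a ^ (p - ((k : ℝ) * (k + 1) * (k + 2) / 6 + 2) - (k - 1) * δ)) := by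
    rw [Finset.sum_mul]
    exact ENNReal.ofReal_sum_of_nonneg fun c hc => mul_nonneg (hC0 c hc) (rpow_nonneg ha.le _)
  have hsplit : ∀ z : ℝ, ENNReal.ofReal (2 * ((2 * M) ^ p * z))
      = 2 * (ENNReal.ofReal (2 * M) ^ p * ENNReal.ofReal z) := fun z => by
    rw [ENNReal.ofReal_mul zero_le_two, ENNReal.ofReal_mul (rpow_nonneg h2M p),
      ← ENNReal.ofReal_rpow_of_nonneg h2M hp0.le, ENNReal.ofReal_ofNat]
  rw [hBi, mul_assoc (2 : ℝ), mul_assoc ((2 * (M : ℝ)) ^ p), hsplit, hsum]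
  refine mul_le_mul_right (mul_le_mul_right (Finset.sum_le_sum fun c hc => ?_) _) _
  have := hC c hc a ha ha1
  rwa [hup] at this

end BandEstimate

section Summation

variable {k : ℕ}

theorem Eone_eq (x : Idx k → ℝ) : Eone k x = ∫ s in Icc (0 : ℝ) 1, slice k x s := by
  have hE : ∀ ξ : Fin 2 → ℝ, Complex.exp (2 * Real.pi * Complex.I * (Pphase k x ξ))
      = (fun q : ℝ × ℝ => expTwoPi (Pphase k x ![q.1, q.2]))
        (MeasurableEquiv.finTwoArrow ξ) := by
    intro ξ
    have : ![ξ 0, ξ 1] = ξ := by ext i; fin_cases i <;> rfl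
    simp only [MeasurableEquiv.finTwoArrow_apply, this]
    rfl
  have hset : Icc (0 : Fin 2 → ℝ) 1
      = MeasurableEquiv.finTwoArrow ⁻¹' (Icc (0 : ℝ) 1 ×ˢ Icc (0 : ℝ) 1) := by
    ext ξ
    simp only [mem_Icc, Pi.le_def, Fin.forall_fin_two, mem_preimage, mem_prod,
      MeasurableEquiv.finTwoArrow_apply, Pi.zero_apply, Pi.one_apply]
    tauto
  have hc : Continuous fun q : ℝ × ℝ => expTwoPi (Pphase k x ![q.1, q.2]) := by
    unfold Pphase
    simp only [Matrix.cons_val_zero, Matrix.cons_val_one]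
    fun_prop
  unfold Eone
  simp_rw [hE]
  rw [hset]
  refine ((volume_preserving_finTwoArrow ℝ).setIntegral_preimage_emb
    MeasurableEquiv.finTwoArrow.measurableEmbedding
    (fun q : ℝ × ℝ => expTwoPi (Pphase k x ![q.1, q.2])) _).trans ?_
  rw [Measure.volume_eq_prod, setIntegral_prod _
    (hc.continuousOn.integrableOn_compact (isCompact_Icc.prod isCompact_Icc))]
  refine integral_congr_ae (Filter.Eventually.of_forall fun s => ?_)
  simp only [slice]
  rw [integral_Icc_eq_integral_Ioc, intervalIntegral.integral_of_le zero_le_one]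

theorem hasSum_band {z : ℂ} (hz : ‖z‖ ≤ 1) : HasSum (fun n : ℕ => band ((1 / 2) ^ n) z) z := by
  rcases eq_or_ne z 0 with rfl | h0
  · simp [band]
  obtain ⟨n, hn1, hn2⟩ := exists_nat_pow_near_of_lt_one (norm_pos_iff.2 h0) hz
    (by norm_num : (0 : ℝ) < 1 / 2) (by norm_num)
  have h := hasSum_single (f := fun n : ℕ => band ((1 / 2) ^ n) z) n fun m hm => by
    unfold band
    rw [if_neg]
    rintro ⟨h1, h2⟩
    have h3 : ((1 : ℝ) / 2) ^ (m + 1) = (1 / 2) ^ m / 2 := by ring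
    rw [← h3] at h1
    rcases lt_or_gt_of_ne hm with hlt | hlt
    · have := pow_le_pow_of_le_one (by norm_num : (0 : ℝ) ≤ 1 / 2) (by norm_num)
        (by omega : m + 1 ≤ n)
      linarith
    · have := pow_le_pow_of_le_one (by norm_num : (0 : ℝ) ≤ 1 / 2) (by norm_num)
        (by omega : n + 1 ≤ m)
      linarith
  have e : band ((1 / 2) ^ n) z = z := by
    unfold band
    rw [if_pos ⟨by rw [pow_succ] at hn1; linarith, hn2⟩]
  rwa [e] at h

theorem hasSum_bandPart (x : Idx k → ℝ) :
    HasSum (fun n : ℕ => bandPart k ((1 / 2) ^ n) (Icc 0 1) x) (Eone k x) := by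
  have hint : ∀ n : ℕ, IntegrableOn (fun s => band ((1 / 2) ^ n) (slice k x s)) (Icc 0 1) := by
    intro n
    rw [integrableOn_Icc_iff_integrableOn_Ioc]
    exact (intervalIntegrable_band_slice (by positivity) x 0 1).1
  have h := hasSum_integral_of_summable_integral_norm hint
    (Summable.of_nonneg_of_le (fun n => integral_nonneg fun s => norm_nonneg _) (fun n => ?_)
      (summable_geometric_of_lt_one (by norm_num : (0 : ℝ) ≤ 1 / 2) (by norm_num)))
  · have e : ∀ s, ∑' n : ℕ, band ((1 / 2) ^ n) (slice k x s) = slice k x s := fun s =>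
      (hasSum_band (norm_slice_le x s)).tsum_eq
    simp_rw [e] at h
    rw [Eone_eq]
    exact h
  · calc ∫ s in Icc 0 1, ‖band ((1 / 2) ^ n) (slice k x s)‖
        ≤ ∫ _s in Icc (0 : ℝ) 1, ((1 : ℝ) / 2) ^ n :=
          integral_mono (hint n).norm (integrable_const _) fun s =>
            norm_band_le (by positivity) _
      _ = _ := by simp

theorem tsum_rpow_le_weighted {p : ℝ} (hp : 0 < p) (e w : ℕ → ℝ≥0∞) (hw0 : ∀ n, w n ≠ 0)
    (hw : ∀ n, w n ≠ ⊤) :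
    (∑' n, e n) ^ p ≤ (∑' n, w n) ^ p * ∑' n, ((w n)⁻¹ * e n) ^ p := by
  obtain ⟨T, hT⟩ : ∃ T, T = ∑' n, ((w n)⁻¹ * e n) ^ p := ⟨_, rfl⟩
  have h : ∀ n, e n ≤ w n * T ^ p⁻¹ := by
    intro n
    have h1 : (w n)⁻¹ * e n ≤ T ^ p⁻¹ := by
      rw [ENNReal.le_rpow_inv_iff hp, hT]
      exact ENNReal.le_tsum n
    calc e n = w n * ((w n)⁻¹ * e n) := by
          rw [← mul_assoc, ENNReal.mul_inv_cancel (hw0 n) (hw n), one_mul]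
      _ ≤ _ := mul_le_mul_right h1 _
  rw [← hT]
  calc (∑' n, e n) ^ p ≤ ((∑' n, w n) * T ^ p⁻¹) ^ p := by
        refine ENNReal.rpow_le_rpow ?_ hp.le
        rw [← ENNReal.tsum_mul_right]
        exact ENNReal.tsum_le_tsum h
    _ = _ := by rw [ENNReal.mul_rpow_of_nonneg _ _ hp.le, ENNReal.rpow_inv_rpow hp.ne']

theorem lintegral_tsum_rpow_lt_top {X : Type*} [MeasurableSpace X] {μ : Measure X} {p η C : ℝ}
    (hp : 0 < p) (hη : 0 < η) {e : ℕ → X → ℝ≥0∞} (he : ∀ n, Measurable (e n))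
    (hle : ∀ n, ∫⁻ x, e n x ^ p ∂μ ≤ ENNReal.ofReal (C * ((1 / 2) ^ n) ^ η)) :
    ∫⁻ x, (∑' n, e n x) ^ p ∂μ < ⊤ := by
  have h2 : (0 : ℝ) < 1 / 2 := by norm_num
  obtain ⟨r, hr⟩ : ∃ r : ℝ, r = (1 / 2) ^ (η / (2 * p)) := ⟨_, rfl⟩
  have hr0 : 0 < r := by rw [hr]; positivity
  have hr1 : r < 1 := by rw [hr]; exact rpow_lt_one h2.le (by norm_num) (by positivity)
  obtain ⟨t, ht⟩ : ∃ t : ℝ, t = (1 / 2) ^ (η / 2) := ⟨_, rfl⟩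
  have ht0 : 0 ≤ t := by rw [ht]; positivity
  have ht1 : t < 1 := by rw [ht]; exact rpow_lt_one h2.le (by norm_num) (by positivity)
  have hrt : ∀ n : ℕ, ((r ^ n)⁻¹) ^ p * ((1 / 2) ^ n) ^ η = t ^ n := by
    intro n
    rw [inv_rpow (by positivity), ← rpow_natCast, ← rpow_natCast, ← rpow_natCast, hr, ht,
      ← rpow_mul h2.le, ← rpow_mul h2.le, ← rpow_mul h2.le, ← rpow_mul h2.le, ← rpow_neg h2.le,
      ← rpow_add h2]
    congr 1
    field_simp
    ring
  obtain ⟨w, hw⟩ : ∃ w : ℕ → ℝ≥0∞, w = fun n => ENNReal.ofReal (r ^ n) := ⟨_, rfl⟩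
  have hw0 : ∀ n, w n ≠ 0 := fun n => by
    rw [hw]; exact (ENNReal.ofReal_pos.2 (pow_pos hr0 n)).ne'
  have hwt : ∀ n, w n ≠ ⊤ := fun n => by rw [hw]; exact ENNReal.ofReal_ne_top
  have hW : ∑' n, w n ≠ ⊤ := by
    rw [hw]; exact (summable_geometric_of_lt_one hr0.le hr1).tsum_ofReal_ne_top
  have hS : ∑' n, ∫⁻ x, ((w n)⁻¹ * e n x) ^ p ∂μ ≤ ∑' n, ENNReal.ofReal (C * t ^ n) := by
    refine ENNReal.tsum_le_tsum fun n => ?_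
    simp_rw [ENNReal.mul_rpow_of_nonneg _ _ hp.le]
    rw [lintegral_const_mul _ ((he n).pow_const p)]
    refine (mul_le_mul_right (hle n) _).trans (le_of_eq ?_)
    rw [hw, ← ENNReal.ofReal_inv_of_pos (pow_pos hr0 n),
      ENNReal.ofReal_rpow_of_nonneg (by positivity) hp.le, ← ENNReal.ofReal_mul (by positivity),
      ← hrt]
    congr 1
    ring
  calc ∫⁻ x, (∑' n, e n x) ^ p ∂μ
      ≤ ∫⁻ x, (∑' n, w n) ^ p * ∑' n, ((w n)⁻¹ * e n x) ^ p ∂μ :=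
        lintegral_mono fun x => tsum_rpow_le_weighted hp _ w hw0 hwt
    _ = (∑' n, w n) ^ p * ∑' n, ∫⁻ x, ((w n)⁻¹ * e n x) ^ p ∂μ := by
        rw [lintegral_const_mul' _ _ (ENNReal.rpow_ne_top_of_nonneg hp.le hW),
          lintegral_tsum fun n => (((he n).const_mul _).pow_const p).aemeasurable]
    _ < ⊤ := ENNReal.mul_lt_top (ENNReal.rpow_lt_top_of_nonneg hp.le hW)
        (hS.trans_lt ((summable_geometric_of_lt_one ht0 ht1).mul_left C).tsum_ofReal_lt_top)

end Summation

/-- Upper bound part of Theorem 1.2: for every `k ≥ 2` and every real `p > q_k`,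
where `q_k = k(k+1)(k+2)/6 + 2`, the integral `∫_{ℝ^N} |E_k1(x)|^p dx` is finite. -/
theorem tarry_upper_bound (k : ℕ) (hk : 2 ≤ k) :
    ∀ p : ℝ, (k : ℝ) * (k + 1) * (k + 2) / 6 + 2 < p →
      (∫⁻ x : Idx k → ℝ, ENNReal.ofReal (‖Eone k x‖ ^ p)) < ⊤ := by
  intro p hp
  have hk' : (2 : ℝ) ≤ k := by exact_mod_cast hk
  have hp0 : 0 < p := lt_trans (by positivity) hp
  obtain ⟨ε, hε⟩ : ∃ ε : ℝ, ε = p - ((k : ℝ) * (k + 1) * (k + 2) / 6 + 2) := ⟨_, rfl⟩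
  have hε0 : 0 < ε := by linarith
  have hδ : 0 < min 1 (ε / (2 * k)) := lt_min one_pos (by positivity)
  have hη : 0 < ε - (k - 1) * min 1 (ε / (2 * k)) := by
    have h1 : ((k : ℝ) - 1) * min 1 (ε / (2 * k)) ≤ k * (ε / (2 * k)) :=
      mul_le_mul (by linarith) (min_le_right _ _) hδ.le (by linarith)
    have h2 : (k : ℝ) * (ε / (2 * k)) = ε / 2 := by field_simp
    linarith
  obtain ⟨C, -, h⟩ := exists_lintegral_bandPart_le hk hp hδ (min_le_left _ _)
  rw [← hε] at h
  refine lt_of_le_of_lt (lintegral_mono fun x => ?_) (lintegral_tsum_rpow_lt_top hp0 hη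
    (fun n => (measurable_bandPart (k := k) ((1 / 2) ^ n) (Icc 0 1)).enorm) fun n =>
      h _ (by positivity) (pow_le_one₀ (by norm_num) (by norm_num)))
  rw [← ENNReal.ofReal_rpow_of_nonneg (norm_nonneg _) hp0.le, ofReal_norm,
    ← (hasSum_bandPart x).tsum_eq]
  exact ENNReal.rpow_le_rpow enorm_tsum_le_tsum_enorm hp0.le
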